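/- arXiv:0904.0650 — 4 statements merged into one kernel-verified Lean document; each statement's English description precedes it below -/
import Mathlib

section
/- Let Q be a monic cubic complex polynomial and P a complex polynomial of degree at most 2. Suppose that for each n (in some infinite set of positive integers) S_n is a polynomial of degree exactly n and V_n a polynomial of degree at most 1 with Q·S_n'' + P·S_n' + V_n·S_n = 0 identically, that all roots of all S_n lie in a fixed compact subset of ℂ, that the root-counting measures of S_n, S_n' and S_n'' converge weakly to measures ν⁰, ν¹, ν² respectively, and that the polynomials −V_n/(n(n−1)) converge coefficientwise to a monic polynomial Ṽ of degree 1. Then ν⁰ = ν¹ = ν², and the Cauchy transform C of ν⁰ satisfies C(z)² = Ṽ(z)/Q(z) for Lebesgue-almost every z ∈ ℂ. -/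
open MeasureTheory Polynomial Filter

/-- The root-counting measure of a polynomial: the uniform probability measure on the
roots (counted with multiplicity). -/
noncomputable def rootMeasure (p : Polynomial ℂ) : Measure ℂ :=
  ((p.natDegree : ENNReal))⁻¹ • (p.roots.map (fun z => (Measure.dirac z))).sum

/-- Integrals against a finite sum of Dirac masses. -/
theorem integral_multiset_sum_dirac {E : Type*} [NormedAddCommGroup E] [NormedSpace ℝ E]
    [CompleteSpace E] (s : Multiset ℂ) (f : ℂ → E) :
    Integrable f (s.map (fun z => Measure.dirac z)).sum ∧
      ∫ ξ, f ξ ∂(s.map (fun z => Measure.dirac z)).sum = (s.map f).sum := by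
  induction s using Multiset.induction_on with
  | empty => simp
  | cons a s ih =>
    have ha : Integrable f (Measure.dirac a) := integrable_dirac (by simp)
    simp only [Multiset.map_cons, Multiset.sum_cons]
    exact ⟨ha.add_measure ih.1, by rw [integral_add_measure ha ih.1, ih.2, integral_dirac]⟩

theorem multiset_sum_dirac_univ (s : Multiset ℂ) :
    (s.map (fun z => Measure.dirac z)).sum Set.univ = Multiset.card s := by
  induction s using Multiset.induction_on with
  | empty => simp
  | cons a s ih => simp [ih, add_comm]

theorem multiset_sum_dirac_ae {s : Multiset ℂ} {p : ℂ → Prop} (h : ∀ z ∈ s, p z) :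
    ∀ᵐ z ∂(s.map (fun z => Measure.dirac z)).sum, p z := by
  induction s using Multiset.induction_on with
  | empty => simp
  | cons a s ih =>
    simp only [Multiset.map_cons, Multiset.sum_cons, ae_add_measure_iff]
    refine ⟨?_, ih fun z hz => h z (Multiset.mem_cons_of_mem hz)⟩
    rw [ae_dirac_eq]
    exact h a (Multiset.mem_cons_self a s)

theorem integral_rootMeasure (p : ℂ[X]) (f : ℂ → ℂ) :
    ∫ ξ, f ξ ∂rootMeasure p = (p.natDegree : ℂ)⁻¹ * (p.roots.map f).sum := by
  rw [rootMeasure, integral_smul_measure, (integral_multiset_sum_dirac _ _).2]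
  simp [Complex.real_smul]

theorem rootMeasure_univ_eq_one {p : ℂ[X]} (hp : p.natDegree ≠ 0) :
    rootMeasure p Set.univ = 1 := by
  rw [rootMeasure, Measure.smul_apply, multiset_sum_dirac_univ,
    IsAlgClosed.card_roots_eq_natDegree, smul_eq_mul]
  exact ENNReal.inv_mul_cancel (by exact_mod_cast hp) (by simp)

theorem rootMeasure_eq_zero {p : ℂ[X]} (hp : p.natDegree = 0) : rootMeasure p = 0 := by
  rw [rootMeasure, Polynomial.eq_C_of_natDegree_eq_zero hp, roots_C]
  simp

theorem rootMeasure_univ_le_one (p : ℂ[X]) : rootMeasure p Set.univ ≤ 1 := by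
  by_cases hp : p.natDegree = 0
  · simp [rootMeasure_eq_zero hp]
  · exact (rootMeasure_univ_eq_one hp).le

theorem rootMeasure_ae {p : ℂ[X]} {q : ℂ → Prop} (h : ∀ z ∈ p.roots, q z) :
    ∀ᵐ z ∂rootMeasure p, q z :=
  (Measure.smul_absolutelyContinuous (μ := (p.roots.map (fun z => Measure.dirac z)).sum)).ae_le
    (multiset_sum_dirac_ae h)

/-- The Cauchy transform of the root-counting measure is the normalized logarithmic derivative. -/
theorem integral_inv_sub_rootMeasure {p : ℂ[X]} {z : ℂ} (hz : p.eval z ≠ 0) :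
    ∫ ξ, (z - ξ)⁻¹ ∂rootMeasure p =
      (p.natDegree : ℂ)⁻¹ * (p.derivative.eval z / p.eval z) := by
  rw [integral_rootMeasure,
    (IsAlgClosed.splits p).eval_derivative_div_eval_of_ne_zero hz]
  simp

theorem sum_log_norm_sub_roots {p : ℂ[X]} {z : ℂ} (hz : p.eval z ≠ 0) :
    (p.roots.map fun ξ => Real.log ‖z - ξ‖).sum =
      Real.log ‖p.eval z‖ - Real.log ‖p.leadingCoeff‖ := by
  have key : ∀ s : Multiset ℂ, (s.map (z - ·)).prod ≠ 0 →
      (s.map fun ξ => Real.log ‖z - ξ‖).sum = Real.log ‖(s.map (z - ·)).prod‖ := by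
    intro s
    induction s using Multiset.induction_on with
    | empty => simp
    | cons a s ih =>
      intro h
      simp only [Multiset.map_cons, Multiset.prod_cons, Multiset.sum_cons] at h ⊢
      rw [norm_mul, Real.log_mul (norm_ne_zero_iff.2 (left_ne_zero_of_mul h))
        (norm_ne_zero_iff.2 (right_ne_zero_of_mul h)), ih (right_ne_zero_of_mul h)]
  have hev : p.eval z = p.leadingCoeff * (p.roots.map (z - ·)).prod := by
    conv_lhs => rw [(IsAlgClosed.splits p).eq_prod_roots]
    simp [eval_multiset_prod, Multiset.map_map]
  rw [hev] at hz
  rw [key _ (right_ne_zero_of_mul hz), hev, norm_mul,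
    Real.log_mul (norm_ne_zero_iff.2 (left_ne_zero_of_mul hz))
      (norm_ne_zero_iff.2 (right_ne_zero_of_mul hz))]
  ring

theorem roots_derivative_mem_closedBall {p : ℂ[X]} {M : ℝ}
    (h : ∀ z ∈ p.roots, z ∈ Metric.closedBall (0 : ℂ) M) :
    ∀ z ∈ p.derivative.roots, z ∈ Metric.closedBall (0 : ℂ) M := by
  intro z hz
  by_cases hp : 0 < p.degree
  · refine convexHull_min ?_ (convex_closedBall (0 : ℂ) M)
      (rootSet_derivative_subset_convexHull_rootSet hp ?_)
    · intro w hw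
      rw [mem_rootSet, aeval_def, Algebra.algebraMap_self, eval₂_id] at hw
      exact h w ((mem_roots hw.1).2 hw.2)
    · rw [mem_roots'] at hz
      rw [mem_rootSet, aeval_def, Algebra.algebraMap_self, eval₂_id]
      exact hz
  · rw [eq_C_of_degree_le_zero (not_lt.1 hp)] at hz
    simp at hz

theorem exists_lintegral_inv_norm_ball_le {δ : ENNReal} (hδ : δ ≠ 0) :
    ∃ ε : ℝ, 0 < ε ∧ ε ≤ 1 ∧
      ∫⁻ w in Metric.ball (0 : ℂ) ε, ENNReal.ofReal ‖w‖⁻¹ ≤ δ := by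
  have hint : IntegrableOn (fun w : ℂ => ‖w‖⁻¹) (Metric.ball 0 1) := by
    refine integrableOn_ball_of_norm_le_rpow (C := 1) (α := 1) (by simp) (by simp) ?_
      (by fun_prop)
    refine ae_of_all _ fun w => ?_
    simp [Real.rpow_neg_one]
  have hfin : ∫⁻ w, ENNReal.ofReal ‖w‖⁻¹ ∂(volume.restrict (Metric.ball (0 : ℂ) 1)) ≠ ⊤ :=
    (hint.lintegral_lt_top).ne
  obtain ⟨η, hη, h⟩ := exists_pos_setLIntegral_lt_of_measure_lt hfin hδ
  have hvol : Tendsto (fun ε : ℝ => volume (Metric.ball (0 : ℂ) ε)) (nhdsWithin 0 (Set.Ioi 0))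
      (nhds 0) := by
    have : Tendsto (fun ε : ℝ => ENNReal.ofReal ε ^ 2 * (NNReal.pi : ENNReal)) (nhds 0)
        (nhds (ENNReal.ofReal 0 ^ 2 * (NNReal.pi : ENNReal))) :=
      ENNReal.Tendsto.mul_const
        (((ENNReal.continuous_pow 2).comp ENNReal.continuous_ofReal).tendsto 0) (by simp)
    simp only [Complex.volume_ball]
    simpa using this.mono_left nhdsWithin_le_nhds
  have h1 : ∀ᶠ ε : ℝ in nhdsWithin 0 (Set.Ioi 0), ε ≤ 1 :=
    nhdsWithin_le_nhds (eventually_le_nhds one_pos)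
  obtain ⟨ε, hε, hε1, hε0⟩ :=
    ((hvol.eventually_lt_const hη).and (h1.and self_mem_nhdsWithin)).exists
  refine ⟨ε, hε0, hε1, ?_⟩
  have := h (Metric.ball 0 ε) (lt_of_le_of_lt (Measure.restrict_apply_le _ _) hε)
  rw [Measure.restrict_restrict measurableSet_ball,
    Set.inter_eq_left.2 (Metric.ball_subset_ball hε1)] at this
  exact this.le

/-- A measurable kernel on `ℂ` which is an `L¹`-limit of bounded continuous functions. -/
structure IsApproxKernel (g : ℂ → ℂ) : Prop where
  measurable : Measurable g
  exists_approx : ∀ δ : ENNReal, δ ≠ 0 →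
    ∃ h : BoundedContinuousFunction ℂ ℂ, ∫⁻ w, ‖g w - h w‖ₑ ≤ δ

theorem IsApproxKernel.of_norm_sub_le {g : ℂ → ℂ} (hg : Measurable g)
    (h : ∀ ε : ℝ, 0 < ε → ε ≤ 1 → ∃ h : BoundedContinuousFunction ℂ ℂ,
      (∀ w, w ≠ 0 → ‖w‖ < ε → ‖g w - h w‖ ≤ ‖w‖⁻¹) ∧ ∀ w, ε ≤ ‖w‖ → g w = h w) :
    IsApproxKernel g := by
  refine ⟨hg, fun δ hδ => ?_⟩
  obtain ⟨ε, hε, hε1, hle⟩ := exists_lintegral_inv_norm_ball_le hδ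
  obtain ⟨f, hf1, hf2⟩ := h ε hε hε1
  refine ⟨f, le_trans ?_ hle⟩
  rw [← lintegral_indicator measurableSet_ball]
  have h0 : ∀ᵐ w : ℂ, w ≠ 0 := by simp [ae_iff]
  refine lintegral_mono_ae (h0.mono fun w hw => ?_)
  by_cases hwε : ‖w‖ < ε
  · rw [Set.indicator_of_mem (by simpa using hwε), ← ofReal_norm]
    exact ENNReal.ofReal_le_ofReal (hf1 w hw hwε)
  · simp [hf2 w (not_lt.1 hwε)]

theorem IsApproxKernel.inv : IsApproxKernel (fun w => w⁻¹) := by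
  refine .of_norm_sub_le (by fun_prop) fun ε hε _ => ?_
  have hpos : ∀ w : ℂ, 0 < max ‖w‖ ε := fun w => lt_max_of_lt_right hε
  have hcont : Continuous fun w : ℂ =>
      (starRingEnd ℂ) w * (((max ‖w‖ ε) ^ 2)⁻¹ : ℝ) := by
    refine Complex.continuous_conj.mul (Complex.continuous_ofReal.comp ?_)
    exact Continuous.inv₀ (by fun_prop) fun w => (pow_pos (hpos w) 2).ne'
  have hnorm : ∀ w : ℂ, ‖(starRingEnd ℂ) w * (((max ‖w‖ ε) ^ 2)⁻¹ : ℝ)‖ =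
      ‖w‖ / (max ‖w‖ ε) ^ 2 := by
    intro w
    rw [norm_mul, Complex.norm_real, RCLike.norm_conj, Real.norm_of_nonneg (by positivity),
      div_eq_mul_inv]
  have hself : ∀ w : ℂ, w ≠ 0 → w⁻¹ = (starRingEnd ℂ) w * ((‖w‖ ^ 2)⁻¹ : ℝ) := by
    intro w _
    rw [Complex.inv_def, Complex.normSq_eq_norm_sq]
  refine ⟨BoundedContinuousFunction.ofNormedAddCommGroup _ hcont ε⁻¹ fun w => ?_, ?_, ?_⟩
  · rw [hnorm, div_le_iff₀ (pow_pos (hpos w) 2), inv_mul_eq_div, le_div_iff₀ hε, sq]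
    exact mul_le_mul (le_max_left _ _) (le_max_right _ _) hε.le (hpos w).le
  · intro w hw hwε
    have hw' : 0 < ‖w‖ := norm_pos_iff.2 hw
    simp only [BoundedContinuousFunction.coe_ofNormedAddCommGroup]
    rw [hself w hw, ← mul_sub, ← Complex.ofReal_sub, norm_mul, Complex.norm_real,
      RCLike.norm_conj, max_eq_right hwε.le, Real.norm_of_nonneg]
    · calc ‖w‖ * ((‖w‖ ^ 2)⁻¹ - (ε ^ 2)⁻¹) ≤ ‖w‖ * (‖w‖ ^ 2)⁻¹ := by
            gcongr
            have : 0 ≤ (ε ^ 2)⁻¹ := by positivity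
            linarith
        _ = ‖w‖⁻¹ := by field_simp
    · rw [sub_nonneg]
      gcongr
  · intro w hwε
    have hw : w ≠ 0 := norm_pos_iff.1 (hε.trans_le hwε)
    simp only [BoundedContinuousFunction.coe_ofNormedAddCommGroup]
    rw [hself w hw, max_eq_left hwε]

theorem IsApproxKernel.log_min {T : ℝ} (hT : 1 ≤ T) :
    IsApproxKernel (fun w => (Real.log (min ‖w‖ T) : ℂ)) := by
  refine .of_norm_sub_le (by fun_prop) fun ε hε hε1 => ?_
  have hpos : ∀ w : ℂ, 0 < max ε (min ‖w‖ T) := fun w => lt_max_of_lt_left hε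
  have hcont : Continuous fun w : ℂ => (Real.log (max ε (min ‖w‖ T)) : ℂ) :=
    Complex.continuous_ofReal.comp
      (Continuous.log (by fun_prop) fun w => (hpos w).ne')
  refine ⟨BoundedContinuousFunction.ofNormedAddCommGroup _ hcont
    (max |Real.log ε| |Real.log T|) fun w => ?_, ?_, ?_⟩
  · rw [Complex.norm_real, Real.norm_eq_abs]
    refine abs_le_max_abs_abs (Real.log_le_log hε (le_max_left _ _)) (Real.log_le_log (hpos w) ?_)
    exact max_le (hε1.trans hT) (min_le_right _ _)
  · intro w hw hwε
    have hw' : 0 < ‖w‖ := norm_pos_iff.2 hw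
    simp only [BoundedContinuousFunction.coe_ofNormedAddCommGroup]
    rw [min_eq_left (hwε.le.trans (hε1.trans hT)), max_eq_left hwε.le, ← Complex.ofReal_sub,
      Complex.norm_real, Real.norm_eq_abs, abs_sub_comm, ← Real.log_div hε.ne' hw'.ne',
      abs_of_nonneg (Real.log_nonneg ((one_le_div hw').2 hwε.le))]
    refine (Real.log_le_self (by positivity)).trans ?_
    rw [div_eq_mul_inv]
    exact mul_le_of_le_one_left (by positivity) hε1
  · intro w hwε
    simp only [BoundedContinuousFunction.coe_ofNormedAddCommGroup]
    rw [max_eq_right (le_min hwε (hε1.trans hT))]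

theorem stronglyMeasurable_integral_sub {g : ℂ → ℂ} (hg : Measurable g) (μ : Measure ℂ)
    [SFinite μ] : StronglyMeasurable fun z => ∫ ξ, g (z - ξ) ∂μ := by
  have : StronglyMeasurable (fun p : ℂ × ℂ => g (p.1 - p.2)) :=
    (hg.comp (measurable_fst.sub measurable_snd)).stronglyMeasurable
  exact this.integral_prod_right

theorem lintegral_enorm_integral_sub_le {g : ℂ → ℂ} (hg : Measurable g)
    (h : BoundedContinuousFunction ℂ ℂ) (hfin : ∫⁻ w, ‖g w - h w‖ₑ ≠ ⊤)
    (μ : Measure ℂ) (hμ : μ Set.univ ≤ 1) :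
    ∫⁻ z, ‖(∫ ξ, g (z - ξ) ∂μ) - ∫ ξ, h (z - ξ) ∂μ‖ₑ ≤ ∫⁻ w, ‖g w - h w‖ₑ := by
  have : IsFiniteMeasure μ := ⟨hμ.trans_lt ENNReal.one_lt_top⟩
  have hmeas : Measurable fun w => ‖g w - h w‖ₑ :=
    (hg.sub h.continuous.measurable).enorm
  have hmeas2 : Measurable (fun p : ℂ × ℂ => ‖g (p.1 - p.2) - h (p.1 - p.2)‖ₑ) :=
    hmeas.comp (measurable_fst.sub measurable_snd)
  have htot : ∫⁻ z, ∫⁻ ξ, ‖g (z - ξ) - h (z - ξ)‖ₑ ∂μ ≤ ∫⁻ w, ‖g w - h w‖ₑ := by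
    rw [lintegral_lintegral_swap hmeas2.aemeasurable]
    calc ∫⁻ ξ, (∫⁻ z, ‖g (z - ξ) - h (z - ξ)‖ₑ) ∂μ
        = ∫⁻ _ : ℂ, (∫⁻ w, ‖g w - h w‖ₑ) ∂μ := by
          refine lintegral_congr fun ξ => ?_
          exact lintegral_sub_right_eq_self (fun w => ‖g w - h w‖ₑ) ξ
      _ = (∫⁻ w, ‖g w - h w‖ₑ) * μ Set.univ := lintegral_const _
      _ ≤ _ := mul_le_of_le_one_right' hμ
  refine le_trans (lintegral_mono_ae ?_) htot
  have hlt := ae_lt_top (Measurable.lintegral_prod_right' hmeas2)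
    (ne_top_of_le_ne_top hfin htot)
  refine hlt.mono fun z hz => ?_
  have hh : Integrable (fun ξ => h (z - ξ)) μ :=
    Integrable.of_bound (by fun_prop) ‖h‖ (ae_of_all _ fun ξ => h.norm_coe_le_norm _)
  have hd : Integrable (fun ξ => g (z - ξ) - h (z - ξ)) μ := by
    refine ⟨?_, hz⟩
    exact ((hg.comp (measurable_const.sub measurable_id)).sub
      (h.continuous.measurable.comp (measurable_const.sub measurable_id))).aestronglyMeasurable
  have hg' : Integrable (fun ξ => g (z - ξ)) μ :=
    (hd.add hh).congr (ae_of_all _ fun ξ => by simp)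
  rw [← integral_sub hg' hh]
  exact enorm_integral_le_lintegral_enorm _

/-- Weak convergence against complex-valued bounded continuous functions. -/
theorem tendsto_integral_complex {μ : ℕ → Measure ℂ} {ν : Measure ℂ}
    [∀ k, IsFiniteMeasure (μ k)] [IsFiniteMeasure ν]
    (hw : ∀ f : BoundedContinuousFunction ℂ ℝ,
      Tendsto (fun k => ∫ z, f z ∂(μ k)) atTop (nhds (∫ z, f z ∂ν)))
    {h : ℂ → ℂ} (hc : Continuous h) {B : ℝ} (hB : ∀ z, ‖h z‖ ≤ B) :
    Tendsto (fun k => ∫ z, h z ∂(μ k)) atTop (nhds (∫ z, h z ∂ν)) := by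
  have hre := hw (BoundedContinuousFunction.ofNormedAddCommGroup (fun z => (h z).re)
    (Complex.continuous_re.comp hc) B fun z => (Complex.abs_re_le_norm _).trans (hB z))
  have him := hw (BoundedContinuousFunction.ofNormedAddCommGroup (fun z => (h z).im)
    (Complex.continuous_im.comp hc) B fun z => (Complex.abs_im_le_norm _).trans (hB z))
  simp only [BoundedContinuousFunction.coe_ofNormedAddCommGroup] at hre him
  have key : ∀ m : Measure ℂ, IsFiniteMeasure m →
      ∫ z, h z ∂m = ((∫ z, (h z).re ∂m : ℝ) : ℂ) + ((∫ z, (h z).im ∂m : ℝ) : ℂ) * Complex.I := by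
    intro m _
    exact (integral_re_add_im (𝕜 := ℂ)
      (Integrable.of_bound hc.aestronglyMeasurable B (ae_of_all _ hB))).symm
  simp only [fun k => key (μ k) inferInstance, key ν inferInstance]
  exact ((Complex.continuous_ofReal.tendsto _).comp hre).add
    (((Complex.continuous_ofReal.tendsto _).comp him).mul_const _)

theorem IsApproxKernel.tendsto_lintegral {g : ℂ → ℂ} (hg : IsApproxKernel g)
    {μ : ℕ → Measure ℂ} {ν : Measure ℂ} (hμ : ∀ k, μ k Set.univ ≤ 1) (hν : ν Set.univ ≤ 1)
    (hw : ∀ f : BoundedContinuousFunction ℂ ℝ,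
      Tendsto (fun k => ∫ z, f z ∂(μ k)) atTop (nhds (∫ z, f z ∂ν)))
    (m : Measure ℂ) [IsFiniteMeasure m] (hm : m ≤ volume) :
    Tendsto (fun k => ∫⁻ z, ‖(∫ ξ, g (z - ξ) ∂(μ k)) - ∫ ξ, g (z - ξ) ∂ν‖ₑ ∂m) atTop
      (nhds 0) := by
  have : ∀ k, IsFiniteMeasure (μ k) := fun k => ⟨(hμ k).trans_lt ENNReal.one_lt_top⟩
  have : IsFiniteMeasure ν := ⟨hν.trans_lt ENNReal.one_lt_top⟩
  rw [ENNReal.tendsto_nhds_zero]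
  intro δ hδ
  by_cases hδt : δ = ⊤
  · simp [hδt]
  have hδ3 : δ / 3 ≠ 0 := (ENNReal.div_pos hδ.ne' (by simp)).ne'
  have hδ3t : δ / 3 ≠ ⊤ := (ENNReal.div_lt_top hδt (by simp)).ne
  obtain ⟨h, hh⟩ := hg.exists_approx _ hδ3
  have est : ∀ ρ : Measure ℂ, ρ Set.univ ≤ 1 →
      ∫⁻ z, ‖(∫ ξ, g (z - ξ) ∂ρ) - ∫ ξ, h (z - ξ) ∂ρ‖ₑ ∂m ≤ δ / 3 := fun ρ hρ =>
    (lintegral_mono' hm le_rfl).trans <| (lintegral_enorm_integral_sub_le hg.measurable h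
      (ne_top_of_le_ne_top hδ3t hh) ρ hρ).trans hh
  have hsm : ∀ ρ : Measure ℂ, SFinite ρ → Measurable fun z => ∫ ξ, h (z - ξ) ∂ρ := fun ρ _ =>
    (stronglyMeasurable_integral_sub h.continuous.measurable ρ).measurable
  have hsg : ∀ ρ : Measure ℂ, SFinite ρ → Measurable fun z => ∫ ξ, g (z - ξ) ∂ρ := fun ρ _ =>
    (stronglyMeasurable_integral_sub hg.measurable ρ).measurable
  have hbd : ∀ ρ : Measure ℂ, ρ Set.univ ≤ 1 → ∀ z, ‖∫ ξ, h (z - ξ) ∂ρ‖ ≤ ‖h‖ := by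
    intro ρ hρ z
    have : IsFiniteMeasure ρ := ⟨hρ.trans_lt ENNReal.one_lt_top⟩
    refine (norm_integral_le_of_norm_le_const
      (ae_of_all _ fun ξ => h.norm_coe_le_norm _)).trans ?_
    refine mul_le_of_le_one_right (norm_nonneg h) ?_
    exact ENNReal.toReal_mono ENNReal.one_ne_top hρ
  have hlim : Tendsto (fun k => ∫⁻ z, ‖(∫ ξ, h (z - ξ) ∂(μ k)) - ∫ ξ, h (z - ξ) ∂ν‖ₑ ∂m) atTop
      (nhds (∫⁻ _, 0 ∂m)) := by
    refine tendsto_lintegral_of_dominated_convergence (fun _ => ENNReal.ofReal (‖h‖ + ‖h‖))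
      (fun k => ((hsm _ inferInstance).sub (hsm _ inferInstance)).enorm) (fun k => ?_)
      (by simp [lintegral_const, ENNReal.mul_eq_top]) (ae_of_all _ fun z => ?_)
    · refine ae_of_all _ fun z => ?_
      beta_reduce
      rw [← ofReal_norm]
      exact ENNReal.ofReal_le_ofReal
        ((norm_sub_le _ _).trans (add_le_add (hbd _ (hμ k) z) (hbd _ hν z)))
    · have := tendsto_integral_complex hw (h := fun ξ => h (z - ξ)) (by fun_prop) (B := ‖h‖)
        fun ξ => h.norm_coe_le_norm _
      simpa using (this.sub_const (∫ ξ, h (z - ξ) ∂ν)).enorm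
  rw [lintegral_zero] at hlim
  filter_upwards [hlim.eventually_le_const (pos_iff_ne_zero.2 hδ3)] with k hk
  calc ∫⁻ z, ‖(∫ ξ, g (z - ξ) ∂(μ k)) - ∫ ξ, g (z - ξ) ∂ν‖ₑ ∂m
      ≤ ∫⁻ z, (‖(∫ ξ, g (z - ξ) ∂(μ k)) - ∫ ξ, h (z - ξ) ∂(μ k)‖ₑ +
          ‖(∫ ξ, h (z - ξ) ∂(μ k)) - ∫ ξ, h (z - ξ) ∂ν‖ₑ) +
          ‖(∫ ξ, g (z - ξ) ∂ν) - ∫ ξ, h (z - ξ) ∂ν‖ₑ ∂m := by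
        refine lintegral_mono fun z => ?_
        rw [← enorm_neg ((∫ ξ, g (z - ξ) ∂ν) - ∫ ξ, h (z - ξ) ∂ν)]
        refine le_trans (le_of_eq ?_) ((enorm_add_le _ _).trans
          (add_le_add_left (enorm_add_le _ _) _))
        congr 1
        ring
    _ ≤ δ / 3 + δ / 3 + δ / 3 := by
        rw [lintegral_add_left, lintegral_add_left]
        · exact add_le_add (add_le_add (est _ (hμ k)) hk) (est _ hν)
        · exact ((hsg _ inferInstance).sub (hsm _ inferInstance)).enorm
        · exact ((hsg _ inferInstance).sub (hsm _ inferInstance)).enorm.add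
            ((hsm _ inferInstance).sub (hsm _ inferInstance)).enorm
    _ = δ := ENNReal.add_thirds δ

/-- Weakly convergent measures have, along a further subsequence, almost everywhere convergent
potentials. -/
theorem IsApproxKernel.exists_subseq_tendsto_ae {g : ℂ → ℂ} (hg : IsApproxKernel g)
    {μ : ℕ → Measure ℂ} {ν : Measure ℂ} (hμ : ∀ k, μ k Set.univ ≤ 1) (hν : ν Set.univ ≤ 1)
    (hw : ∀ f : BoundedContinuousFunction ℂ ℝ,
      Tendsto (fun k => ∫ z, f z ∂(μ k)) atTop (nhds (∫ z, f z ∂ν)))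
    (m : Measure ℂ) [IsFiniteMeasure m] (hm : m ≤ volume) {φ : ℕ → ℕ} (hφ : StrictMono φ) :
    ∃ ψ : ℕ → ℕ, StrictMono ψ ∧ ∀ᵐ z ∂m,
      Tendsto (fun j => ∫ ξ, g (z - ξ) ∂(μ (φ (ψ j)))) atTop (nhds (∫ ξ, g (z - ξ) ∂ν)) := by
  have : ∀ k, IsFiniteMeasure (μ k) := fun k => ⟨(hμ k).trans_lt ENNReal.one_lt_top⟩
  have : IsFiniteMeasure ν := ⟨hν.trans_lt ENNReal.one_lt_top⟩
  have hlim := (hg.tendsto_lintegral hμ hν hw m hm).comp hφ.tendsto_atTop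
  have hmeas : TendstoInMeasure m (fun k z => ∫ ξ, g (z - ξ) ∂(μ (φ k))) atTop
      (fun z => ∫ ξ, g (z - ξ) ∂ν) := by
    refine tendstoInMeasure_of_tendsto_eLpNorm (p := 1) one_ne_zero
      (fun k => (stronglyMeasurable_integral_sub hg.measurable _).aestronglyMeasurable)
      (stronglyMeasurable_integral_sub hg.measurable _).aestronglyMeasurable ?_
    simp only [eLpNorm_one_eq_lintegral_enorm, Pi.sub_apply]
    exact hlim
  exact hmeas.exists_seq_tendsto_ae

theorem abs_log_le_of_le {x B : ℝ} (hx : 0 ≤ x) (hxB : x ≤ B) (hB : 1 ≤ B) :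
    |Real.log x| ≤ 2 * Real.log B - Real.log x := by
  have hL : 0 ≤ Real.log B := Real.log_nonneg hB
  rcases hx.eq_or_lt with rfl | hx
  · simpa using hL
  · have := Real.log_le_log hx hxB
    rcases abs_cases (Real.log x) with h | h <;> linarith

/-- Circle averages of the logarithmic potential of a boundedly supported measure. -/
theorem circleAverage_integral_log_norm_sub {ν : Measure ℂ} [IsProbabilityMeasure ν] {M : ℝ}
    (hM : ∀ᵐ ξ ∂ν, ‖ξ‖ ≤ M) (c : ℂ) {r : ℝ} (hr : 0 < r) :
    Real.circleAverage (fun z => ∫ ξ, Real.log ‖z - ξ‖ ∂ν) c r =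
      ∫ ξ, (Real.log r + Real.posLog (r⁻¹ * ‖c - ξ‖)) ∂ν := by
  have h2π : (0 : ℝ) ≤ 2 * Real.pi := by positivity
  have hmeas : Measurable (fun p : ℝ × ℂ => Real.log ‖circleMap c r p.1 - p.2‖) := by
    have : Measurable (circleMap c r) := (continuous_circleMap c r).measurable
    fun_prop
  have hcirc : ∀ ξ, IntegrableOn (fun θ => Real.log ‖circleMap c r θ - ξ‖)
      (Set.Ioc 0 (2 * Real.pi)) := fun ξ =>
    (intervalIntegrable_iff_integrableOn_Ioc_of_le h2π).1
      (circleIntegrable_log_norm_sub_const (a := ξ) (c := c) r)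
  have havg : ∀ ξ, ∫ θ in Set.Ioc 0 (2 * Real.pi), Real.log ‖circleMap c r θ - ξ‖ =
      2 * Real.pi * (Real.log r + Real.posLog (r⁻¹ * ‖c - ξ‖)) := by
    intro ξ
    rw [← circleAverage_log_norm_sub_const_eq_log_radius_add_posLog hr.ne', Real.circleAverage_def,
      intervalIntegral.integral_of_le h2π, smul_eq_mul, mul_inv_cancel_left₀ (by positivity)]
  set B : ℝ := ‖c‖ + r + |M| + 1 with hBdef
  have hB1 : 1 ≤ B := by
    have := norm_nonneg c
    have := abs_nonneg M
    linarith
  have hint : Integrable (Function.uncurry fun (θ : ℝ) (ξ : ℂ) =>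
      Real.log ‖circleMap c r θ - ξ‖) ((volume.restrict (Set.Ioc 0 (2 * Real.pi))).prod ν) := by
    refine (integrable_prod_iff' (f := fun p : ℝ × ℂ => Real.log ‖circleMap c r p.1 - p.2‖)
      hmeas.aestronglyMeasurable).2 ⟨ae_of_all _ hcirc, ?_⟩
    refine Integrable.of_bound (C := 2 * Real.pi * (2 * Real.log B - Real.log r)) ?_ ?_
    · exact (hmeas.norm.stronglyMeasurable.integral_prod_left).aestronglyMeasurable
    · filter_upwards [hM] with ξ hξ
      rw [Real.norm_of_nonneg (integral_nonneg fun _ => norm_nonneg _)]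
      calc ∫ θ in Set.Ioc 0 (2 * Real.pi), ‖Real.log ‖circleMap c r θ - ξ‖‖
          ≤ ∫ θ in Set.Ioc 0 (2 * Real.pi),
              (2 * Real.log B - Real.log ‖circleMap c r θ - ξ‖) := by
            refine integral_mono (hcirc ξ).norm ((integrable_const _).sub (hcirc ξ)) fun θ => ?_
            refine abs_log_le_of_le (norm_nonneg _) ?_ hB1
            have h1 : ‖circleMap c r θ‖ ≤ ‖c‖ + r := by
              have h2 : ‖circleMap c r θ - c‖ = r := by
                simp [circleMap, abs_of_pos hr]
              calc ‖circleMap c r θ‖ = ‖c + (circleMap c r θ - c)‖ := by congr 1; ring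
                _ ≤ ‖c‖ + r := (norm_add_le _ _).trans_eq (by rw [h2])
            have h3 := norm_sub_le (circleMap c r θ) ξ
            have h4 := le_abs_self M
            linarith
        _ = 2 * Real.pi * (2 * Real.log B) -
              2 * Real.pi * (Real.log r + Real.posLog (r⁻¹ * ‖c - ξ‖)) := by
            rw [integral_sub (integrable_const _) (hcirc ξ), havg]
            simp [Real.pi_pos.le]
        _ ≤ 2 * Real.pi * (2 * Real.log B - Real.log r) := by
            have := mul_nonneg h2π (Real.posLog_nonneg (x := r⁻¹ * ‖c - ξ‖))
            linarith
  rw [Real.circleAverage_def, intervalIntegral.integral_of_le h2π, integral_integral_swap hint]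
  simp only [havg]
  rw [integral_const_mul, smul_eq_mul, inv_mul_cancel_left₀ (by positivity)]

/-- If two potentials agree almost everywhere, then so do their averages over circles of a fixed
radius. -/
theorem ae_circleAverage_eq {u v : ℂ → ℝ} (hu : Measurable u) (hv : Measurable v)
    (h : ∀ᵐ z, u z = v z) (r : ℝ) :
    ∀ᵐ c, Real.circleAverage u c r = Real.circleAverage v c r := by
  have hθ : ∀ θ : ℝ, ∀ᵐ c : ℂ, u (circleMap c r θ) = v (circleMap c r θ) := by
    intro θ
    exact (measurePreserving_add_right volume
      (r * Complex.exp (θ * Complex.I))).quasiMeasurePreserving.ae h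
  have hmeas : MeasurableSet
      {p : ℝ × ℂ | u (circleMap p.2 r p.1) = v (circleMap p.2 r p.1)} := by
    have hm : Measurable fun p : ℝ × ℂ => circleMap p.2 r p.1 := by
      unfold circleMap
      fun_prop
    exact measurableSet_eq_fun (hu.comp hm) (hv.comp hm)
  have hcomm : ∀ᵐ c : ℂ, ∀ᵐ θ : ℝ, u (circleMap c r θ) = v (circleMap c r θ) :=
    (Measure.ae_ae_comm hmeas).1 (ae_of_all _ hθ)
  refine hcomm.mono fun c hc => ?_
  rw [Real.circleAverage_def, Real.circleAverage_def]
  congr 1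
  exact intervalIntegral.integral_congr_ae (hc.mono fun θ hθ _ => hθ)

/-- A compactly supported radial bump, a difference of circle averages of `log ‖·‖`. -/
noncomputable def logBump (w : ℂ) : ℝ :=
  Real.log 2 + Real.posLog (2⁻¹ * ‖w‖) - Real.posLog ‖w‖

theorem continuous_logBump : Continuous logBump := by
  unfold logBump
  fun_prop

theorem logBump_nonneg (w : ℂ) : 0 ≤ logBump w := by
  have h := Real.posLog_mul (x := 2) (y := 2⁻¹ * ‖w‖)
  rw [mul_inv_cancel_left₀ two_ne_zero,
    Real.posLog_eq_log (x := 2) (by norm_num)] at h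
  unfold logBump
  linarith

theorem hasCompactSupport_logBump : HasCompactSupport logBump := by
  refine HasCompactSupport.intro (isCompact_closedBall (0 : ℂ) 2) fun w hw => ?_
  have hw2 : 2 < ‖w‖ := by simpa using hw
  unfold logBump
  rw [Real.posLog_eq_log, Real.posLog_eq_log, Real.log_mul (by norm_num) (by linarith),
    Real.log_inv]
  · ring
  · rw [abs_of_nonneg (norm_nonneg w)]
    linarith
  · rw [abs_of_nonneg (by positivity)]
    linarith

theorem integrable_logBump : Integrable logBump :=
  continuous_logBump.integrable_of_hasCompactSupport hasCompactSupport_logBump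

theorem integral_logBump_pos : 0 < ∫ w, logBump w := by
  refine continuous_logBump.integral_pos_of_hasCompactSupport_nonneg_nonzero (x := 0)
    hasCompactSupport_logBump logBump_nonneg ?_
  simp [logBump]
  norm_num

theorem logBump_smul {r : ℝ} (hr : 0 < r) (w : ℂ) :
    logBump (r⁻¹ • w) = (Real.log (2 * r) + Real.posLog ((2 * r)⁻¹ * ‖w‖)) -
      (Real.log r + Real.posLog (r⁻¹ * ‖w‖)) := by
  rw [logBump, norm_smul, Real.norm_of_nonneg (by positivity), Real.log_mul two_ne_zero hr.ne',
    mul_inv, mul_assoc]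
  ring

theorem integrable_posLog_norm_sub {ν : Measure ℂ} [IsProbabilityMeasure ν] {M : ℝ}
    (hM : ∀ᵐ ξ ∂ν, ‖ξ‖ ≤ M) (c : ℂ) {r : ℝ} (hr : 0 < r) :
    Integrable (fun ξ => Real.log r + Real.posLog (r⁻¹ * ‖c - ξ‖)) ν := by
  refine (integrable_const _).add (Integrable.of_bound
    (C := Real.posLog (r⁻¹ * (‖c‖ + M))) (by fun_prop) ?_)
  filter_upwards [hM] with ξ hξ
  rw [Real.norm_of_nonneg Real.posLog_nonneg]
  refine Real.posLog_le_posLog (by positivity) ?_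
  gcongr
  exact (norm_sub_le _ _).trans (by gcongr)

theorem integral_mul_integral_logBump {ν : Measure ℂ} [IsProbabilityMeasure ν] {r : ℝ}
    (hr : 0 < r) (f : BoundedContinuousFunction ℂ ℝ) :
    ∫ z, f z * ∫ ξ, logBump (r⁻¹ • (z - ξ)) ∂ν =
      r ^ 2 * ∫ ξ, (∫ v, f (ξ + r • v) * logBump v) ∂ν := by
  have hcont : Continuous fun p : ℂ × ℂ => f p.1 * logBump (r⁻¹ • (p.1 - p.2)) := by
    have := continuous_logBump
    fun_prop
  have hk : ∀ ξ : ℂ, Integrable fun z => logBump (r⁻¹ • (z - ξ)) := fun ξ =>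
    ((integrable_comp_smul_iff volume logBump (inv_ne_zero hr.ne')).2
      integrable_logBump).comp_sub_right ξ
  have hkint : ∀ ξ : ℂ, ∫ z, logBump (r⁻¹ • (z - ξ)) = ∫ z, logBump (r⁻¹ • z) := fun ξ =>
    integral_sub_right_eq_self (fun z => logBump (r⁻¹ • z)) ξ
  have hfk : ∀ ξ : ℂ, Integrable fun z => f z * logBump (r⁻¹ • (z - ξ)) := fun ξ =>
    (hk ξ).bdd_mul (c := ‖f‖) (by fun_prop) (ae_of_all _ fun z => f.norm_coe_le_norm z)
  have hint : Integrable (Function.uncurry fun z ξ => f z * logBump (r⁻¹ • (z - ξ)))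
      (volume.prod ν) := by
    refine (integrable_prod_iff' (f := fun p : ℂ × ℂ => f p.1 * logBump (r⁻¹ • (p.1 - p.2)))
      hcont.aestronglyMeasurable).2 ⟨ae_of_all _ hfk,
      Integrable.of_bound (C := ‖f‖ * ∫ z, logBump (r⁻¹ • z))
      (hcont.norm.stronglyMeasurable.integral_prod_left).aestronglyMeasurable
      (ae_of_all _ fun ξ => ?_)⟩
    rw [Real.norm_of_nonneg (integral_nonneg fun _ => norm_nonneg _), ← hkint ξ,
      ← integral_const_mul]
    refine integral_mono (hfk ξ).norm ((hk ξ).const_mul _) fun z => ?_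
    simp only [norm_mul, Real.norm_of_nonneg (logBump_nonneg _)]
    exact mul_le_mul_of_nonneg_right (f.norm_coe_le_norm z) (logBump_nonneg _)
  simp only [← integral_const_mul]
  rw [integral_integral_swap hint]
  refine integral_congr_ae (ae_of_all _ fun ξ => ?_)
  have h1 := Measure.integral_comp_smul volume (fun z => f (ξ + z) * logBump (r⁻¹ • z)) r
  have h2 := integral_add_left_eq_self (μ := volume)
    (fun z => f z * logBump (r⁻¹ • (z - ξ))) ξ
  simp only [add_sub_cancel_left] at h2
  simp only [inv_smul_smul₀ hr.ne', Complex.finrank_real_complex, smul_eq_mul] at h1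
  beta_reduce
  rw [integral_const_mul, h1, h2, abs_of_pos (by positivity), mul_inv_cancel_left₀ (by positivity)]

theorem tendsto_integral_integral_logBump {ν : Measure ℂ} [IsProbabilityMeasure ν]
    (f : BoundedContinuousFunction ℂ ℝ) {r : ℕ → ℝ} (hr : Tendsto r atTop (nhds 0)) :
    Tendsto (fun j => ∫ ξ, (∫ v, f (ξ + r j • v) * logBump v) ∂ν) atTop
      (nhds ((∫ ξ, f ξ ∂ν) * ∫ v, logBump v)) := by
  have hb : ∀ ξ v, ∀ s : ℝ, ‖f (ξ + s • v) * logBump v‖ ≤ ‖f‖ * logBump v := by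
    intro ξ v s
    rw [norm_mul, Real.norm_of_nonneg (logBump_nonneg v)]
    exact mul_le_mul_of_nonneg_right (f.norm_coe_le_norm _) (logBump_nonneg v)
  have hcont : ∀ s : ℝ, Continuous fun p : ℂ × ℂ => f (p.1 + s • p.2) * logBump p.2 := by
    intro s
    have := continuous_logBump
    fun_prop
  rw [← integral_mul_const]
  refine tendsto_integral_of_dominated_convergence (fun _ => ‖f‖ * ∫ v, logBump v)
    (fun j => ((hcont (r j)).stronglyMeasurable.integral_prod_right).aestronglyMeasurable)
    (integrable_const _) (fun j => ae_of_all _ fun ξ => ?_) (ae_of_all _ fun ξ => ?_)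
  · rw [← integral_const_mul]
    exact norm_integral_le_of_norm_le (integrable_logBump.const_mul _)
      (ae_of_all _ fun v => hb ξ v (r j))
  · rw [← integral_const_mul]
    refine tendsto_integral_of_dominated_convergence (fun v => ‖f‖ * logBump v)
      (fun j => ((hcont (r j)).comp (Continuous.prodMk_right ξ)).aestronglyMeasurable)
      (integrable_logBump.const_mul _) (fun j => ae_of_all _ fun v => hb ξ v (r j))
      (ae_of_all _ fun v => ?_)
    refine Tendsto.mul_const _ ?_
    have : Tendsto (fun j => ξ + r j • v) atTop (nhds (ξ + (0 : ℝ) • v)) :=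
      tendsto_const_nhds.add (hr.smul_const v)
    rw [zero_smul, add_zero] at this
    exact (f.continuous.tendsto ξ).comp this

/-- Boundedly supported probability measures on `ℂ` are determined by their logarithmic
potentials. -/
theorem eq_of_integral_log_norm_sub_eq {ν₀ ν₁ : Measure ℂ} [IsProbabilityMeasure ν₀]
    [IsProbabilityMeasure ν₁] {M : ℝ} (h₀ : ∀ᵐ ξ ∂ν₀, ‖ξ‖ ≤ M) (h₁ : ∀ᵐ ξ ∂ν₁, ‖ξ‖ ≤ M)
    (h : ∀ᵐ z : ℂ, ∫ ξ, Real.log ‖z - ξ‖ ∂ν₀ = ∫ ξ, Real.log ‖z - ξ‖ ∂ν₁) : ν₀ = ν₁ := by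
  have hmeas : ∀ ν : Measure ℂ, SFinite ν → Measurable fun z => ∫ ξ, Real.log ‖z - ξ‖ ∂ν := by
    intro ν _
    have : Measurable fun p : ℂ × ℂ => Real.log ‖p.1 - p.2‖ := by fun_prop
    exact this.stronglyMeasurable.integral_prod_right.measurable
  have hcirc : ∀ r : ℝ, 0 < r → ∀ᵐ c : ℂ,
      ∫ ξ, (Real.log r + Real.posLog (r⁻¹ * ‖c - ξ‖)) ∂ν₀ =
        ∫ ξ, (Real.log r + Real.posLog (r⁻¹ * ‖c - ξ‖)) ∂ν₁ := by
    intro r hr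
    filter_upwards [ae_circleAverage_eq (hmeas ν₀ inferInstance) (hmeas ν₁ inferInstance) h r]
      with c hc
    rwa [circleAverage_integral_log_norm_sub h₀ c hr,
      circleAverage_integral_log_norm_sub h₁ c hr] at hc
  have hbump : ∀ r : ℝ, 0 < r → ∀ᵐ z : ℂ,
      ∫ ξ, logBump (r⁻¹ • (z - ξ)) ∂ν₀ = ∫ ξ, logBump (r⁻¹ • (z - ξ)) ∂ν₁ := by
    intro r hr
    have h2r : 0 < 2 * r := by positivity
    filter_upwards [hcirc r hr, hcirc (2 * r) h2r] with z hz hz2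
    simp only [logBump_smul hr]
    rw [integral_sub (integrable_posLog_norm_sub h₀ z h2r) (integrable_posLog_norm_sub h₀ z hr),
      integral_sub (integrable_posLog_norm_sub h₁ z h2r) (integrable_posLog_norm_sub h₁ z hr),
      hz, hz2]
  refine ext_of_forall_integral_eq_of_IsFiniteMeasure fun f => ?_
  have hlim : Tendsto (fun j : ℕ => 1 / ((j : ℝ) + 1)) atTop (nhds 0) :=
    tendsto_one_div_add_atTop_nhds_zero_nat
  refine mul_right_cancel₀ integral_logBump_pos.ne' (tendsto_nhds_unique
    (tendsto_integral_integral_logBump (ν := ν₀) f hlim) ?_)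
  convert tendsto_integral_integral_logBump (ν := ν₁) f hlim using 2 with j
  have hj : (0 : ℝ) < 1 / ((j : ℝ) + 1) := by positivity
  refine mul_left_cancel₀ (pow_pos hj 2).ne' ?_
  rw [← integral_mul_integral_logBump hj f, ← integral_mul_integral_logBump hj f]
  refine integral_congr_ae ((hbump _ hj).mono fun z hz => ?_)
  simp only [hz]

theorem isProbabilityMeasure_of_tendsto_rootMeasure {p : ℕ → ℂ[X]} {ν : Measure ℂ}
    (hp : ∀ᶠ k in atTop, (p k).natDegree ≠ 0)
    (hw : ∀ f : BoundedContinuousFunction ℂ ℝ,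
      Tendsto (fun k => ∫ z, f z ∂(rootMeasure (p k))) atTop (nhds (∫ z, f z ∂ν))) :
    IsProbabilityMeasure ν := by
  have h := hw (BoundedContinuousFunction.const ℂ 1)
  simp only [BoundedContinuousFunction.const_apply, integral_const, smul_eq_mul, mul_one] at h
  have hone : ν.real Set.univ = 1 := by
    refine tendsto_nhds_unique h (tendsto_const_nhds.congr' ?_)
    filter_upwards [hp] with k hk
    simp [Measure.real, rootMeasure_univ_eq_one hk]
  constructor
  rwa [Measure.real, ENNReal.toReal_eq_one_iff] at hone

theorem ae_norm_le_of_tendsto_rootMeasure {p : ℕ → ℂ[X]} {ν : Measure ℂ} [IsFiniteMeasure ν]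
    {M : ℝ} (hp : ∀ k, ∀ z ∈ (p k).roots, z ∈ Metric.closedBall 0 M)
    (hw : ∀ f : BoundedContinuousFunction ℂ ℝ,
      Tendsto (fun k => ∫ z, f z ∂(rootMeasure (p k))) atTop (nhds (∫ z, f z ∂ν))) :
    ∀ᵐ ξ ∂ν, ‖ξ‖ ≤ M := by
  let f : BoundedContinuousFunction ℂ ℝ := BoundedContinuousFunction.ofNormedAddCommGroup
    (fun z => min 1 (max (‖z‖ - M) 0)) (by fun_prop) 1 fun z => by
      rw [Real.norm_of_nonneg (by positivity)]
      exact min_le_left _ _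
  have hf : ∀ z, f z = min 1 (max (‖z‖ - M) 0) := fun z => rfl
  have hf0 : ∀ z, 0 ≤ f z := fun z => by rw [hf]; positivity
  have hzero : ∫ z, f z ∂ν = 0 := by
    refine tendsto_nhds_unique (hw f) (tendsto_const_nhds.congr fun k => ?_)
    refine (integral_eq_zero_of_ae ?_).symm
    refine (rootMeasure_ae (hp k)).mono fun z hz => ?_
    have : ‖z‖ ≤ M := by simpa using hz
    simp [hf, this]
  have := (integral_eq_zero_iff_of_nonneg hf0 (f.integrable ν)).1 hzero
  filter_upwards [this] with z hz
  by_contra! hlt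
  have : 0 < f z := by
    rw [hf]
    exact lt_min one_pos (lt_max_of_lt_left (by linarith))
  exact this.ne' hz

/-- Along a subsequence, the logarithmic potentials of the root measures converge almost
everywhere on a given ball. -/
theorem exists_subseq_tendsto_integral_log {p : ℕ → ℂ[X]} {ν : Measure ℂ}
    [IsProbabilityMeasure ν] {M : ℝ} (hp : ∀ k, ∀ z ∈ (p k).roots, z ∈ Metric.closedBall 0 M)
    (hw : ∀ f : BoundedContinuousFunction ℂ ℝ,
      Tendsto (fun k => ∫ z, f z ∂(rootMeasure (p k))) atTop (nhds (∫ z, f z ∂ν)))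
    (R : ℕ) {φ : ℕ → ℕ} (hφ : StrictMono φ) :
    ∃ ψ : ℕ → ℕ, StrictMono ψ ∧ ∀ᵐ z ∂(volume.restrict (Metric.ball (0 : ℂ) R)),
      Tendsto (fun j => ∫ ξ, Real.log ‖z - ξ‖ ∂(rootMeasure (p (φ (ψ j))))) atTop
        (nhds (∫ ξ, Real.log ‖z - ξ‖ ∂ν)) := by
  have hT : (1 : ℝ) ≤ R + |M| + 1 := by
    have := abs_nonneg M
    have : (0 : ℝ) ≤ R := R.cast_nonneg
    linarith
  have : IsFiniteMeasure (volume.restrict (Metric.ball (0 : ℂ) R)) :=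
    isFiniteMeasure_restrict.2 measure_ball_lt_top.ne
  obtain ⟨ψ, hψ, hlim⟩ := (IsApproxKernel.log_min hT).exists_subseq_tendsto_ae
    (fun k => rootMeasure_univ_le_one (p k)) prob_le_one hw
    (volume.restrict (Metric.ball (0 : ℂ) R)) Measure.restrict_le_self hφ
  refine ⟨ψ, hψ, ?_⟩
  filter_upwards [hlim, ae_restrict_mem measurableSet_ball] with z hz hzR
  have hzR' : ‖z‖ < R := by simpa using hzR
  have heq : ∀ μ : Measure ℂ, (∀ᵐ ξ ∂μ, ‖ξ‖ ≤ M) →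
      ∫ ξ, (Real.log (min ‖z - ξ‖ (R + |M| + 1)) : ℂ) ∂μ =
        ((∫ ξ, Real.log ‖z - ξ‖ ∂μ : ℝ) : ℂ) := by
    intro μ hμ
    rw [← integral_complex_ofReal]
    refine integral_congr_ae (hμ.mono fun ξ hξ => ?_)
    have h1 := norm_sub_le z ξ
    have h2 := le_abs_self M
    simp only
    rw [min_eq_left (by linarith)]
  have hroot : ∀ k, ∀ᵐ ξ ∂rootMeasure (p k), ‖ξ‖ ≤ M := fun k =>
    rootMeasure_ae fun ξ hξ => by simpa using hp k ξ hξ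
  rw [heq ν (ae_norm_le_of_tendsto_rootMeasure hp hw)] at hz
  simp only [heq _ (hroot _)] at hz
  exact (Complex.continuous_re.tendsto _).comp hz

/-- If the normalized logarithmic derivative has a nonzero limit, then the logarithmic potentials
of the roots of `p j` and of `derivative (p j)` have the same limit. -/
theorem eq_of_tendsto_integral_log_of_tendsto_integral_inv {p : ℕ → ℂ[X]} {z c : ℂ} {u v : ℝ}
    (hdeg : Tendsto (fun j => (p j).natDegree) atTop atTop)
    (hz : ∀ j, (p j).eval z ≠ 0) (hz' : ∀ᶠ j in atTop, (derivative (p j)).eval z ≠ 0)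
    (hc : c ≠ 0)
    (hlim : Tendsto (fun j => ∫ ξ, (z - ξ)⁻¹ ∂rootMeasure (p j)) atTop (nhds c))
    (hu : Tendsto (fun j => ∫ ξ, Real.log ‖z - ξ‖ ∂rootMeasure (p j)) atTop (nhds u))
    (hv : Tendsto (fun j => ∫ ξ, Real.log ‖z - ξ‖ ∂rootMeasure (derivative (p j))) atTop
      (nhds v)) : u = v := by
  have hlog : Tendsto (fun j => Real.log ‖∫ ξ, (z - ξ)⁻¹ ∂rootMeasure (p j)‖) atTop
      (nhds (Real.log ‖c‖)) := hlim.norm.log (by simpa using hc)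
  have hsmall : Tendsto (fun j => (Real.log ‖∫ ξ, (z - ξ)⁻¹ ∂rootMeasure (p j)‖ +
      ∫ ξ, Real.log ‖z - ξ‖ ∂rootMeasure (derivative (p j))) * ((p j).natDegree : ℝ)⁻¹)
      atTop (nhds 0) := by
    have hinv : Tendsto (fun j => ((p j).natDegree : ℝ)⁻¹) atTop (nhds 0) :=
      (tendsto_inv_atTop_nhds_zero_nat (𝕜 := ℝ)).comp hdeg
    simpa using (hlog.add hv).mul hinv
  have hdiff := hv.sub hu
  refine (sub_eq_zero.1 (tendsto_nhds_unique hdiff (hsmall.congr' ?_))).symm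
  filter_upwards [hz', hdeg.eventually_ge_atTop 2] with j hj' hj2
  have hpot : ∀ q : ℂ[X], q.natDegree ≠ 0 → q.eval z ≠ 0 →
      q.natDegree * ∫ ξ, Real.log ‖z - ξ‖ ∂rootMeasure q =
        Real.log ‖q.eval z‖ - Real.log ‖q.leadingCoeff‖ := by
    intro q hq hqz
    have h1 := integral_rootMeasure q fun ξ => (Real.log ‖z - ξ‖ : ℂ)
    rw [integral_complex_ofReal] at h1
    have h2 : (q.roots.map fun ξ => (Real.log ‖z - ξ‖ : ℂ)).sum =
        (((q.roots.map fun ξ => Real.log ‖z - ξ‖).sum : ℝ) : ℂ) := by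
      rw [← Complex.ofRealHom_eq_coe, map_multiset_sum, Multiset.map_map]
      rfl
    rw [h2, sum_log_norm_sub_roots hqz] at h1
    have h3 : (q.natDegree : ℂ) ≠ 0 := by exact_mod_cast hq
    have h4 : (q.natDegree : ℂ) * ((∫ ξ, Real.log ‖z - ξ‖ ∂rootMeasure q : ℝ) : ℂ) =
        ((Real.log ‖q.eval z‖ - Real.log ‖q.leadingCoeff‖ : ℝ) : ℂ) := by
      rw [h1, mul_inv_cancel_left₀ h3]
    exact_mod_cast h4
  have hd' : (derivative (p j)).natDegree = (p j).natDegree - 1 := natDegree_derivative _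
  have e0 := hpot (p j) (by omega) (hz j)
  have e1 := hpot (derivative (p j)) (by omega) hj'
  have hN : ((p j).natDegree : ℝ) ≠ 0 := by
    have : (p j).natDegree ≠ 0 := by omega
    exact_mod_cast this
  have hlead : (p j).leadingCoeff ≠ 0 := by
    rw [leadingCoeff_ne_zero]
    intro h
    simp [h] at hj2
  have hlead' : (derivative (p j)).leadingCoeff = (p j).leadingCoeff * (p j).natDegree := by
    rw [leadingCoeff, hd', coeff_derivative, leadingCoeff, Nat.sub_add_cancel (by omega)]
    congr 1
    rw [Nat.cast_sub (by omega)]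
    push_cast
    ring
  rw [hlead', hd', norm_mul, Real.log_mul (norm_ne_zero_iff.2 hlead) (by simpa using hN),
    Nat.cast_sub (by omega), Complex.norm_natCast] at e1
  have ec := integral_inv_sub_rootMeasure (hz j)
  rw [ec, norm_mul, norm_div, norm_inv, Complex.norm_natCast, Real.log_mul (inv_ne_zero hN)
    (div_ne_zero (norm_ne_zero_iff.2 hj') (norm_ne_zero_iff.2 (hz j))), Real.log_inv,
    Real.log_div (norm_ne_zero_iff.2 hj') (norm_ne_zero_iff.2 (hz j))]
  field_simp
  push_cast at e1
  linarith

theorem ae_eval_ne_zero {p : ℂ[X]} (hp : p ≠ 0) : ∀ᵐ z : ℂ, p.eval z ≠ 0 := by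
  have h : (p.rootSet ℂ).Finite := p.rootSet_finite ℂ
  filter_upwards [h.countable.ae_notMem volume] with z hz h0
  exact hz (by simp [mem_rootSet, hp, h0])

/-- Limit, at a point, of a Heine-Stieltjes equation divided by `n (n - 1) S`. -/
theorem eval_mul_mul_eq_of_tendsto {Q P : ℂ[X]} {S V : ℕ → ℂ[X]} {Vt : ℂ[X]} {z c₀ c₁ : ℂ}
    (hdeg : Tendsto (fun j => (S j).natDegree) atTop atTop)
    (hV : ∀ j, (V j).degree ≤ 1) (hVt : Vt.natDegree = 1)
    (heq : ∀ j,
      Q * (derivative (derivative (S j))) + P * (derivative (S j)) + V j * S j = 0)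
    (hVconv : ∀ i : ℕ, Tendsto
      (fun j => -((V j).coeff i) / (((S j).natDegree : ℂ) * (((S j).natDegree : ℂ) - 1))) atTop
        (nhds (Vt.coeff i)))
    (hz : ∀ j, (S j).eval z ≠ 0) (hz' : ∀ j, (derivative (S j)).eval z ≠ 0)
    (h₀ : Tendsto (fun j => ∫ ξ, (z - ξ)⁻¹ ∂rootMeasure (S j)) atTop (nhds c₀))
    (h₁ : Tendsto (fun j => ∫ ξ, (z - ξ)⁻¹ ∂rootMeasure (derivative (S j))) atTop (nhds c₁)) :
    Q.eval z * c₀ * c₁ = Vt.eval z := by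
  have hinv : Tendsto (fun j => (((S j).natDegree - 1 : ℕ) : ℂ)⁻¹) atTop (nhds 0) :=
    (tendsto_inv_atTop_nhds_zero_nat (𝕜 := ℂ)).comp ((tendsto_sub_atTop_nat 1).comp hdeg)
  have hleft := ((h₀.const_mul (Q.eval z)).mul h₁).add ((h₀.const_mul (P.eval z)).mul hinv)
  have hright := (hVconv 0).add ((hVconv 1).mul_const z)
  rw [mul_zero, add_zero] at hleft
  have hVtz : Vt.eval z = Vt.coeff 0 + Vt.coeff 1 * z := by
    rw [eval_eq_sum_range, hVt]
    simp [Finset.sum_range_succ]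
  rw [hVtz]
  refine tendsto_nhds_unique hleft (hright.congr' ?_)
  filter_upwards [hdeg.eventually_ge_atTop 2] with j hj
  have hVz : (V j).eval z = (V j).coeff 0 + (V j).coeff 1 * z := by
    rw [eval_eq_sum_range' (n := 2)]
    · simp [Finset.sum_range_succ]
    · exact (natDegree_le_of_degree_le (hV j)).trans_lt one_lt_two
  have hode := congrArg (eval z) (heq j)
  simp only [eval_add, eval_mul, eval_zero, hVz] at hode
  rw [integral_inv_sub_rootMeasure (hz j), integral_inv_sub_rootMeasure (hz' j),
    natDegree_derivative, Nat.cast_sub (by omega)]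
  have hN : ((S j).natDegree : ℂ) ≠ 0 := by
    have : (S j).natDegree ≠ 0 := by omega
    exact_mod_cast this
  have hN1 : ((S j).natDegree : ℂ) - 1 ≠ 0 := by
    rw [sub_ne_zero]
    have : (S j).natDegree ≠ 1 := by omega
    exact_mod_cast this
  have := hz j
  have := hz' j
  push_cast
  field_simp
  linear_combination -hode

/-- Lemma 7: along an infinite set of degrees `n k`, if `Q Sₖ'' + P Sₖ' + Vₖ Sₖ = 0` with
`deg Sₖ = n k`, all roots of the `Sₖ` in a fixed compact set, the root-counting measures
of `Sₖ, Sₖ', Sₖ''` converging weakly to `ν⁰, ν¹, ν²`, and `-Vₖ/(nₖ(nₖ-1))` converging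
coefficientwise to a monic linear `Ṽ`, then `ν⁰ = ν¹ = ν²` and the Cauchy transform `C`
of `ν⁰` satisfies `C(z)² = Ṽ(z)/Q(z)` a.e. -/
theorem stmt9 (Q P : Polynomial ℂ) (hQmonic : Q.Monic) (hQdeg : Q.natDegree = 3)
    (hP : P.degree ≤ 2)
    (n : ℕ → ℕ) (hn : StrictMono n) (hnpos : ∀ k, 0 < n k)
    (S V : ℕ → Polynomial ℂ)
    (hS : ∀ k, (S k).natDegree = n k)
    (hV : ∀ k, (V k).degree ≤ 1)
    (heq : ∀ k,
      Q * (derivative (derivative (S k))) + P * (derivative (S k)) + V k * S k = 0)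
    (K : Set ℂ) (hK : IsCompact K) (hroots : ∀ k, ∀ z ∈ (S k).roots, z ∈ K)
    (ν0 ν1 ν2 : Measure ℂ)
    (h0 : ∀ f : BoundedContinuousFunction ℂ ℝ,
      Tendsto (fun k => ∫ z, f z ∂(rootMeasure (S k))) atTop (nhds (∫ z, f z ∂ν0)))
    (h1 : ∀ f : BoundedContinuousFunction ℂ ℝ,
      Tendsto (fun k => ∫ z, f z ∂(rootMeasure (derivative (S k)))) atTop
        (nhds (∫ z, f z ∂ν1)))
    (h2 : ∀ f : BoundedContinuousFunction ℂ ℝ,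
      Tendsto (fun k => ∫ z, f z ∂(rootMeasure (derivative (derivative (S k))))) atTop
        (nhds (∫ z, f z ∂ν2)))
    (Vt : Polynomial ℂ) (hVtmonic : Vt.Monic) (hVtdeg : Vt.natDegree = 1)
    (hVconv : ∀ i : ℕ,
      Tendsto (fun k => -((V k).coeff i) / ((n k : ℂ) * ((n k : ℂ) - 1))) atTop
        (nhds (Vt.coeff i))) :
    ν0 = ν1 ∧ ν1 = ν2 ∧
    ∀ᵐ z ∂(MeasureTheory.volume : Measure ℂ),
      (∫ ξ, (z - ξ)⁻¹ ∂ν0) ^ 2 = Vt.eval z / Q.eval z := by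
  have hdeg0 : Tendsto (fun k => (S k).natDegree) atTop atTop := by
    simpa only [hS] using hn.tendsto_atTop
  have hdeg1 : Tendsto (fun k => (derivative (S k)).natDegree) atTop atTop := by
    simpa only [natDegree_derivative, Function.comp_def] using
      (tendsto_sub_atTop_nat 1).comp hdeg0
  have hdeg2 : Tendsto (fun k => (derivative (derivative (S k))).natDegree) atTop atTop := by
    simpa only [natDegree_derivative, Function.comp_def] using
      (tendsto_sub_atTop_nat 1).comp hdeg1
  have : IsProbabilityMeasure ν0 :=
    isProbabilityMeasure_of_tendsto_rootMeasure (hdeg0.eventually_ne_atTop 0) h0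
  have : IsProbabilityMeasure ν1 :=
    isProbabilityMeasure_of_tendsto_rootMeasure (hdeg1.eventually_ne_atTop 0) h1
  have : IsProbabilityMeasure ν2 :=
    isProbabilityMeasure_of_tendsto_rootMeasure (hdeg2.eventually_ne_atTop 0) h2
  obtain ⟨M, hM⟩ := hK.isBounded.subset_closedBall 0
  have hr0 : ∀ k, ∀ z ∈ (S k).roots, z ∈ Metric.closedBall 0 M := fun k z hz =>
    hM (hroots k z hz)
  have hr1 := fun k => roots_derivative_mem_closedBall (hr0 k)
  have hr2 := fun k => roots_derivative_mem_closedBall (hr1 k)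
  have hne0 : ∀ k, S k ≠ 0 := by
    intro k hk
    have := hS k
    have := hnpos k
    simp_all
  have hne1 : ∀ k, derivative (S k) ≠ 0 := by
    intro k hk
    have h := derivative_eq_zero.1 hk
    have := hS k
    have := hnpos k
    omega
  have hnz2 : ∀ᵐ z : ℂ, ∀ k, derivative (derivative (S k)) ≠ 0 →
      (derivative (derivative (S k))).eval z ≠ 0 := by
    refine ae_all_iff.2 fun k => ?_
    by_cases hk : derivative (derivative (S k)) = 0
    · exact ae_of_all _ fun z h => absurd hk h
    · exact (ae_eval_ne_zero hk).mono fun z hz _ => hz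
  have hlocal : ∀ R : ℕ, ∀ᵐ z ∂(volume.restrict (Metric.ball (0 : ℂ) R)),
      ∫ ξ, Real.log ‖z - ξ‖ ∂ν0 = ∫ ξ, Real.log ‖z - ξ‖ ∂ν1 ∧
      ∫ ξ, Real.log ‖z - ξ‖ ∂ν1 = ∫ ξ, Real.log ‖z - ξ‖ ∂ν2 ∧
      Q.eval z * (∫ ξ, (z - ξ)⁻¹ ∂ν0) * (∫ ξ, (z - ξ)⁻¹ ∂ν1) = Vt.eval z := by
    intro R
    have : IsFiniteMeasure (volume.restrict (Metric.ball (0 : ℂ) R)) :=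
      isFiniteMeasure_restrict.2 measure_ball_lt_top.ne
    obtain ⟨φa, hφa, hC0⟩ := IsApproxKernel.inv.exists_subseq_tendsto_ae
      (fun k => rootMeasure_univ_le_one (S k)) prob_le_one h0
      (volume.restrict (Metric.ball (0 : ℂ) R)) Measure.restrict_le_self strictMono_id
    obtain ⟨φb, hφb, hC1⟩ := IsApproxKernel.inv.exists_subseq_tendsto_ae
      (fun k => rootMeasure_univ_le_one (derivative (S k))) prob_le_one h1
      (volume.restrict (Metric.ball (0 : ℂ) R)) Measure.restrict_le_self hφa
    obtain ⟨φc, hφc, hU0⟩ := exists_subseq_tendsto_integral_log hr0 h0 R (hφa.comp hφb)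
    obtain ⟨φd, hφd, hU1⟩ :=
      exists_subseq_tendsto_integral_log hr1 h1 R ((hφa.comp hφb).comp hφc)
    obtain ⟨φe, hφe, hU2⟩ :=
      exists_subseq_tendsto_integral_log hr2 h2 R (((hφa.comp hφb).comp hφc).comp hφd)
    set χ : ℕ → ℕ := fun j => φa (φb (φc (φd (φe j))))
    have hχm : Tendsto χ atTop atTop :=
      (hφa.comp (hφb.comp (hφc.comp (hφd.comp hφe)))).tendsto_atTop
    filter_upwards [hC0, hC1, hU0, hU1, hU2,
      ae_restrict_of_ae (ae_all_iff.2 fun k => ae_eval_ne_zero (hne0 k)),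
      ae_restrict_of_ae (ae_all_iff.2 fun k => ae_eval_ne_zero (hne1 k)),
      ae_restrict_of_ae hnz2, ae_restrict_of_ae (ae_eval_ne_zero hVtmonic.ne_zero)]
      with z c0 c1 u0 u1 u2 e0 e1 e2 eV
    replace c0 : Tendsto (fun j => ∫ ξ, (z - ξ)⁻¹ ∂rootMeasure (S (χ j))) atTop _ :=
      c0.comp (hφb.comp (hφc.comp (hφd.comp hφe))).tendsto_atTop
    replace c1 : Tendsto (fun j => ∫ ξ, (z - ξ)⁻¹ ∂rootMeasure (derivative (S (χ j)))) atTop _ :=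
      c1.comp (hφc.comp (hφd.comp hφe)).tendsto_atTop
    replace u0 := u0.comp (hφd.comp hφe).tendsto_atTop
    replace u1 := u1.comp hφe.tendsto_atTop
    have key : Q.eval z * (∫ ξ, (z - ξ)⁻¹ ∂ν0) * (∫ ξ, (z - ξ)⁻¹ ∂ν1) = Vt.eval z := by
      refine eval_mul_mul_eq_of_tendsto (S := fun j => S (χ j)) (V := fun j => V (χ j))
        (hdeg0.comp hχm) (fun j => hV _) hVtdeg (fun j => heq _) (fun i => ?_)
        (fun j => e0 _) (fun j => e1 _) c0 c1
      simp only [hS]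
      exact (hVconv i).comp hχm
    have hc0 : (∫ ξ, (z - ξ)⁻¹ ∂ν0) ≠ 0 := by
      intro h
      rw [h, mul_zero, zero_mul] at key
      exact eV key.symm
    have hc1 : (∫ ξ, (z - ξ)⁻¹ ∂ν1) ≠ 0 := by
      intro h
      rw [h, mul_zero] at key
      exact eV key.symm
    refine ⟨?_, ?_, key⟩
    · exact eq_of_tendsto_integral_log_of_tendsto_integral_inv (p := fun j => S (χ j))
        (hdeg0.comp hχm) (fun j => e0 _) (Eventually.of_forall fun j => e1 _) hc0 c0 u0 u1
    · refine eq_of_tendsto_integral_log_of_tendsto_integral_inv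
        (p := fun j => derivative (S (χ j)))
        (hdeg1.comp hχm) (fun j => e1 _) ?_ hc1 c1 u1 u2
      filter_upwards [(hdeg2.comp hχm).eventually_ne_atTop 0] with j hj
      refine e2 _ fun h => hj ?_
      rw [Function.comp_apply, h, natDegree_zero]
  have hglobal := (ae_restrict_iUnion_iff _ _).2 hlocal
  rw [Metric.iUnion_ball_nat, Measure.restrict_univ] at hglobal
  have hs0 := ae_norm_le_of_tendsto_rootMeasure hr0 h0
  have hs1 := ae_norm_le_of_tendsto_rootMeasure hr1 h1
  have hs2 := ae_norm_le_of_tendsto_rootMeasure hr2 h2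
  have h01 : ν0 = ν1 := eq_of_integral_log_norm_sub_eq hs0 hs1 (hglobal.mono fun z hz => hz.1)
  have h12 : ν1 = ν2 := eq_of_integral_log_norm_sub_eq hs1 hs2 (hglobal.mono fun z hz => hz.2.1)
  refine ⟨h01, h12, ?_⟩
  filter_upwards [hglobal, ae_eval_ne_zero hQmonic.ne_zero] with z hz hQz
  have hz3 := hz.2.2
  rw [← h01] at hz3
  rw [eq_div_iff hQz, ← hz3]
  ring
end

section
/- Let a_j < a_k be real numbers and a_i ∈ ℂ with Im a_i > 0; set Q(z) = (z−a_i)(z−a_j)(z−a_k) and let Δ be the closed triangle (the convex hull of {a_i, a_j, a_k} in ℂ ≅ ℝ²). Say that a point b ∈ ℂ satisfies condition (R) if there exists a continuous integrable function g : (a_j, a_k) → ℂ with g(t)² = (b−t)/Q(t) for all t ∈ (a_j, a_k) and ∫_{a_j}^{a_k} g(t) dt ∈ ℝ. Then for every b ∈ Δ there exists exactly one point b' ∈ ℂ with Im b' = Im b satisfying (R), and this b' lies in Δ. -/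
open MeasureTheory

/-- Condition (R): there is a continuous integrable branch `g` of the square root of
`(b - t)/Q(t)` on the interval `(a_j, a_k)` (with `Q(z) = (z-a_i)(z-a_j)(z-a_k)`) whose
integral over the interval is real. -/
def condR (aj ak : ℝ) (ai : ℂ) (b : ℂ) : Prop :=
  ∃ g : ℝ → ℂ, ContinuousOn g (Set.Ioo aj ak) ∧
    IntegrableOn g (Set.Ioo aj ak) ∧
    (∀ t ∈ Set.Ioo aj ak, (g t) ^ 2 =
      (b - (t : ℂ)) / (((t : ℂ) - ai) * ((t : ℂ) - (aj : ℂ)) * ((t : ℂ) - (ak : ℂ)))) ∧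
    (∫ t in Set.Ioo aj ak, g t).im = 0

/-- The square root on the closed upper half-plane with values in the closed first quadrant. -/
noncomputable def uhpSqrt (z : ℂ) : ℂ :=
  ⟨√((‖z‖ + z.re) / 2), √((‖z‖ - z.re) / 2)⟩

theorem uhpSqrt_re_nonneg (z : ℂ) : 0 ≤ (uhpSqrt z).re := Real.sqrt_nonneg _

theorem uhpSqrt_im_nonneg (z : ℂ) : 0 ≤ (uhpSqrt z).im := Real.sqrt_nonneg _

theorem uhpSqrt_re_sq (z : ℂ) : (uhpSqrt z).re ^ 2 = (‖z‖ + z.re) / 2 :=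
  Real.sq_sqrt (by linarith [neg_le_of_abs_le (Complex.abs_re_le_norm z)])

theorem uhpSqrt_im_sq (z : ℂ) : (uhpSqrt z).im ^ 2 = (‖z‖ - z.re) / 2 :=
  Real.sq_sqrt (by linarith [le_of_abs_le (Complex.abs_re_le_norm z)])

theorem uhpSqrt_sq {z : ℂ} (hz : 0 ≤ z.im) : uhpSqrt z ^ 2 = z := by
  have h1 := uhpSqrt_re_sq z
  have h2 := uhpSqrt_im_sq z
  have h3 : ‖z‖ ^ 2 = z.re ^ 2 + z.im ^ 2 := by
    rw [Complex.sq_norm, Complex.normSq_apply]; ring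
  have h4 : 2 * ((uhpSqrt z).re * (uhpSqrt z).im) = z.im := by
    have h0 := mul_nonneg (uhpSqrt_re_nonneg z) (uhpSqrt_im_nonneg z)
    refine (sq_eq_sq₀ (by positivity) hz).1 ?_
    rw [mul_pow, mul_pow, h1, h2]
    linarith
  apply Complex.ext
  · rw [sq, Complex.mul_re]; linarith
  · rw [sq, Complex.mul_im]; linarith

theorem continuous_uhpSqrt : Continuous uhpSqrt := by
  have : uhpSqrt = fun z : ℂ =>
      ((√((‖z‖ + z.re) / 2) : ℝ) : ℂ) + ((√((‖z‖ - z.re) / 2) : ℝ) : ℂ) * Complex.I := by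
    funext z
    rw [← Complex.mk_eq_add_mul_I]
    rfl
  rw [this]
  fun_prop

theorem norm_sub_le_re_sub {z w : ℂ} (hre : z.re ≤ w.re) (him : z.im = w.im) :
    |‖w‖ - ‖z‖| ≤ w.re - z.re := by
  refine (abs_norm_sub_norm_le w z).trans_eq ?_
  have : w - z = ((w.re - z.re : ℝ) : ℂ) := by
    apply Complex.ext <;> simp [him]
  rw [this, Complex.norm_real, Real.norm_of_nonneg (by linarith)]

theorem uhpSqrt_re_mono {z w : ℂ} (hre : z.re ≤ w.re) (him : z.im = w.im) :
    (uhpSqrt z).re ≤ (uhpSqrt w).re :=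
  Real.sqrt_le_sqrt (by linarith [neg_le_of_abs_le (norm_sub_le_re_sub hre him)])

theorem uhpSqrt_im_anti {z w : ℂ} (hre : z.re ≤ w.re) (him : z.im = w.im) :
    (uhpSqrt w).im ≤ (uhpSqrt z).im :=
  Real.sqrt_le_sqrt (by linarith [le_of_abs_le (norm_sub_le_re_sub hre him)])

theorem uhpSqrt_real_mul {r : ℝ} (hr : 0 ≤ r) (z : ℂ) :
    uhpSqrt (r * z) = (√r : ℝ) * uhpSqrt z := by
  have hn : ‖(r : ℂ) * z‖ = r * ‖z‖ := by
    rw [norm_mul, Complex.norm_real, Real.norm_of_nonneg hr]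
  apply Complex.ext
  · rw [Complex.re_ofReal_mul]
    simp only [uhpSqrt, hn, Complex.re_ofReal_mul]
    rw [← Real.sqrt_mul hr]
    ring_nf
  · rw [Complex.im_ofReal_mul]
    simp only [uhpSqrt, hn, Complex.re_ofReal_mul]
    rw [← Real.sqrt_mul hr]
    ring_nf

theorem uhpSqrt_re_pos {z : ℂ} (hz : 0 < z.im) : 0 < (uhpSqrt z).re :=
  Real.sqrt_pos.2 (by linarith [neg_lt_of_abs_lt (Complex.abs_re_lt_norm.2 hz.ne')])

theorem uhpSqrt_im_pos {z : ℂ} (hz : 0 < z.im) : 0 < (uhpSqrt z).im :=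
  Real.sqrt_pos.2 (by linarith [lt_of_abs_lt (Complex.abs_re_lt_norm.2 hz.ne')])

theorem uhpSqrt_ne_zero {z : ℂ} (hz : 0 < z.im) : uhpSqrt z ≠ 0 := fun h =>
  (uhpSqrt_re_pos hz).ne' (by rw [h, Complex.zero_re])

/-- The branch of the square root of `(b - t) / Q(t)` on `(aj, ak)` induced by `uhpSqrt`. -/
noncomputable def sqrtBranch (aj ak : ℝ) (ai b : ℂ) (t : ℝ) : ℂ :=
  uhpSqrt (b - t) / uhpSqrt (ai - t) / (√((t - aj) * (ak - t)) : ℝ)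

section Branch

variable {aj ak : ℝ} {ai : ℂ}

theorem sqrt_weight_pos {t : ℝ} (ht : t ∈ Set.Ioo aj ak) : 0 < √((t - aj) * (ak - t)) :=
  Real.sqrt_pos.2 (mul_pos (sub_pos.2 ht.1) (sub_pos.2 ht.2))

theorem sqrtBranch_sq (hai : 0 < ai.im) {b : ℂ} (hb : 0 ≤ b.im) {t : ℝ}
    (ht : t ∈ Set.Ioo aj ak) :
    sqrtBranch aj ak ai b t ^ 2 =
      (b - (t : ℂ)) / (((t : ℂ) - ai) * ((t : ℂ) - (aj : ℂ)) * ((t : ℂ) - (ak : ℂ))) := by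
  have hw : ((√((t - aj) * (ak - t)) : ℝ) : ℂ) ^ 2 = ((t : ℂ) - aj) * (ak - t) := by
    rw [← Complex.ofReal_pow, Real.sq_sqrt (mul_pos (sub_pos.2 ht.1) (sub_pos.2 ht.2)).le]
    push_cast
    ring
  rw [sqrtBranch, div_pow, div_pow, hw, uhpSqrt_sq (by simpa using hb),
    uhpSqrt_sq (by simpa using hai.le), div_div]
  congr 1
  ring

theorem sqrtBranch_im (b : ℂ) (t : ℝ) :
    (sqrtBranch aj ak ai b t).im =
      ((uhpSqrt (b - t)).im * (uhpSqrt (ai - t)).re -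
        (uhpSqrt (b - t)).re * (uhpSqrt (ai - t)).im) /
        (Complex.normSq (uhpSqrt (ai - t)) * √((t - aj) * (ak - t))) := by
  rw [sqrtBranch, Complex.div_ofReal_im, Complex.div_im, ← sub_div, div_div]

theorem continuous_ratio (hai : 0 < ai.im) :
    Continuous fun p : ℂ × ℝ => uhpSqrt (p.1 - p.2) / uhpSqrt (ai - p.2) := by
  refine Continuous.div (continuous_uhpSqrt.comp (by fun_prop))
    (continuous_uhpSqrt.comp (by fun_prop)) fun p => uhpSqrt_ne_zero (by simpa using hai)

theorem continuousOn_sqrtBranch (hai : 0 < ai.im) (b : ℂ) :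
    ContinuousOn (sqrtBranch aj ak ai b) (Set.Ioo aj ak) := by
  refine ContinuousOn.div
    ((continuous_ratio hai).comp (Continuous.prodMk_right b)).continuousOn
    (by fun_prop) fun t ht => ?_
  exact_mod_cast (sqrt_weight_pos ht).ne'

theorem integrableOn_inv_sqrt_weight (hjk : aj < ak) :
    IntegrableOn (fun t : ℝ => (√((t - aj) * (ak - t)))⁻¹) (Set.Ioo aj ak) := by
  have hr : ∀ c : ℝ, IntervalIntegrable (fun t : ℝ => t ^ (-(1 / 2) : ℝ)) volume 0 c := fun c =>
    intervalIntegral.intervalIntegrable_rpow' (by norm_num)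
  have h1 : IntervalIntegrable (fun t : ℝ => (t - aj) ^ (-(1 / 2) : ℝ)) volume aj ak := by
    simpa using (hr (ak - aj)).comp_sub_right aj
  have h2 : IntervalIntegrable (fun t : ℝ => (ak - t) ^ (-(1 / 2) : ℝ)) volume aj ak := by
    simpa using ((hr (ak - aj)).comp_sub_left ak).symm
  have h3 := ((h1.add h2).const_mul (√(ak - aj))⁻¹)
  rw [intervalIntegrable_iff_integrableOn_Ioo_of_le hjk.le] at h3
  refine Integrable.mono' h3 (by fun_prop) ?_
  filter_upwards [ae_restrict_mem measurableSet_Ioo] with t ht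
  have hp : 0 < t - aj := sub_pos.2 ht.1
  have hq : 0 < ak - t := sub_pos.2 ht.2
  have hL : 0 < ak - aj := sub_pos.2 hjk
  rw [Real.norm_of_nonneg (by positivity), Real.rpow_neg hp.le, Real.rpow_neg hq.le,
    ← Real.sqrt_eq_rpow, ← Real.sqrt_eq_rpow, Real.sqrt_mul hp.le]
  have hs : √(ak - aj) ≤ √(t - aj) + √(ak - t) := by
    rw [Real.sqrt_le_left (by positivity)]
    nlinarith [Real.sq_sqrt hp.le, Real.sq_sqrt hq.le,
      mul_nonneg (Real.sqrt_nonneg (t - aj)) (Real.sqrt_nonneg (ak - t))]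
  have hp' := Real.sqrt_pos.2 hp
  have hq' := Real.sqrt_pos.2 hq
  have hL' := Real.sqrt_pos.2 hL
  rw [inv_add_inv hp'.ne' hq'.ne', inv_mul_eq_div, le_div_iff₀ hL', inv_mul_eq_div]
  gcongr

theorem integrableOn_sqrtBranch (hjk : aj < ak) (hai : 0 < ai.im) (b : ℂ) :
    IntegrableOn (sqrtBranch aj ak ai b) (Set.Ioo aj ak) := by
  have h : IntegrableOn (fun t : ℝ => (((√((t - aj) * (ak - t)))⁻¹ : ℝ) : ℂ)) (Set.Icc aj ak) :=
    ((integrableOn_Icc_iff_integrableOn_Ioo (by simp) (by simp)).2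
      (integrableOn_inv_sqrt_weight hjk)).ofReal
  refine ((h.continuousOn_mul
    ((continuous_ratio hai).comp (Continuous.prodMk_right b)).continuousOn isCompact_Icc).mono_set
    Set.Ioo_subset_Icc_self).congr_fun (fun t _ => ?_) measurableSet_Ioo
  simp [sqrtBranch, div_eq_mul_inv]

theorem im_setIntegral {g : ℝ → ℂ} {s : Set ℝ} (hg : IntegrableOn g s) :
    (∫ t in s, g t).im = ∫ t in s, (g t).im :=
  (Complex.imCLM.integral_comp_comm hg).symm

theorem integrableOn_im {g : ℝ → ℂ} {s : Set ℝ} (hg : IntegrableOn g s) :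
    IntegrableOn (fun t => (g t).im) s :=
  Complex.imCLM.integrable_comp hg

theorem sqrtBranch_denom_pos (hai : 0 < ai.im) {t : ℝ} (ht : t ∈ Set.Ioo aj ak) :
    0 < Complex.normSq (uhpSqrt (ai - t)) * √((t - aj) * (ak - t)) :=
  mul_pos (Complex.normSq_pos.2 (uhpSqrt_ne_zero (by simpa using hai))) (sqrt_weight_pos ht)

theorem sqrtBranch_im_anti (hai : 0 < ai.im) {b c : ℂ} (hre : b.re ≤ c.re) (him : b.im = c.im)
    {t : ℝ} (ht : t ∈ Set.Ioo aj ak) :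
    (sqrtBranch aj ak ai c t).im ≤ (sqrtBranch aj ak ai b t).im := by
  have hR := uhpSqrt_re_mono (z := b - t) (w := c - t) (by simpa using hre) (by simpa using him)
  have hI := uhpSqrt_im_anti (z := b - t) (w := c - t) (by simpa using hre) (by simpa using him)
  rw [sqrtBranch_im, sqrtBranch_im]
  refine div_le_div_of_nonneg_right ?_ (sqrtBranch_denom_pos hai ht).le
  exact sub_le_sub (mul_le_mul_of_nonneg_right hI (uhpSqrt_re_nonneg _))
    (mul_le_mul_of_nonneg_right hR (uhpSqrt_im_nonneg _))

theorem sqrtBranch_im_strictAnti (hai : 0 < ai.im) {b c : ℂ} (hre : b.re < c.re)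
    (him : b.im = c.im) {t : ℝ} (ht : t ∈ Set.Ioo aj ak) :
    (sqrtBranch aj ak ai c t).im < (sqrtBranch aj ak ai b t).im := by
  have hR := uhpSqrt_re_mono (z := b - t) (w := c - t) (by simpa using hre.le) (by simpa using him)
  have hI := uhpSqrt_im_anti (z := b - t) (w := c - t) (by simpa using hre.le) (by simpa using him)
  have hai' : 0 < (ai - t).im := by simpa using hai
  have hr := uhpSqrt_re_pos hai'
  have hi := uhpSqrt_im_pos hai'
  rw [sqrtBranch_im, sqrtBranch_im]
  refine div_lt_div_of_pos_right ?_ (sqrtBranch_denom_pos hai ht)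
  rcases hR.lt_or_eq with h | h
  · linarith [mul_le_mul_of_nonneg_right hI hr.le, mul_lt_mul_of_pos_right h hi]
  rcases hI.lt_or_eq with h' | h'
  · linarith [mul_lt_mul_of_pos_right h' hr, mul_le_mul_of_nonneg_right hR hi.le]
  · have h1 := uhpSqrt_re_sq (b - t)
    have h2 := uhpSqrt_im_sq (b - t)
    rw [h, uhpSqrt_re_sq] at h1
    rw [← h', uhpSqrt_im_sq] at h2
    simp only [Complex.sub_re, Complex.ofReal_re] at h1 h2
    linarith

theorem sqrtBranch_im_nonneg (hai : 0 < ai.im) {b : ℂ} {s t : ℝ} (hs : 0 ≤ s)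
    (hre : b.re - t ≤ s * (ai.re - t)) (him : b.im = s * ai.im) (ht : t ∈ Set.Ioo aj ak) :
    0 ≤ (sqrtBranch aj ak ai b t).im := by
  have hre' : (b - t).re ≤ ((s : ℂ) * (ai - t)).re := by
    rw [Complex.re_ofReal_mul]; simpa using hre
  have him' : (b - t).im = ((s : ℂ) * (ai - t)).im := by
    rw [Complex.im_ofReal_mul]; simpa using him
  have hR := uhpSqrt_re_mono hre' him'
  have hI := uhpSqrt_im_anti hre' him'
  rw [uhpSqrt_real_mul hs, Complex.re_ofReal_mul] at hR
  rw [uhpSqrt_real_mul hs, Complex.im_ofReal_mul] at hI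
  rw [sqrtBranch_im]
  refine div_nonneg ?_ (sqrtBranch_denom_pos hai ht).le
  linarith [mul_le_mul_of_nonneg_right hI (uhpSqrt_re_nonneg (ai - t)),
    mul_le_mul_of_nonneg_right hR (uhpSqrt_im_nonneg (ai - t))]

theorem sqrtBranch_im_nonpos (hai : 0 < ai.im) {b : ℂ} {s t : ℝ} (hs : 0 ≤ s)
    (hre : s * (ai.re - t) ≤ b.re - t) (him : b.im = s * ai.im) (ht : t ∈ Set.Ioo aj ak) :
    (sqrtBranch aj ak ai b t).im ≤ 0 := by
  have hre' : ((s : ℂ) * (ai - t)).re ≤ (b - t).re := by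
    rw [Complex.re_ofReal_mul]; simpa using hre
  have him' : ((s : ℂ) * (ai - t)).im = (b - t).im := by
    rw [Complex.im_ofReal_mul]; simpa using him.symm
  have hR := uhpSqrt_re_mono hre' him'
  have hI := uhpSqrt_im_anti hre' him'
  rw [uhpSqrt_real_mul hs, Complex.re_ofReal_mul] at hR
  rw [uhpSqrt_real_mul hs, Complex.im_ofReal_mul] at hI
  rw [sqrtBranch_im]
  refine div_nonpos_of_nonpos_of_nonneg ?_ (sqrtBranch_denom_pos hai ht).le
  linarith [mul_le_mul_of_nonneg_right hI (uhpSqrt_re_nonneg (ai - t)),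
    mul_le_mul_of_nonneg_right hR (uhpSqrt_im_nonneg (ai - t))]

theorem setIntegral_Ioo_pos (hjk : aj < ak) {f : ℝ → ℝ} (hf : IntegrableOn f (Set.Ioo aj ak))
    {x : ℝ} (hpos : ∀ t ∈ Set.Ioo aj ak, t ≠ x → 0 < f t) :
    0 < ∫ t in Set.Ioo aj ak, f t := by
  have hae : ∀ᵐ t ∂volume.restrict (Set.Ioo aj ak), 0 < f t := by
    filter_upwards [ae_restrict_mem measurableSet_Ioo,
      ae_restrict_of_ae (Measure.ae_ne volume x)] with t ht htx using hpos t ht htx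
  have h0 : 0 ≤ᵐ[volume.restrict (Set.Ioo aj ak)] f := hae.mono fun t ht => ht.le
  refine (integral_nonneg_of_ae h0).lt_of_ne' fun h => ?_
  have hz := (integral_eq_zero_iff_of_nonneg_ae h0 hf).1 h
  have hF : ∀ᵐ t ∂volume.restrict (Set.Ioo aj ak), False := by
    filter_upwards [hae, hz] with t h1 h2 using h1.ne' h2
  rw [Filter.eventually_false_iff_eq_bot, ae_eq_bot, Measure.restrict_eq_zero,
    Real.volume_Ioo, ENNReal.ofReal_eq_zero] at hF
  linarith

theorem integral_sqrtBranch_im_strictAnti (hjk : aj < ak) (hai : 0 < ai.im) {b c : ℂ}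
    (hre : b.re < c.re) (him : b.im = c.im) :
    ∫ t in Set.Ioo aj ak, (sqrtBranch aj ak ai c t).im <
      ∫ t in Set.Ioo aj ak, (sqrtBranch aj ak ai b t).im := by
  have hb := integrableOn_im (integrableOn_sqrtBranch hjk hai b)
  have hc := integrableOn_im (integrableOn_sqrtBranch hjk hai c)
  rw [← sub_pos, ← integral_sub hb hc]
  exact setIntegral_Ioo_pos hjk (hb.sub hc) (x := aj) fun t ht _ =>
    sub_pos.2 (sqrtBranch_im_strictAnti hai hre him ht)

theorem continuousOn_integral_sqrtBranch_im (hjk : aj < ak) (hai : 0 < ai.im) (h x₀ x₁ : ℝ) :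
    ContinuousOn (fun x : ℝ => ∫ t in Set.Ioo aj ak, (sqrtBranch aj ak ai ⟨x, h⟩ t).im)
      (Set.Icc x₀ x₁) := by
  have hint := fun x : ℝ => integrableOn_im (integrableOn_sqrtBranch hjk hai ⟨x, h⟩)
  refine continuousOn_of_dominated
    (bound := fun t => |(sqrtBranch aj ak ai ⟨x₀, h⟩ t).im| + |(sqrtBranch aj ak ai ⟨x₁, h⟩ t).im|)
    (fun x _ => (hint x).aestronglyMeasurable) (fun x hx => ?_)
    ((hint x₀).abs.add (hint x₁).abs) (Filter.Eventually.of_forall fun t => ?_)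
  · filter_upwards [ae_restrict_mem measurableSet_Ioo] with t ht
    have h0 := sqrtBranch_im_anti hai (b := ⟨x₀, h⟩) (c := ⟨x, h⟩) hx.1 rfl ht
    have h1 := sqrtBranch_im_anti hai (b := ⟨x, h⟩) (c := ⟨x₁, h⟩) hx.2 rfl ht
    rw [Real.norm_eq_abs]
    refine abs_le.2 ⟨?_, ?_⟩
    · linarith [neg_abs_le (sqrtBranch aj ak ai ⟨x₁, h⟩ t).im,
        abs_nonneg (sqrtBranch aj ak ai ⟨x₀, h⟩ t).im]
    · linarith [le_abs_self (sqrtBranch aj ak ai ⟨x₀, h⟩ t).im,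
        abs_nonneg (sqrtBranch aj ak ai ⟨x₁, h⟩ t).im]
  · have hm : Continuous fun x : ℝ => (⟨x, h⟩ : ℂ) := by
      simp only [Complex.mk_eq_add_mul_I]
      fun_prop
    exact (Complex.continuous_im.comp
      (((continuous_ratio hai).comp (hm.prodMk (continuous_const (y := t)))).div_const
        _)).continuousOn

theorem exists_sign_eqOn_sqrtBranch (hai : 0 < ai.im) {b : ℂ} (hb : 0 ≤ b.im) {g : ℝ → ℂ}
    {s : Set ℝ} (hs : IsPreconnected s) (hsub : s ⊆ Set.Ioo aj ak) (hg : ContinuousOn g s)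
    (hsq : ∀ t ∈ s, g t ^ 2 =
      (b - (t : ℂ)) / (((t : ℂ) - ai) * ((t : ℂ) - (aj : ℂ)) * ((t : ℂ) - (ak : ℂ))))
    (hne : ∀ t ∈ s, b ≠ t) :
    Set.EqOn g (sqrtBranch aj ak ai b) s ∨ Set.EqOn g (-sqrtBranch aj ak ai b) s := by
  refine hs.eq_or_eq_neg_of_sq_eq hg ((continuousOn_sqrtBranch hai b).mono hsub)
    (fun t ht => ?_) fun {t} ht h0 => ?_
  · exact (hsq t ht).trans (sqrtBranch_sq hai hb (hsub ht)).symm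
  · have hw := sqrt_weight_pos (hsub ht)
    rw [sqrtBranch, div_eq_zero_iff, div_eq_zero_iff] at h0
    rcases h0 with (h0 | h0) | h0
    · have := uhpSqrt_sq (z := b - t) (by simpa using hb)
      rw [h0, zero_pow two_ne_zero] at this
      exact hne t ht (sub_eq_zero.1 this.symm)
    · exact uhpSqrt_ne_zero (by simpa using hai) h0
    · exact hw.ne' (by exact_mod_cast h0)

theorem sqrtBranch_im_neg_of_lt (hai : 0 < ai.im) {x t : ℝ} (ht : t ∈ Set.Ioo aj ak)
    (htx : t < x) : (sqrtBranch aj ak ai x t).im < 0 := by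
  have h0 : (sqrtBranch aj ak ai t t).im = 0 := by
    simp [sqrtBranch_im, uhpSqrt]
  simpa [h0] using sqrtBranch_im_strictAnti hai (b := t) (c := x) (by simpa using htx) (by simp) ht

theorem sqrtBranch_im_pos_of_gt (hai : 0 < ai.im) {x t : ℝ} (ht : t ∈ Set.Ioo aj ak)
    (htx : x < t) : 0 < (sqrtBranch aj ak ai x t).im := by
  have h0 : (sqrtBranch aj ak ai t t).im = 0 := by
    simp [sqrtBranch_im, uhpSqrt]
  simpa [h0] using sqrtBranch_im_strictAnti hai (b := x) (c := t) (by simpa using htx) (by simp) ht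

theorem condR.integral_sqrtBranch_im_eq_zero (hjk : aj < ak) (hai : 0 < ai.im) {b : ℂ}
    (hb : 0 ≤ b.im) (hR : condR aj ak ai b) :
    ∫ t in Set.Ioo aj ak, (sqrtBranch aj ak ai b t).im = 0 := by
  obtain ⟨g, hgc, hgi, hsq, hg0⟩ := hR
  rw [im_setIntegral hgi] at hg0
  have of_ae_eq : (∀ t ∈ Set.Ioo aj ak, b ≠ t → g t = sqrtBranch aj ak ai b t) →
      ∫ t in Set.Ioo aj ak, (sqrtBranch aj ak ai b t).im = 0 := fun h => by
    rw [← hg0]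
    refine integral_congr_ae ?_
    filter_upwards [ae_restrict_mem measurableSet_Ioo,
      ae_restrict_of_ae (Measure.ae_ne volume b.re)] with t ht htb
    rw [h t ht fun e => htb (by rw [e, Complex.ofReal_re])]
  have of_ae_eq_neg : (∀ t ∈ Set.Ioo aj ak, b ≠ t → g t = -sqrtBranch aj ak ai b t) →
      ∫ t in Set.Ioo aj ak, (sqrtBranch aj ak ai b t).im = 0 := fun h => by
    rw [← neg_eq_zero, ← integral_neg, ← hg0]
    refine integral_congr_ae ?_
    filter_upwards [ae_restrict_mem measurableSet_Ioo,
      ae_restrict_of_ae (Measure.ae_ne volume b.re)] with t ht htb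
    rw [h t ht fun e => htb (by rw [e, Complex.ofReal_re]), Complex.neg_im]
  by_cases hne : ∀ t ∈ Set.Ioo aj ak, b ≠ (t : ℂ)
  · rcases exists_sign_eqOn_sqrtBranch hai hb isPreconnected_Ioo subset_rfl hgc hsq hne with h | h
    · exact of_ae_eq fun t ht _ => h ht
    · exact of_ae_eq_neg fun t ht _ => h ht
  push Not at hne
  obtain ⟨x, hx, rfl⟩ := hne
  have hl : Set.Ioo aj x ⊆ Set.Ioo aj ak := Set.Ioo_subset_Ioo_right hx.2.le
  have hr : Set.Ioo x ak ⊆ Set.Ioo aj ak := Set.Ioo_subset_Ioo_left hx.1.le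
  have hl' := exists_sign_eqOn_sqrtBranch hai hb isPreconnected_Ioo hl (hgc.mono hl)
    (fun t ht => hsq t (hl ht)) fun t ht e => ht.2.ne' (by exact_mod_cast e)
  have hr' := exists_sign_eqOn_sqrtBranch hai hb isPreconnected_Ioo hr (hgc.mono hr)
    (fun t ht => hsq t (hr ht)) fun t ht e => ht.1.ne (by exact_mod_cast e)
  rcases hl' with h1 | h1 <;> rcases hr' with h2 | h2
  · refine of_ae_eq fun t ht hxt => ?_
    rcases lt_or_gt_of_ne (fun e => hxt (by rw [e]) : x ≠ t) with h | h
    · exact h2 ⟨h, ht.2⟩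
    · exact h1 ⟨ht.1, h⟩
  · have hpos : 0 < ∫ t in Set.Ioo aj ak, -(g t).im := by
      refine setIntegral_Ioo_pos hjk (integrableOn_im hgi).neg (x := x) fun t ht hxt => ?_
      rcases lt_or_gt_of_ne hxt with h | h
      · rw [h1 ⟨ht.1, h⟩]
        exact neg_pos.2 (sqrtBranch_im_neg_of_lt hai ht h)
      · rw [h2 ⟨h, ht.2⟩, Pi.neg_apply, Complex.neg_im, neg_neg]
        exact sqrtBranch_im_pos_of_gt hai ht h
    rw [integral_neg, hg0, neg_zero] at hpos
    exact absurd hpos (lt_irrefl 0)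
  · have hpos : 0 < ∫ t in Set.Ioo aj ak, (g t).im := by
      refine setIntegral_Ioo_pos hjk (integrableOn_im hgi) (x := x) fun t ht hxt => ?_
      rcases lt_or_gt_of_ne hxt with h | h
      · rw [h1 ⟨ht.1, h⟩, Pi.neg_apply, Complex.neg_im]
        exact neg_pos.2 (sqrtBranch_im_neg_of_lt hai ht h)
      · rw [h2 ⟨h, ht.2⟩]
        exact sqrtBranch_im_pos_of_gt hai ht h
    exact absurd hg0 hpos.ne'
  · refine of_ae_eq_neg fun t ht hxt => ?_
    rcases lt_or_gt_of_ne (fun e => hxt (by rw [e]) : x ≠ t) with h | h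
    · exact h2 ⟨h, ht.2⟩
    · exact h1 ⟨ht.1, h⟩

theorem condR_iff_integral_sqrtBranch_im_eq_zero (hjk : aj < ak) (hai : 0 < ai.im) {b : ℂ}
    (hb : 0 ≤ b.im) :
    condR aj ak ai b ↔ ∫ t in Set.Ioo aj ak, (sqrtBranch aj ak ai b t).im = 0 := by
  refine ⟨condR.integral_sqrtBranch_im_eq_zero hjk hai hb, fun h => ?_⟩
  exact ⟨sqrtBranch aj ak ai b, continuousOn_sqrtBranch hai b, integrableOn_sqrtBranch hjk hai b,
    fun t ht => sqrtBranch_sq hai hb ht,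
    (im_setIntegral (integrableOn_sqrtBranch hjk hai b)).trans h⟩

theorem mem_convexHull_triangle_iff {a b c z : ℂ} :
    z ∈ convexHull ℝ ({a, b, c} : Set ℂ) ↔
      ∃ u v w : ℝ, 0 ≤ u ∧ 0 ≤ v ∧ 0 ≤ w ∧ u + v + w = 1 ∧ u * a + v * b + w * c = z := by
  rw [convexHull_insert (Set.insert_nonempty _ _), convexHull_pair, mem_convexJoin]
  constructor
  · rintro ⟨_, rfl, y, ⟨p, q, hp, hq, hpq, rfl⟩, u, s, hu, hs, hus, rfl⟩
    refine ⟨u, s * p, s * q, hu, mul_nonneg hs hp, mul_nonneg hs hq, ?_, ?_⟩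
    · rw [add_assoc, ← mul_add, hpq, mul_one, hus]
    · simp only [Complex.real_smul]
      push_cast
      ring
  · rintro ⟨u, v, w, hu, hv, hw, huvw, rfl⟩
    rcases (add_nonneg hv hw).eq_or_lt with h0 | h0
    · have hv0 : v = 0 := by linarith
      have hw0 : w = 0 := by linarith
      have hu1 : u = 1 := by linarith
      exact ⟨a, rfl, b, left_mem_segment ℝ b c, by simp [hv0, hw0, hu1, left_mem_segment]⟩
    · refine ⟨a, rfl, _, ⟨v / (v + w), w / (v + w), by positivity, by positivity, by field_simp,
        rfl⟩, u, v + w, hu, h0.le, by linarith, ?_⟩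
      have h0' : (v : ℂ) + w ≠ 0 := by exact_mod_cast h0.ne'
      simp only [Complex.real_smul]
      push_cast
      field_simp
      ring

end Branch

/-- Lemma 5: for every `b` in the closed triangle `Δ` with vertices `a_i, a_j, a_k`
(where `a_j < a_k` are real and `a_i` is in the upper half-plane), there is exactly one
point `b'` on the horizontal line through `b` satisfying condition (R), and this `b'`
lies in `Δ`. -/
theorem stmt11 (aj ak : ℝ) (hjk : aj < ak) (ai : ℂ) (hai : 0 < ai.im) :
    ∀ b ∈ convexHull ℝ ({ai, (aj : ℂ), (ak : ℂ)} : Set ℂ),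
      ∃ b' : ℂ, (b'.im = b.im ∧ condR aj ak ai b') ∧
        b' ∈ convexHull ℝ ({ai, (aj : ℂ), (ak : ℂ)} : Set ℂ) ∧
        ∀ c : ℂ, c.im = b.im → condR aj ak ai c → c = b' := by
  intro b hb
  obtain ⟨u, v, w, hu, hv, hw, huvw, rfl⟩ := mem_convexHull_triangle_iff.1 hb
  set h : ℝ := u * ai.im with hh
  have him : (u * ai + v * (aj : ℂ) + w * (ak : ℂ)).im = h := by simp [hh]
  have hh0 : 0 ≤ h := mul_nonneg hu hai.le
  have hu1 : 0 ≤ 1 - u := by linarith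
  rw [him]
  set F : ℝ → ℝ := fun x => ∫ t in Set.Ioo aj ak, (sqrtBranch aj ak ai ⟨x, h⟩ t).im
  have hx : u * ai.re + (1 - u) * aj ≤ u * ai.re + (1 - u) * ak := by gcongr
  have hF0 : 0 ≤ F (u * ai.re + (1 - u) * aj) :=
    setIntegral_nonneg measurableSet_Ioo fun t ht =>
      sqrtBranch_im_nonneg hai hu (by dsimp only; nlinarith [ht.1]) hh ht
  have hF1 : F (u * ai.re + (1 - u) * ak) ≤ 0 :=
    setIntegral_nonpos measurableSet_Ioo fun t ht =>
      sqrtBranch_im_nonpos hai hu (by dsimp only; nlinarith [ht.2]) hh ht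
  obtain ⟨x, ⟨hx0, hx1⟩, hFx⟩ := intermediate_value_Icc' hx
    (continuousOn_integral_sqrtBranch_im hjk hai h _ _) ⟨hF1, hF0⟩
  refine ⟨⟨x, h⟩, ⟨rfl, (condR_iff_integral_sqrtBranch_im_eq_zero hjk hai hh0).2 hFx⟩, ?_, ?_⟩
  · have hL : 0 < ak - aj := sub_pos.2 hjk
    refine mem_convexHull_triangle_iff.2 ⟨u, (u * ai.re + (1 - u) * ak - x) / (ak - aj),
      (x - (u * ai.re + (1 - u) * aj)) / (ak - aj), hu, div_nonneg (by linarith) hL.le,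
      div_nonneg (by linarith) hL.le, by field_simp; ring, ?_⟩
    apply Complex.ext
    · simp only [Complex.add_re, Complex.re_ofReal_mul, Complex.ofReal_re]
      field_simp
      ring
    · simp only [Complex.add_im, Complex.im_ofReal_mul, Complex.ofReal_im, mul_zero, add_zero, hh]
  · rintro c hc hRc
    have hFc := (condR_iff_integral_sqrtBranch_im_eq_zero hjk hai (hc ▸ hh0)).1 hRc
    rcases lt_trichotomy c.re x with hlt | heq | hgt
    · have := integral_sqrtBranch_im_strictAnti hjk hai (b := c) (c := ⟨x, h⟩) hlt hc
      exact absurd (hFx.trans hFc.symm) this.ne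
    · exact Complex.ext heq hc
    · have := integral_sqrtBranch_im_strictAnti hjk hai (b := ⟨x, h⟩) (c := c) hgt hc.symm
      exact absurd (hFc.trans hFx.symm) this.ne
end

section
/- Let a₁, a₂, a₃ ∈ ℂ be three non-collinear points and Q(z) = (z−a₁)(z−a₂)(z−a₃). For i ∈ {1,2,3}, with {j,k} = {1,2,3} \ {i}, define γ_i to be the set of b ∈ ℂ for which there exists a continuous integrable function g : (0,1) → ℂ with g(s)² = (b−ℓ_i(s))/Q(ℓ_i(s)) for all s ∈ (0,1), where ℓ_i(s) = a_j + s(a_k−a_j), such that Im( (a_k−a_j)·∫₀¹ g(s) ds ) = 0. Then there exists exactly one point b₀ belonging to γ₁ ∩ γ₂ ∩ γ₃; moreover γ_i ∩ γ_{i'} = {b₀} for every pair i ≠ i', and b₀ lies in the interior of the convex hull of {a₁, a₂, a₃}. -/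
open MeasureTheory

/-- The curve `γ_i`: the set of `b ∈ ℂ` such that some continuous integrable branch `g`
of the square root of `(b - z)/Q(z)` along the segment from `a_j` to `a_k`
(parametrized by `ℓ_i(s) = a_j + s (a_k - a_j)`, with `{j,k} = {1,2,3} \ {i}` realized
as `j = i+1`, `k = i+2` in `Fin 3`) has `(a_k - a_j) ∫₀¹ g(s) ds` real. -/
def gammaSet (a : Fin 3 → ℂ) (i : Fin 3) : Set ℂ :=
  {b : ℂ | ∃ g : ℝ → ℂ, ContinuousOn g (Set.Ioo (0 : ℝ) 1) ∧
    IntegrableOn g (Set.Ioo (0 : ℝ) 1) ∧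
    (∀ s ∈ Set.Ioo (0 : ℝ) 1, (g s) ^ 2 =
      (b - (a (i + 1) + (s : ℂ) * (a (i + 2) - a (i + 1)))) /
        (((a (i + 1) + (s : ℂ) * (a (i + 2) - a (i + 1))) - a 0) *
         ((a (i + 1) + (s : ℂ) * (a (i + 2) - a (i + 1))) - a 1) *
         ((a (i + 1) + (s : ℂ) * (a (i + 2) - a (i + 1))) - a 2))) ∧
    ((a (i + 2) - a (i + 1)) * ∫ s in Set.Ioo (0 : ℝ) 1, g s).im = 0}

namespace PeriodTriangle

/-! ### The principal square root -/

theorem sqrt_pow_two (x : ℂ) : Complex.sqrt x ^ 2 = x := by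
  have := Complex.cpow_nat_inv_pow x (n := 2) two_ne_zero
  simpa only [Complex.sqrt, Nat.cast_ofNat] using this

theorem sqrt_re_nonneg (x : ℂ) : 0 ≤ (Complex.sqrt x).re := by
  rw [Complex.sqrt, Complex.cpow_inv_two_re]
  positivity

theorem sqrt_re_pos {x : ℂ} (hx : x ∈ Complex.slitPlane) : 0 < (Complex.sqrt x).re := by
  rw [Complex.sqrt, Complex.cpow_inv_two_re]
  apply Real.sqrt_pos.2
  rw [Complex.mem_slitPlane_iff] at hx
  have h1 := Complex.abs_re_le_norm x
  rcases hx with h | h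
  · have := norm_nonneg x
    linarith
  · have h2 := (Complex.abs_re_lt_norm).2 h
    have := neg_abs_le x.re
    linarith

theorem sqrt_im_nonneg {x : ℂ} (hx : 0 ≤ x.im) : 0 ≤ (Complex.sqrt x).im := by
  rw [Complex.sqrt, Complex.cpow_inv_two_im_eq_sqrt hx]
  positivity

theorem two_mul_sqrt_re_mul_im (x : ℂ) :
    2 * ((Complex.sqrt x).re * (Complex.sqrt x).im) = x.im := by
  have h := congrArg Complex.im (sqrt_pow_two x)
  rw [pow_two, Complex.mul_im] at h
  linarith

theorem sqrt_im_pos {x : ℂ} (hx : 0 < x.im) : 0 < (Complex.sqrt x).im := by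
  have h := two_mul_sqrt_re_mul_im x
  have h1 := sqrt_re_nonneg x
  by_contra! h2
  nlinarith [mul_nonneg h1 (neg_nonneg.2 h2)]

theorem sqrt_im_neg {x : ℂ} (hx : x.im < 0) : (Complex.sqrt x).im < 0 := by
  have h := two_mul_sqrt_re_mul_im x
  have h1 := sqrt_re_nonneg x
  by_contra! h2
  nlinarith [mul_nonneg h1 h2]

theorem sqrt_eq_of_sq_eq {x y : ℂ} (h : y ^ 2 = x) (hy : 0 < y.re) : Complex.sqrt x = y := by
  have h2 : Complex.sqrt x ^ 2 = y ^ 2 := by rw [sqrt_pow_two, h]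
  rcases sq_eq_sq_iff_eq_or_eq_neg.1 h2 with h3 | h3
  · exact h3
  · have := sqrt_re_nonneg x
    rw [h3, Complex.neg_re] at this
    linarith

theorem sqrt_ne_zero {x : ℂ} (hx : x ≠ 0) : Complex.sqrt x ≠ 0 := by
  intro h
  apply hx
  rw [← sqrt_pow_two x, h]
  simp

theorem norm_sqrt_sq (x : ℂ) : ‖Complex.sqrt x‖ ^ 2 = ‖x‖ := by
  rw [← norm_pow, sqrt_pow_two]

theorem norm_sqrt_le (x : ℂ) : ‖Complex.sqrt x‖ ≤ 1 + ‖x‖ := by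
  rw [← norm_sqrt_sq x]
  nlinarith [sq_nonneg (‖Complex.sqrt x‖ - 1)]

theorem continuousAt_sqrt {x : ℂ} (hx : 0 ≤ x.re ∨ x.im ≠ 0) :
    ContinuousAt Complex.sqrt x := by
  have h := Complex.continuousAt_cpow_const_of_re_pos (w := (2⁻¹ : ℂ)) hx (by norm_num)
  exact h

theorem differentiableAt_sqrt {x : ℂ} (hx : x ∈ Complex.slitPlane) :
    DifferentiableAt ℂ Complex.sqrt x := by
  unfold Complex.sqrt
  exact (hasStrictDerivAt_id x).hasDerivAt.differentiableAt.cpow_const hx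

theorem measurable_sqrt : Measurable Complex.sqrt := by
  unfold Complex.sqrt
  fun_prop

theorem sqrt_inv {x : ℂ} (hx : x ∈ Complex.slitPlane) :
    Complex.sqrt x⁻¹ = (Complex.sqrt x)⁻¹ := by
  apply sqrt_eq_of_sq_eq
  · rw [inv_pow, sqrt_pow_two]
  · rw [Complex.inv_re]
    exact div_pos (sqrt_re_pos hx)
      (Complex.normSq_pos.2 (sqrt_ne_zero (Complex.slitPlane_ne_zero hx)))

theorem sqrt_ofReal_mul {r : ℝ} (hr : 0 < r) {x : ℂ} (hx : x ∈ Complex.slitPlane) :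
    Complex.sqrt (r * x) = (√r : ℝ) * Complex.sqrt x := by
  apply sqrt_eq_of_sq_eq
  · rw [mul_pow, sqrt_pow_two, ← Complex.ofReal_pow, Real.sq_sqrt hr.le]
  · rw [Complex.re_ofReal_mul]
    exact mul_pos (Real.sqrt_pos.2 hr) (sqrt_re_pos hx)

theorem sqrt_neg_of_im_pos {x : ℂ} (hx : 0 < x.im) :
    Complex.sqrt (-x) = -Complex.I * Complex.sqrt x := by
  apply sqrt_eq_of_sq_eq
  · rw [mul_pow, sqrt_pow_two]
    simp
  · simpa using sqrt_im_pos hx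

/-- If `κ` lies in the open upper and `p` in the closed lower half plane, the principal square
root of `κ p` factors through the square roots of `κ` and `-p`. -/
theorem sqrt_mul_of_im {κ p : ℂ} (hκ : 0 < κ.im) (hp : p.im ≤ 0) :
    Complex.sqrt (κ * p) = Complex.sqrt κ * (-Complex.I * Complex.sqrt (-p)) := by
  rcases eq_or_ne p 0 with rfl | hp0
  · simp [Complex.sqrt]
  apply sqrt_eq_of_sq_eq
  · rw [mul_pow, mul_pow, sqrt_pow_two, sqrt_pow_two]
    simp
  · have h1 := sqrt_im_pos hκ
    have h2 : 0 < (Complex.sqrt κ).re := sqrt_re_pos (Or.inr hκ.ne')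
    have h3 := sqrt_re_nonneg (-p)
    have h4 : 0 ≤ (Complex.sqrt (-p)).im := sqrt_im_nonneg (by simpa using hp)
    have h5 := sqrt_ne_zero (neg_ne_zero.2 hp0)
    simp only [Complex.mul_re, Complex.mul_im, Complex.neg_re, Complex.neg_im, Complex.I_re,
      Complex.I_im]
    rcases h3.lt_or_eq with h | h
    · nlinarith [mul_pos h1 h, mul_nonneg h2.le h4]
    · rcases h4.lt_or_eq with h' | h'
      · nlinarith [mul_pos h2 h', mul_nonneg h1.le h3]
      · exact absurd (Complex.ext h.symm h'.symm) h5

theorem sqrt_mul_sub_im_pos {κ p : ℂ} (hκ : 0 < κ.im) (hp : p.im ≤ 0) :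
    (Complex.sqrt (κ * (p - 1))).im < (Complex.sqrt (κ * p)).im := by
  rw [sqrt_mul_of_im hκ hp, sqrt_mul_of_im (p := p - 1) hκ (by simpa using hp)]
  have h1 := sqrt_im_pos hκ
  have h2 : 0 < (Complex.sqrt κ).re := sqrt_re_pos (Or.inr hκ.ne')
  set k := Complex.sqrt κ
  have hx1 := sqrt_re_nonneg (-p)
  have hx2 : 0 ≤ (Complex.sqrt (-p)).im := sqrt_im_nonneg (by simpa using hp)
  have hy1 := sqrt_re_nonneg (-(p - 1))
  have hy2 : 0 ≤ (Complex.sqrt (-(p - 1))).im := sqrt_im_nonneg (by simpa using hp)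
  have hxy : Complex.sqrt (-(p - 1)) ^ 2 - Complex.sqrt (-p) ^ 2 = 1 := by
    rw [sqrt_pow_two, sqrt_pow_two]
    ring
  set x := Complex.sqrt (-p)
  set y := Complex.sqrt (-(p - 1))
  have hs : (y - x) * (x + y) = 1 := by rw [← hxy]; ring
  have hn : 0 < Complex.normSq (x + y) := by
    apply Complex.normSq_pos.2
    intro h
    rw [h] at hs
    simp at hs
  have hd : y - x = (x + y)⁻¹ := eq_inv_of_mul_eq_one_left hs
  have hre : (y - x).re * Complex.normSq (x + y) = (x + y).re := by
    rw [hd, Complex.inv_re]; field_simp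
  have him : (y - x).im * Complex.normSq (x + y) = -(x + y).im := by
    rw [hd, Complex.inv_im]; field_simp
  have hre' : 0 ≤ (y - x).re := by
    by_contra! h
    have := mul_neg_of_neg_of_pos h hn
    rw [hre, Complex.add_re] at this
    linarith
  have him' : (y - x).im ≤ 0 := by
    by_contra! h
    have := mul_pos h hn
    rw [him, Complex.add_im] at this
    linarith
  have hne : y - x ≠ 0 := by
    intro h
    rw [h] at hs
    simp at hs
  have key : 0 < k.re * (y - x).re - k.im * (y - x).im := by
    rcases hre'.lt_or_eq with h | h
    · nlinarith [mul_pos h2 h, mul_nonneg h1.le (neg_nonneg.2 him')]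
    · rcases him'.lt_or_eq with h' | h'
      · nlinarith [mul_pos h1 (neg_pos.2 h')]
      · exact absurd (Complex.ext h.symm h') hne
  simp only [Complex.mul_re, Complex.mul_im, Complex.neg_re, Complex.neg_im, Complex.I_re,
      Complex.I_im]
  rw [Complex.sub_re, Complex.sub_im] at key
  nlinarith

/-! ### The arcsine weight -/

/-- The (unnormalized) density of the arcsine law on `(0, 1)`. -/
noncomputable def arcsineWeight (s : ℝ) : ℝ := (√(s * (1 - s)))⁻¹

theorem arcsineWeight_nonneg (s : ℝ) : 0 ≤ arcsineWeight s := by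
  unfold arcsineWeight
  positivity

theorem arcsineWeight_pos {s : ℝ} (hs : s ∈ Set.Ioo (0 : ℝ) 1) : 0 < arcsineWeight s := by
  unfold arcsineWeight
  have : 0 < s * (1 - s) := mul_pos hs.1 (by linarith [hs.2])
  positivity

theorem arcsineWeight_sq {s : ℝ} (hs : s ∈ Set.Ioo (0 : ℝ) 1) :
    arcsineWeight s ^ 2 = (s * (1 - s))⁻¹ := by
  have : 0 < s * (1 - s) := mul_pos hs.1 (by linarith [hs.2])
  rw [arcsineWeight, inv_pow, Real.sq_sqrt this.le]

theorem measurable_arcsineWeight : Measurable arcsineWeight := by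
  unfold arcsineWeight
  fun_prop

theorem continuousOn_arcsineWeight : ContinuousOn arcsineWeight (Set.Ioo 0 1) := by
  intro s hs
  have : 0 < s * (1 - s) := mul_pos hs.1 (by linarith [hs.2])
  have h : √(s * (1 - s)) ≠ 0 := (Real.sqrt_pos.2 this).ne'
  have hc : ContinuousAt (fun s : ℝ => √(s * (1 - s))) s := by fun_prop
  exact (hc.inv₀ h).continuousWithinAt

theorem intervalIntegrable_arcsineWeight :
    IntervalIntegrable arcsineWeight volume 0 1 := by
  have h := (Complex.betaIntegral_convergent (u := 2⁻¹) (v := 2⁻¹) (by norm_num)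
    (by norm_num)).norm
  rw [intervalIntegrable_iff_integrableOn_Ioo_of_le zero_le_one] at h ⊢
  refine h.congr_fun (fun s hs => ?_) measurableSet_Ioo
  have h1 : 0 < s := hs.1
  have h2 : 0 < 1 - s := by linarith [hs.2]
  have e : (1 : ℂ) - s = ((1 - s : ℝ) : ℂ) := by push_cast; rfl
  have e2 : ((2⁻¹ : ℂ) - 1).re = -(1/2) := by norm_num
  simp only [norm_mul]
  rw [e, Complex.norm_cpow_eq_rpow_re_of_pos h1, Complex.norm_cpow_eq_rpow_re_of_pos h2, e2,
    arcsineWeight, Real.sqrt_mul h1.le, mul_inv, Real.rpow_neg h1.le, Real.rpow_neg h2.le,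
    Real.sqrt_eq_rpow, Real.sqrt_eq_rpow]

/-! ### Oriented areas and segments -/

/-- The oriented area of the parallelogram spanned by two complex numbers. -/
def wedge (x y : ℂ) : ℝ := x.re * y.im - x.im * y.re

theorem im_div_eq_wedge (x y : ℂ) : (y / x).im = wedge x y / Complex.normSq x := by
  rw [Complex.div_im, wedge]
  ring

theorem im_div_pos {x y : ℂ} (h : 0 < wedge x y) : 0 < (y / x).im := by
  rw [im_div_eq_wedge]
  refine div_pos h (Complex.normSq_pos.2 ?_)
  rintro rfl
  simp [wedge] at h

theorem im_div_nonpos {x y : ℂ} (h : wedge x y ≤ 0) : (y / x).im ≤ 0 := by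
  rw [im_div_eq_wedge]
  exact div_nonpos_of_nonpos_of_nonneg h (Complex.normSq_nonneg x)

theorem im_div_neg {x y : ℂ} (h : wedge x y < 0) : (y / x).im < 0 := by
  rw [im_div_eq_wedge]
  refine div_neg_of_neg_of_pos h (Complex.normSq_pos.2 ?_)
  rintro rfl
  simp [wedge] at h

theorem wedge_comm (x y : ℂ) : wedge y x = -wedge x y := by
  unfold wedge
  ring

theorem wedge_ofReal_mul_right (x y : ℂ) (r : ℝ) : wedge x (r * y) = r * wedge x y := by
  simp only [wedge, Complex.re_ofReal_mul, Complex.im_ofReal_mul]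
  ring

theorem abs_wedge_le (x y : ℂ) : |wedge x y| ≤ ‖x‖ * ‖y‖ := by
  have h : wedge x y = (starRingEnd ℂ x * y).im := by
    simp [wedge, Complex.mul_im]
    ring
  rw [h, ← Complex.norm_conj x, ← norm_mul]
  exact Complex.abs_im_le_norm _

/-- The affine parametrization of the segment from `B` to `C`. -/
noncomputable def seg (B C : ℂ) (s : ℝ) : ℂ := B + (s : ℂ) * (C - B)

theorem continuous_seg (B C : ℂ) : Continuous (seg B C) := by
  unfold seg
  fun_prop

theorem wedge_seg_sub (B C x : ℂ) (s : ℝ) :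
    wedge (C - B) (seg B C s - x) = -wedge (C - B) (x - B) := by
  simp [wedge, seg]
  ring

theorem wedge_rotate (A B C : ℂ) : wedge (C - B) (A - B) = wedge (B - A) (C - A) := by
  simp [wedge]
  ring

theorem wedge_seg_sub_apex (A B C : ℂ) (s : ℝ) :
    wedge (C - B) (seg B C s - A) = -wedge (B - A) (C - A) := by
  rw [wedge_seg_sub, wedge_rotate]

theorem seg_ne_apex {A B C : ℂ} (hW : wedge (B - A) (C - A) ≠ 0) (s : ℝ) :
    seg B C s - A ≠ 0 := by
  intro h
  have := wedge_seg_sub_apex A B C s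
  rw [h] at this
  apply hW
  simp [wedge] at this ⊢
  linarith

theorem norm_seg_sub_apex_ge (A B C : ℂ) (s : ℝ) :
    |wedge (B - A) (C - A)| ≤ ‖C - B‖ * ‖seg B C s - A‖ := by
  rw [← abs_neg, ← wedge_seg_sub_apex A B C s]
  exact abs_wedge_le _ _

theorem norm_ratio_le {A B C : ℂ} (hW : wedge (B - A) (C - A) ≠ 0) (b : ℂ) {s : ℝ}
    (hs : s ∈ Set.Icc (0 : ℝ) 1) :
    ‖(seg B C s - b) / (seg B C s - A)‖ ≤
      (‖B‖ + ‖C - B‖ + ‖b‖) * (‖C - B‖ / |wedge (B - A) (C - A)|) := by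
  have h0 : 0 < |wedge (B - A) (C - A)| := abs_pos.2 hW
  have h1 := norm_pos_iff.2 (seg_ne_apex hW s)
  have h2 := norm_seg_sub_apex_ge A B C s
  have h3 : ‖seg B C s - b‖ ≤ ‖B‖ + ‖C - B‖ + ‖b‖ := by
    refine (norm_sub_le _ _).trans ?_
    gcongr
    unfold seg
    refine (norm_add_le _ _).trans ?_
    gcongr
    rw [norm_mul, Complex.norm_real, Real.norm_eq_abs, abs_of_nonneg hs.1]
    exact mul_le_of_le_one_left (norm_nonneg _) hs.2
  rw [norm_div, div_eq_mul_inv]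
  gcongr
  rw [inv_le_iff_one_le_mul₀ h1, div_mul_eq_mul_div, le_div_iff₀ h0]
  linarith

/-! ### The period integral of an edge -/

/-- The integral over the edge `BC` of the principal square root of `(z - b) / (z - A)` against
the arcsine law. -/
noncomputable def period (A B C b : ℂ) : ℂ :=
  ∫ s in (0 : ℝ)..1,
    Complex.sqrt ((seg B C s - b) / (seg B C s - A)) * (arcsineWeight s : ℂ)

theorem measurable_period_integrand (A B C b : ℂ) :
    Measurable fun s : ℝ =>
      Complex.sqrt ((seg B C s - b) / (seg B C s - A)) * (arcsineWeight s : ℂ) := by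
  have h1 := (continuous_seg B C).measurable
  have h2 := measurable_arcsineWeight
  exact (measurable_sqrt.comp ((h1.sub_const b).div (h1.sub_const A))).mul
    (Complex.measurable_ofReal.comp h2)

theorem norm_period_integrand_le {A B C : ℂ} (hW : wedge (B - A) (C - A) ≠ 0) {b : ℂ} {R : ℝ}
    (hR : ‖b‖ ≤ R) {s : ℝ} (hs : s ∈ Set.Icc (0 : ℝ) 1) :
    ‖Complex.sqrt ((seg B C s - b) / (seg B C s - A)) * (arcsineWeight s : ℂ)‖ ≤
      (1 + (‖B‖ + ‖C - B‖ + R) * (‖C - B‖ / |wedge (B - A) (C - A)|)) * arcsineWeight s := by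
  rw [norm_mul, Complex.norm_real, Real.norm_eq_abs, abs_of_nonneg (arcsineWeight_nonneg s)]
  refine mul_le_mul_of_nonneg_right ?_ (arcsineWeight_nonneg s)
  refine (norm_sqrt_le _).trans ?_
  gcongr
  refine (norm_ratio_le hW b hs).trans ?_
  gcongr

theorem intervalIntegrable_period {A B C : ℂ} (hW : wedge (B - A) (C - A) ≠ 0) (b : ℂ) :
    IntervalIntegrable (fun s : ℝ =>
      Complex.sqrt ((seg B C s - b) / (seg B C s - A)) * (arcsineWeight s : ℂ)) volume 0 1 := by
  refine (intervalIntegrable_arcsineWeight.const_mul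
    (1 + (‖B‖ + ‖C - B‖ + ‖b‖) * (‖C - B‖ / |wedge (B - A) (C - A)|))).mono_fun'
    (measurable_period_integrand A B C b).aestronglyMeasurable ?_
  filter_upwards [ae_restrict_mem measurableSet_uIoc] with s hs
  rw [Set.uIoc_of_le zero_le_one] at hs
  exact norm_period_integrand_le hW le_rfl ⟨hs.1.le, hs.2⟩

theorem im_intervalIntegral {f : ℝ → ℂ} {a b : ℝ} (hf : IntervalIntegrable f volume a b) :
    (∫ s in a..b, f s).im = ∫ s in a..b, (f s).im :=
  (Complex.imCLM.intervalIntegral_comp_comm hf).symm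

theorem intervalIntegrable_im {f : ℝ → ℂ} {a b : ℝ} (hf : IntervalIntegrable f volume a b) :
    IntervalIntegrable (fun s => (f s).im) volume a b :=
  ⟨hf.1.im, hf.2.im⟩

theorem intervalIntegral_im_pos {f : ℝ → ℂ} (hf : IntervalIntegrable f volume 0 1)
    (h : ∀ s ∈ Set.Ioo (0 : ℝ) 1, 0 < (f s).im) : 0 < (∫ s in (0 : ℝ)..1, f s).im := by
  rw [im_intervalIntegral hf]
  exact intervalIntegral.intervalIntegral_pos_of_pos_on (intervalIntegrable_im hf) h zero_lt_one

theorem period_im_pos {A B C b : ℂ} (hW : wedge (B - A) (C - A) ≠ 0)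
    (h : ∀ s ∈ Set.Ioo (0 : ℝ) 1, 0 < wedge (seg B C s - A) (seg B C s - b)) :
    0 < (period A B C b).im := by
  refine intervalIntegral_im_pos (intervalIntegrable_period hW b) fun s hs => ?_
  rw [Complex.im_mul_ofReal]
  exact mul_pos (sqrt_im_pos (im_div_pos (h s hs))) (arcsineWeight_pos hs)

theorem period_im_neg {A B C b : ℂ} (hW : wedge (B - A) (C - A) ≠ 0)
    (h : ∀ s ∈ Set.Ioo (0 : ℝ) 1, wedge (seg B C s - A) (seg B C s - b) < 0) :
    (period A B C b).im < 0 := by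
  have := intervalIntegral_im_pos (intervalIntegrable_period hW b).neg fun s hs => by
    rw [Pi.neg_apply, Complex.neg_im, Complex.im_mul_ofReal, neg_pos]
    exact mul_neg_of_neg_of_pos (sqrt_im_neg (im_div_neg (h s hs))) (arcsineWeight_pos hs)
  simp only [Pi.neg_apply, intervalIntegral.integral_neg, Complex.neg_im, neg_pos] at this
  exact this

/-- Moving `b` by `δ` strictly decreases the imaginary part of the period of an edge lying below
the line through `b` in direction `δ`, provided the opposite vertex lies above the edge. -/
theorem period_im_lt {A B C b δ : ℂ} (hW : wedge (B - A) (C - A) ≠ 0)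
    (hb : ∀ s ∈ Set.Ioo (0 : ℝ) 1, wedge δ (seg B C s - b) ≤ 0)
    (hA : ∀ s ∈ Set.Ioo (0 : ℝ) 1, wedge δ (seg B C s - A) < 0) :
    (period A B C (b + δ)).im < (period A B C b).im := by
  have hi := intervalIntegrable_period hW b
  have hi' := intervalIntegrable_period hW (b + δ)
  have := intervalIntegral_im_pos (hi.sub hi') fun s hs => by
    have hδ : δ ≠ 0 := by
      rintro rfl
      have := hA s hs
      simp [wedge] at this
    have hz := seg_ne_apex hW s
    have hκ : 0 < (δ / (seg B C s - A)).im := by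
      apply im_div_pos
      rw [wedge_comm]
      linarith [hA s hs]
    have hp := im_div_nonpos (hb s hs)
    have key := sqrt_mul_sub_im_pos hκ hp
    have e1 : δ / (seg B C s - A) * ((seg B C s - b) / δ) =
        (seg B C s - b) / (seg B C s - A) := by
      field_simp
    have e2 : δ / (seg B C s - A) * ((seg B C s - b) / δ - 1) =
        (seg B C s - (b + δ)) / (seg B C s - A) := by
      field_simp
      ring
    rw [e1, e2] at key
    rw [Complex.sub_im, Complex.im_mul_ofReal, Complex.im_mul_ofReal, ← sub_mul]
    exact mul_pos (sub_pos.2 key) (arcsineWeight_pos hs)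
  rw [intervalIntegral.integral_sub hi hi', Complex.sub_im] at this
  exact sub_pos.1 this

theorem ratio_mem_slitPlane {A B C b : ℂ} (hW : 0 < wedge (B - A) (C - A))
    (hb : 0 < wedge (C - B) (b - B)) (s : ℝ) :
    (seg B C s - b) / (seg B C s - A) ∈ Complex.slitPlane := by
  rw [Complex.mem_slitPlane_iff]
  by_contra! h
  obtain ⟨h1, h2⟩ := h
  set u := (seg B C s - b) / (seg B C s - A) with hu
  have e : u = (u.re : ℂ) := Complex.ext rfl (by simpa using h2)
  have e' : seg B C s - b = (u.re : ℂ) * (seg B C s - A) := by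
    rw [← e, hu, div_mul_cancel₀ _ (seg_ne_apex hW.ne' s)]
  have e2 := wedge_seg_sub B C b s
  rw [e', wedge_ofReal_mul_right, wedge_seg_sub_apex] at e2
  nlinarith

theorem ratio_mem_of_nonneg {A B C b : ℂ} (hW : 0 < wedge (B - A) (C - A))
    (hb : 0 ≤ wedge (C - B) (b - B)) (s : ℝ) :
    0 ≤ ((seg B C s - b) / (seg B C s - A)).re ∨ ((seg B C s - b) / (seg B C s - A)).im ≠ 0 := by
  by_contra! h
  obtain ⟨h1, h2⟩ := h
  set u := (seg B C s - b) / (seg B C s - A) with hu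
  have e : u = (u.re : ℂ) := Complex.ext rfl (by simpa using h2)
  have e' : seg B C s - b = (u.re : ℂ) * (seg B C s - A) := by
    rw [← e, hu, div_mul_cancel₀ _ (seg_ne_apex hW.ne' s)]
  have e2 := wedge_seg_sub B C b s
  rw [e', wedge_ofReal_mul_right, wedge_seg_sub_apex] at e2
  nlinarith

theorem continuousOn_period {A B C : ℂ} (hW : 0 < wedge (B - A) (C - A)) :
    ContinuousOn (period A B C) {b | 0 ≤ wedge (C - B) (b - B)} := by
  intro b hb
  refine intervalIntegral.continuousWithinAt_of_dominated_interval
    (bound := fun s => (1 + (‖B‖ + ‖C - B‖ + (‖b‖ + 1)) *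
      (‖C - B‖ / |wedge (B - A) (C - A)|)) * arcsineWeight s)
    (Filter.Eventually.of_forall fun x =>
      (measurable_period_integrand A B C x).aestronglyMeasurable) ?_
    (intervalIntegrable_arcsineWeight.const_mul _) ?_
  · have : ∀ᶠ x in nhds b, ‖x‖ < ‖b‖ + 1 :=
      continuous_norm.continuousAt.eventually (gt_mem_nhds (by linarith))
    filter_upwards [this.filter_mono nhdsWithin_le_nhds] with x hx
    refine Filter.Eventually.of_forall fun s hs => ?_
    rw [Set.uIoc_of_le zero_le_one] at hs
    exact norm_period_integrand_le hW.ne' hx.le ⟨hs.1.le, hs.2⟩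
  · refine Filter.Eventually.of_forall fun s _ => ContinuousAt.continuousWithinAt ?_
    have h1 : ContinuousAt (fun x => (seg B C s - x) / (seg B C s - A)) b := by fun_prop
    have h2 := continuousAt_sqrt (ratio_mem_of_nonneg hW hb s)
    exact (ContinuousAt.comp (f := fun x => (seg B C s - x) / (seg B C s - A)) h2 h1).mul
      continuousAt_const

/-! ### The curves of points with a real period -/

/-- The set of `b` for which a continuous integrable branch of the square root of `(b - z) / Q(z)`
along the edge `BC` has a real period. -/
def realPeriodSet (A B C : ℂ) : Set ℂ :=
  {b : ℂ | ∃ g : ℝ → ℂ, ContinuousOn g (Set.Ioo (0 : ℝ) 1) ∧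
    IntegrableOn g (Set.Ioo (0 : ℝ) 1) ∧
    (∀ s ∈ Set.Ioo (0 : ℝ) 1, g s ^ 2 =
      (b - seg B C s) / ((seg B C s - A) * (seg B C s - B) * (seg B C s - C))) ∧
    ((C - B) * ∫ s in Set.Ioo (0 : ℝ) 1, g s).im = 0}

theorem gammaSet_zero (a : Fin 3 → ℂ) : gammaSet a 0 = realPeriodSet (a 0) (a 1) (a 2) := rfl

theorem gammaSet_one (a : Fin 3 → ℂ) : gammaSet a 1 = realPeriodSet (a 1) (a 2) (a 0) := by
  have e : ∀ z : ℂ, (z - a 0) * (z - a 1) * (z - a 2) = (z - a 1) * (z - a 2) * (z - a 0) :=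
    fun z => by ring
  have h1 : (1 : Fin 3) + 1 = 2 := rfl
  have h2 : (1 : Fin 3) + 2 = 0 := rfl
  simp only [gammaSet, e, h1, h2]
  rfl

theorem gammaSet_two (a : Fin 3 → ℂ) : gammaSet a 2 = realPeriodSet (a 2) (a 0) (a 1) := by
  have e : ∀ z : ℂ, (z - a 0) * (z - a 1) * (z - a 2) = (z - a 2) * (z - a 0) * (z - a 1) :=
    fun z => by ring
  have h1 : (2 : Fin 3) + 1 = 0 := rfl
  have h2 : (2 : Fin 3) + 2 = 1 := rfl
  simp only [gammaSet, e, h1, h2]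
  rfl

theorem exists_eq_zero_of_integral_eq_zero {f : ℝ → ℝ} (hc : ContinuousOn f (Set.Ioo 0 1))
    (hi : IntegrableOn f (Set.Ioo 0 1)) (h0 : ∫ s in Set.Ioo (0 : ℝ) 1, f s = 0) :
    ∃ s ∈ Set.Ioo (0 : ℝ) 1, f s = 0 := by
  by_contra! hne
  have hi' : IntervalIntegrable f volume 0 1 :=
    (intervalIntegrable_iff_integrableOn_Ioo_of_le zero_le_one).2 hi
  have h0' : ∫ s in (0 : ℝ)..1, f s = 0 := by
    rw [intervalIntegral.integral_of_le zero_le_one, integral_Ioc_eq_integral_Ioo, h0]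
  have hsign : (∀ s ∈ Set.Ioo (0 : ℝ) 1, 0 < f s) ∨ (∀ s ∈ Set.Ioo (0 : ℝ) 1, f s < 0) := by
    by_contra! h
    obtain ⟨⟨x, hx, hfx⟩, ⟨y, hy, hfy⟩⟩ := h
    obtain ⟨z, hz, hz0⟩ := isPreconnected_Ioo.intermediate_value hx hy hc ⟨hfx, hfy⟩
    exact hne z hz hz0
  rcases hsign with h | h
  · exact (intervalIntegral.intervalIntegral_pos_of_pos_on hi' h zero_lt_one).ne' h0'
  · have := intervalIntegral.intervalIntegral_pos_of_pos_on hi'.neg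
      (fun s hs => neg_pos.2 (h s hs)) zero_lt_one
    simp only [Pi.neg_apply, intervalIntegral.integral_neg, h0'] at this
    simp at this

theorem sq_branch_eq {A B C b z y : ℂ} {s : ℝ} (hs : s ∈ Set.Ioo (0 : ℝ) 1)
    (hW : wedge (B - A) (C - A) ≠ 0) (hz : z = seg B C s)
    (hy : y ^ 2 = (b - z) / ((z - A) * (z - B) * (z - C))) :
    ((C - B) * y) ^ 2 = (z - b) / (z - A) * (arcsineWeight s : ℂ) ^ 2 := by
  have h1 : (s : ℂ) ≠ 0 := by exact_mod_cast hs.1.ne'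
  have h2 : (1 - s : ℂ) ≠ 0 := by exact_mod_cast (sub_pos.2 hs.2).ne'
  have hBC : C - B ≠ 0 := by
    intro h
    apply hW
    rw [sub_eq_zero.1 h]
    simp [wedge]
    ring
  have h3 : z - A ≠ 0 := hz ▸ seg_ne_apex hW s
  have e1 : z - B = s * (C - B) := by rw [hz, seg]; ring
  have e2 : z - C = -(1 - s) * (C - B) := by rw [hz, seg]; ring
  rw [mul_pow, hy, e1, e2, ← Complex.ofReal_pow, arcsineWeight_sq hs]
  push_cast
  field_simp
  ring

/-- A point with a real period lies on a ray from a point of the open edge through the opposite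
vertex. -/
theorem exists_ray_of_mem_realPeriodSet {A B C b : ℂ} (hW : wedge (B - A) (C - A) ≠ 0)
    (hb : b ∈ realPeriodSet A B C) :
    ∃ s ∈ Set.Ioo (0 : ℝ) 1, ∃ r : ℝ, 0 ≤ r ∧ seg B C s - b = r * (seg B C s - A) := by
  obtain ⟨g, hc, hi, hsq, him⟩ := hb
  have hi' : IntegrableOn (fun s => (C - B) * g s) (Set.Ioo 0 1) := hi.const_mul _
  have him' : ∫ s in Set.Ioo (0 : ℝ) 1, ((C - B) * g s).im = 0 := by
    rw [← integral_const_mul] at him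
    exact (Complex.imCLM.integral_comp_comm hi').trans him
  obtain ⟨s, hs, h0⟩ := exists_eq_zero_of_integral_eq_zero (f := fun s => ((C - B) * g s).im)
    (Complex.continuous_im.comp_continuousOn (continuousOn_const.mul hc)) hi'.im him'
  have hz := seg_ne_apex hW s
  have key := sq_branch_eq hs hW rfl (hsq s hs)
  have hw := arcsineWeight_pos hs
  set y := (C - B) * g s
  have ey : y = (y.re : ℂ) := Complex.ext rfl (by simpa using h0)
  refine ⟨s, hs, y.re ^ 2 / arcsineWeight s ^ 2, by positivity, ?_⟩
  have hw' : (arcsineWeight s : ℂ) ≠ 0 := by exact_mod_cast hw.ne'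
  rw [ey] at key
  push_cast
  rw [key]
  field_simp

theorem integral_Ioo_branch (A B C b : ℂ) :
    ∫ s in Set.Ioo (0 : ℝ) 1,
      Complex.sqrt ((seg B C s - b) / (seg B C s - A)) * (arcsineWeight s : ℂ) =
    period A B C b := by
  rw [period, intervalIntegral.integral_of_le zero_le_one, integral_Ioc_eq_integral_Ioo]

theorem continuousOn_branch {A B C b : ℂ} (hW : 0 < wedge (B - A) (C - A))
    (hb : 0 < wedge (C - B) (b - B)) :
    ContinuousOn (fun s : ℝ =>
      Complex.sqrt ((seg B C s - b) / (seg B C s - A)) * (arcsineWeight s : ℂ))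
      (Set.Ioo 0 1) := by
  refine ContinuousOn.mul (fun s _ => ContinuousAt.continuousWithinAt ?_)
    (Complex.continuous_ofReal.comp_continuousOn continuousOn_arcsineWeight)
  have h1 : ContinuousAt (fun s => (seg B C s - b) / (seg B C s - A)) s :=
    ((continuous_seg B C).continuousAt.sub continuousAt_const).div
      ((continuous_seg B C).continuousAt.sub continuousAt_const) (seg_ne_apex hW.ne' s)
  exact ContinuousAt.comp (f := fun s => (seg B C s - b) / (seg B C s - A))
    (differentiableAt_sqrt (ratio_mem_slitPlane hW hb s)).continuousAt h1

/-- On the side of the edge containing the opposite vertex, the curve is the zero set of the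
imaginary part of the period. -/
theorem mem_realPeriodSet_iff {A B C b : ℂ} (hW : 0 < wedge (B - A) (C - A))
    (hb : 0 < wedge (C - B) (b - B)) :
    b ∈ realPeriodSet A B C ↔ (period A B C b).im = 0 := by
  have hBC : C - B ≠ 0 := by
    intro h
    rw [h] at hb
    simp [wedge] at hb
  have hcont := continuousOn_branch hW hb
  have hint := (intervalIntegrable_iff_integrableOn_Ioo_of_le zero_le_one).1
    (intervalIntegrable_period hW.ne' b)
  constructor
  · rintro ⟨g, hc, hi, hsq, him⟩
    have hne : ∀ {s : ℝ}, s ∈ Set.Ioo (0 : ℝ) 1 →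
        Complex.sqrt ((seg B C s - b) / (seg B C s - A)) * (arcsineWeight s : ℂ) ≠ 0 := by
      intro s hs
      refine mul_ne_zero (sqrt_ne_zero
        (Complex.slitPlane_ne_zero (ratio_mem_slitPlane hW hb s))) ?_
      exact_mod_cast (arcsineWeight_pos hs).ne'
    have hbr := isPreconnected_Ioo.eq_or_eq_neg_of_sq_eq
      (f := fun s => (C - B) * g s) (continuousOn_const.mul hc) hcont
      (fun s hs => by
        simp only [Pi.pow_apply]
        rw [sq_branch_eq hs hW.ne' rfl (hsq s hs), mul_pow, sqrt_pow_two]) hne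
    rw [← integral_const_mul] at him
    rcases hbr with h | h
    · rwa [setIntegral_congr_fun measurableSet_Ioo h, integral_Ioo_branch] at him
    · rw [setIntegral_congr_fun measurableSet_Ioo h] at him
      simp only [Pi.neg_apply, integral_neg, integral_Ioo_branch, Complex.neg_im,
        neg_eq_zero] at him
      exact him
  · intro him
    refine ⟨fun s => (C - B)⁻¹ * (Complex.sqrt ((seg B C s - b) / (seg B C s - A)) *
      (arcsineWeight s : ℂ)), continuousOn_const.mul hcont, hint.const_mul _, fun s hs => ?_, ?_⟩
    · have h1 : (s : ℂ) ≠ 0 := by exact_mod_cast hs.1.ne'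
      have h2 : (1 - s : ℂ) ≠ 0 := by exact_mod_cast (sub_pos.2 hs.2).ne'
      have h3 := seg_ne_apex hW.ne' s
      have e1 : seg B C s - B = s * (C - B) := by rw [seg]; ring
      have e2 : seg B C s - C = -((1 - s) * (C - B)) := by rw [seg]; ring
      rw [mul_pow, mul_pow, sqrt_pow_two, ← Complex.ofReal_pow, arcsineWeight_sq hs, e1, e2]
      push_cast
      field_simp
      ring
    · rw [integral_const_mul, integral_Ioo_branch, mul_inv_cancel_left₀ hBC, him]

theorem realPeriodSet_swap (A B C : ℂ) : realPeriodSet A C B = realPeriodSet A B C := by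
  have key : ∀ B C : ℂ, realPeriodSet A B C ⊆ realPeriodSet A C B := by
    rintro B C b ⟨g, hc, hi, hsq, him⟩
    have hmaps : Set.MapsTo (fun s : ℝ => 1 - s) (Set.Ioo 0 1) (Set.Ioo 0 1) :=
      fun s hs => ⟨by linarith [hs.2], by linarith [hs.1]⟩
    have hg : IntervalIntegrable g volume 0 1 :=
      (intervalIntegrable_iff_integrableOn_Ioo_of_le zero_le_one).2 hi
    refine ⟨fun s => g (1 - s), hc.comp (by fun_prop) hmaps, ?_, fun s hs => ?_, ?_⟩
    · have := (hg.comp_sub_left 1).symm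
      simp only [sub_self, sub_zero] at this
      exact (intervalIntegrable_iff_integrableOn_Ioo_of_le zero_le_one).1 this
    · have e : seg B C (1 - s) = seg C B s := by
        simp [seg]
        ring
      rw [hsq _ (hmaps hs), e, mul_right_comm]
    · have h := intervalIntegral.integral_comp_sub_left (a := 0) (b := 1) g 1
      simp only [sub_self, sub_zero] at h
      rw [intervalIntegral.integral_of_le zero_le_one, integral_Ioc_eq_integral_Ioo,
        intervalIntegral.integral_of_le zero_le_one, integral_Ioc_eq_integral_Ioo] at h
      rw [h, ← neg_sub C B, neg_mul, Complex.neg_im, him, neg_zero]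
  exact (key C B).antisymm (key B C)

/-! ### The sum of the three periods -/

/-- The branch at infinity of `ζ ↦ ζ * (ζ / Q ζ) ^ (1/2)` in the coordinate `w = 1 / ζ`. -/
noncomputable def branchAtInfinity (A B C w : ℂ) : ℂ :=
  (Complex.sqrt (1 - A * w) * Complex.sqrt (1 - B * w) * Complex.sqrt (1 - C * w))⁻¹

theorem branchAtInfinity_rotate (A B C w : ℂ) :
    branchAtInfinity B C A w = branchAtInfinity A B C w := by
  unfold branchAtInfinity
  congr 1
  ring

theorem branchAtInfinity_zero (A B C : ℂ) : branchAtInfinity A B C 0 = 1 := by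
  simp [branchAtInfinity]

theorem branchAtInfinity_sq (A B C w : ℂ) :
    branchAtInfinity A B C w ^ 2 = ((1 - A * w) * (1 - B * w) * (1 - C * w))⁻¹ := by
  rw [branchAtInfinity, inv_pow, mul_pow, mul_pow, sqrt_pow_two, sqrt_pow_two, sqrt_pow_two]

/-- The plane cut along the rays from `1 / A`, `1 / B`, `1 / C` to infinity. -/
def cutPlane (A B C : ℂ) : Set ℂ :=
  {w | 1 - A * w ∈ Complex.slitPlane ∧ 1 - B * w ∈ Complex.slitPlane ∧
    1 - C * w ∈ Complex.slitPlane}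

theorem isOpen_cutPlane (A B C : ℂ) : IsOpen (cutPlane A B C) := by
  have h : ∀ X : ℂ, IsOpen {w : ℂ | 1 - X * w ∈ Complex.slitPlane} := fun X =>
    Complex.isOpen_slitPlane.preimage (by fun_prop)
  exact (h A).inter ((h B).inter (h C))

theorem differentiableOn_branchAtInfinity (A B C : ℂ) :
    DifferentiableOn ℂ (branchAtInfinity A B C) (cutPlane A B C) := by
  rintro w ⟨hA, hB, hC⟩
  have h : ∀ X : ℂ, 1 - X * w ∈ Complex.slitPlane →
      DifferentiableAt ℂ (fun w => Complex.sqrt (1 - X * w)) w := fun X hX =>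
    DifferentiableAt.comp w (differentiableAt_sqrt hX) (by fun_prop)
  have hne : ∀ X : ℂ, 1 - X * w ∈ Complex.slitPlane → Complex.sqrt (1 - X * w) ≠ 0 :=
    fun X hX => sqrt_ne_zero (Complex.slitPlane_ne_zero hX)
  exact ((((h A hA).mul (h B hB)).mul (h C hC)).inv
    (mul_ne_zero (mul_ne_zero (hne A hA) (hne B hB)) (hne C hC))).differentiableWithinAt

theorem measurable_branchAtInfinity (A B C : ℂ) : Measurable (branchAtInfinity A B C) := by
  have h : ∀ X : ℂ, Measurable fun w : ℂ => Complex.sqrt (1 - X * w) := fun X =>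
    measurable_sqrt.comp (by fun_prop)
  exact (((h A).mul (h B)).mul (h C)).inv

theorem wedge_seg_left (B C : ℂ) (s : ℝ) : wedge (seg B C s) (C - B) = wedge B C := by
  simp [wedge, seg]
  ring

theorem seg_ne_zero {B C : ℂ} (h : wedge B C ≠ 0) (s : ℝ) : seg B C s ≠ 0 := by
  intro h0
  have := wedge_seg_left B C s
  rw [h0] at this
  apply h
  simpa [wedge] using this.symm

theorem hasDerivAt_seg (B C : ℂ) (s : ℝ) : HasDerivAt (seg B C) (C - B) s := by
  have h : HasDerivAt (fun s : ℝ => (s : ℂ)) 1 s := Complex.ofRealCLM.hasDerivAt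
  have h' := (h.mul_const (C - B)).const_add B
  rw [one_mul] at h'
  exact h'

theorem seg_zero (B C : ℂ) : seg B C 0 = B := by simp [seg]

theorem seg_one (B C : ℂ) : seg B C 1 = C := by simp [seg]

theorem one_sub_mem_slitPlane {X ζ : ℂ} {t : ℝ} (hζ : ζ ≠ 0)
    (h : ∀ r : ℝ, 1 ≤ r → (t : ℂ) * X ≠ r * ζ) :
    1 - X * (t / ζ) ∈ Complex.slitPlane := by
  rw [Complex.mem_slitPlane_iff]
  by_contra! h'
  obtain ⟨h1, h2⟩ := h'
  set u := X * (t / ζ) with hu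
  rw [Complex.sub_re, Complex.one_re] at h1
  rw [Complex.sub_im, Complex.one_im] at h2
  have e : u = (u.re : ℂ) := Complex.ext rfl (by simp; linarith)
  refine h u.re (by linarith) ?_
  rw [← e, hu]
  field_simp

theorem div_seg_mem_cutPlane {A B C : ℂ} (hBC : 0 < wedge B C) (hCA : 0 < wedge C A)
    (hAB : 0 < wedge A B) {t s : ℝ} (ht : t ∈ Set.Icc (0 : ℝ) 1)
    (hts : t < 1 ∨ s ∈ Set.Ioo (0 : ℝ) 1) :
    (t : ℂ) / seg B C s ∈ cutPlane A B C := by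
  have hζ := seg_ne_zero hBC.ne' s
  refine ⟨one_sub_mem_slitPlane hζ fun r hr h => ?_, one_sub_mem_slitPlane hζ fun r hr h => ?_,
    one_sub_mem_slitPlane hζ fun r hr h => ?_⟩
  · have := congrArg (wedge (C - B)) h
    rw [wedge_ofReal_mul_right, wedge_ofReal_mul_right, wedge_comm (seg B C s),
      wedge_seg_left] at this
    have h1 : wedge (C - B) A = wedge C A + wedge A B := by
      simp [wedge]
      ring
    rw [h1] at this
    nlinarith [mul_nonneg ht.1 (add_pos hCA hAB).le]
  · have := congrArg (wedge B) h
    rw [wedge_ofReal_mul_right, wedge_ofReal_mul_right] at this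
    have h1 : wedge B (seg B C s) = s * wedge B C := by
      simp [wedge, seg]
      ring
    have h2 : wedge B B = 0 := by
      simp [wedge]
      ring
    rw [h1, h2, mul_zero, eq_comm, mul_eq_zero, mul_eq_zero] at this
    have hs0 : s = 0 := by
      rcases this with h | h | h
      · linarith
      · exact h
      · exact absurd h hBC.ne'
    rw [hs0, seg_zero] at h
    rw [hs0, seg_zero] at hζ
    have h3 : t = r := by exact_mod_cast mul_right_cancel₀ hζ h
    rcases hts with h4 | h4
    · linarith
    · exact h4.1.ne' hs0
  · have := congrArg (wedge C) h
    rw [wedge_ofReal_mul_right, wedge_ofReal_mul_right] at this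
    have h1 : wedge C (seg B C s) = (s - 1) * wedge B C := by
      simp [wedge, seg]
      ring
    have h2 : wedge C C = 0 := by
      simp [wedge]
      ring
    rw [h1, h2, mul_zero, eq_comm, mul_eq_zero, mul_eq_zero] at this
    have hs0 : s = 1 := by
      rcases this with h | h | h
      · linarith
      · linarith
      · exact absurd h hBC.ne'
    rw [hs0, seg_one] at h
    rw [hs0, seg_one] at hζ
    have h3 : t = r := by exact_mod_cast mul_right_cancel₀ hζ h
    rcases hts with h4 | h4
    · linarith
    · exact h4.2.ne hs0

/-- On an open edge, the branch at infinity differs from the branch defining the period by the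
factor `I`. -/
theorem branchAtInfinity_edge {A B C : ℂ} (hBC : 0 < wedge B C) (hCA : 0 < wedge C A)
    (hAB : 0 < wedge A B) {s : ℝ} (hs : s ∈ Set.Ioo (0 : ℝ) 1) :
    branchAtInfinity A B C (((1 : ℝ) : ℂ) / seg B C s) * ((C - B) / seg B C s) =
      Complex.I * (Complex.sqrt ((seg B C s - 0) / (seg B C s - A)) *
        (arcsineWeight s : ℂ)) := by
  have hζ := seg_ne_zero hBC.ne' s
  have hA := (div_seg_mem_cutPlane hBC hCA hAB (t := 1) ⟨zero_le_one, le_rfl⟩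
    (Or.inr hs)).1
  have hv : 0 < ((C - B) / seg B C s).im := im_div_pos (by rwa [wedge_seg_left])
  have hv0 : (C - B) / seg B C s ≠ 0 := by
    intro h
    rw [h] at hv
    simp at hv
  set v := (C - B) / seg B C s with hvdef
  have e1 : 1 - B * (((1 : ℝ) : ℂ) / seg B C s) = (s : ℝ) * v := by
    rw [hvdef]
    field_simp
    simp [seg]
  have e2 : 1 - C * (((1 : ℝ) : ℂ) / seg B C s) = ((1 - s : ℝ) : ℂ) * -v := by
    rw [hvdef]
    field_simp
    simp [seg]
    ring
  have e3 : (seg B C s - 0) / (seg B C s - A) = (1 - A * (((1 : ℝ) : ℂ) / seg B C s))⁻¹ := by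
    have h : 1 - A * (((1 : ℝ) : ℂ) / seg B C s) = (seg B C s - A) / seg B C s := by
      field_simp
      simp
    rw [h, inv_div, sub_zero]
  have h1s : 0 < 1 - s := by linarith [hs.2]
  have h5 : (√s : ℂ) ≠ 0 := by exact_mod_cast (Real.sqrt_pos.2 hs.1).ne'
  have h6 : (√(1 - s) : ℂ) ≠ 0 := by exact_mod_cast (Real.sqrt_pos.2 h1s).ne'
  have h7 := sqrt_ne_zero (Complex.slitPlane_ne_zero hA)
  have h8 := sqrt_ne_zero hv0
  rw [e3, sqrt_inv hA, branchAtInfinity, e1, e2, sqrt_ofReal_mul hs.1 (Or.inr hv.ne'),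
    sqrt_ofReal_mul h1s (Or.inr (by simpa using hv.ne')), sqrt_neg_of_im_pos hv, arcsineWeight,
    Real.sqrt_mul hs.1.le]
  have h9 := sqrt_pow_two v
  generalize Complex.sqrt v = q at *
  generalize Complex.sqrt (1 - A * (((1 : ℝ) : ℂ) / seg B C s)) = p at *
  rw [← h9]
  push_cast
  field_simp
  simp

theorem norm_branchAtInfinity_edge_le {A B C : ℂ} (hBC : 0 < wedge B C) (hCA : 0 < wedge C A)
    (hAB : 0 < wedge A B) {t s : ℝ} (ht : t ∈ Set.Icc (0 : ℝ) 1) (hs : s ∈ Set.Ioo (0 : ℝ) 1) :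
    ‖branchAtInfinity A B C ((t : ℂ) / seg B C s) * ((C - B) / seg B C s)‖ ≤
      √((‖B‖ + ‖C - B‖) * ‖C - B‖ ^ 3 * ‖B‖ * ‖C‖ / wedge B C ^ 3) * arcsineWeight s := by
  have hζ := seg_ne_zero hBC.ne' s
  have hζ' := norm_pos_iff.2 hζ
  have h1s : 0 < 1 - s := by linarith [hs.2]
  have h0s : 0 < s := hs.1
  have hA : wedge B C ≤ ‖C - B‖ * ‖seg B C s - t * A‖ := by
    refine le_trans ?_ (abs_wedge_le _ _)
    have e : wedge (C - B) (seg B C s - t * A) = -(wedge B C + t * (wedge C A + wedge A B)) := by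
      simp [wedge, seg]
      ring
    rw [e, abs_neg]
    refine le_trans ?_ (le_abs_self _)
    nlinarith [mul_nonneg ht.1 (add_pos hCA hAB).le]
  have hB : s * wedge B C ≤ ‖B‖ * ‖seg B C s - t * B‖ := by
    refine le_trans ?_ (abs_wedge_le _ _)
    have e : wedge B (seg B C s - t * B) = s * wedge B C := by
      simp [wedge, seg]
      ring
    rw [e]
    exact le_abs_self _
  have hC : (1 - s) * wedge B C ≤ ‖C‖ * ‖seg B C s - t * C‖ := by
    refine le_trans ?_ (abs_wedge_le _ _)
    have e : wedge C (seg B C s - t * C) = -((1 - s) * wedge B C) := by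
      simp [wedge, seg]
      ring
    rw [e, abs_neg]
    exact le_abs_self _
  have hR : ‖seg B C s‖ ≤ ‖B‖ + ‖C - B‖ := by
    unfold seg
    refine (norm_add_le _ _).trans ?_
    gcongr
    rw [norm_mul, Complex.norm_real, Real.norm_eq_abs, abs_of_nonneg h0s.le]
    exact mul_le_of_le_one_left (norm_nonneg _) hs.2.le
  have hA0 : 0 < ‖seg B C s - t * A‖ := by
    by_contra! h
    nlinarith [mul_nonneg (norm_nonneg (C - B)) (neg_nonneg.2 h)]
  have hB0 : 0 < ‖seg B C s - t * B‖ := by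
    by_contra! h
    nlinarith [mul_nonneg (norm_nonneg B) (neg_nonneg.2 h), mul_pos h0s hBC]
  have hC0 : 0 < ‖seg B C s - t * C‖ := by
    by_contra! h
    nlinarith [mul_nonneg (norm_nonneg C) (neg_nonneg.2 h), mul_pos h1s hBC]
  have hsq : (branchAtInfinity A B C ((t : ℂ) / seg B C s) * ((C - B) / seg B C s)) ^ 2 =
      (C - B) ^ 2 * seg B C s /
        ((seg B C s - t * A) * (seg B C s - t * B) * (seg B C s - t * C)) := by
    have hA1 := norm_pos_iff.1 hA0
    have hB1 := norm_pos_iff.1 hB0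
    have hC1 := norm_pos_iff.1 hC0
    rw [mul_pow, branchAtInfinity_sq]
    have e : ∀ X : ℂ, 1 - X * ((t : ℂ) / seg B C s) = (seg B C s - t * X) / seg B C s := by
      intro X
      field_simp
    rw [e, e, e]
    field_simp
  have hM : 0 ≤ (‖B‖ + ‖C - B‖) * ‖C - B‖ ^ 3 * ‖B‖ * ‖C‖ / wedge B C ^ 3 := by positivity
  refine (pow_le_pow_iff_left₀ (norm_nonneg _)
    (mul_nonneg (Real.sqrt_nonneg _) (arcsineWeight_nonneg s)) two_ne_zero).1 ?_
  rw [← norm_pow, hsq, norm_div, norm_mul, norm_mul, norm_mul, norm_pow, mul_pow, Real.sq_sqrt hM,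
    arcsineWeight_sq hs, ← div_eq_mul_inv, div_div,
    div_le_div_iff₀ (by positivity) (by positivity)]
  have hprod : wedge B C * (s * wedge B C) * ((1 - s) * wedge B C) ≤
      (‖C - B‖ * ‖seg B C s - t * A‖) * (‖B‖ * ‖seg B C s - t * B‖) *
        (‖C‖ * ‖seg B C s - t * C‖) := by
    gcongr
  calc ‖C - B‖ ^ 2 * ‖seg B C s‖ * (wedge B C ^ 3 * (s * (1 - s)))
      = ‖C - B‖ ^ 2 * ‖seg B C s‖ * (wedge B C * (s * wedge B C) * ((1 - s) * wedge B C)) := by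
        ring
    _ ≤ ‖C - B‖ ^ 2 * (‖B‖ + ‖C - B‖) * ((‖C - B‖ * ‖seg B C s - t * A‖) *
        (‖B‖ * ‖seg B C s - t * B‖) * (‖C‖ * ‖seg B C s - t * C‖)) := by
        gcongr
    _ = _ := by ring

/-- The edge integral over the triangle dilated by the factor `1 / t`. -/
noncomputable def dilatedPeriod (A B C : ℂ) (t : ℝ) : ℂ :=
  ∫ s in (0 : ℝ)..1, branchAtInfinity A B C ((t : ℂ) / seg B C s) * ((C - B) / seg B C s)

theorem tendsto_dilatedPeriod {A B C : ℂ} (hBC : 0 < wedge B C) (hCA : 0 < wedge C A)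
    (hAB : 0 < wedge A B) :
    Filter.Tendsto (dilatedPeriod A B C) (nhdsWithin 1 (Set.Ioo 0 1))
      (nhds (Complex.I * period A B C 0)) := by
  have hlim : ∀ᵐ s : ℝ, s ≠ 1 := by
    simp [ae_iff]
  have e : Complex.I * period A B C 0 = ∫ s in (0 : ℝ)..1,
      branchAtInfinity A B C (((1 : ℝ) : ℂ) / seg B C s) * ((C - B) / seg B C s) := by
    rw [period, ← intervalIntegral.integral_const_mul]
    refine intervalIntegral.integral_congr_ae ?_
    filter_upwards [hlim] with s hs1 hs
    rw [Set.uIoc_of_le zero_le_one] at hs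
    exact (branchAtInfinity_edge hBC hCA hAB ⟨hs.1, lt_of_le_of_ne hs.2 hs1⟩).symm
  rw [e]
  have hmeas : ∀ t : ℝ, Measurable fun s : ℝ =>
      branchAtInfinity A B C ((t : ℂ) / seg B C s) * ((C - B) / seg B C s) := by
    intro t
    have h := (continuous_seg B C).measurable
    exact ((measurable_branchAtInfinity A B C).comp (measurable_const.div h)).mul
      (measurable_const.div h)
  refine intervalIntegral.tendsto_integral_filter_of_dominated_convergence
    (fun s => √((‖B‖ + ‖C - B‖) * ‖C - B‖ ^ 3 * ‖B‖ * ‖C‖ / wedge B C ^ 3) * arcsineWeight s)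
    (Filter.Eventually.of_forall fun t => (hmeas t).aestronglyMeasurable) ?_
    (intervalIntegrable_arcsineWeight.const_mul _) ?_
  · filter_upwards [self_mem_nhdsWithin] with t ht
    filter_upwards [hlim] with s hs1 hs
    rw [Set.uIoc_of_le zero_le_one] at hs
    exact norm_branchAtInfinity_edge_le hBC hCA hAB ⟨ht.1.le, ht.2.le⟩
      ⟨hs.1, lt_of_le_of_ne hs.2 hs1⟩
  · filter_upwards [hlim] with s hs1 hs
    rw [Set.uIoc_of_le zero_le_one] at hs
    have hmem := div_seg_mem_cutPlane hBC hCA hAB (t := 1) ⟨zero_le_one, le_rfl⟩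
      (Or.inr ⟨hs.1, lt_of_le_of_ne hs.2 hs1⟩)
    have hc : ContinuousAt (branchAtInfinity A B C) (((1 : ℝ) : ℂ) / seg B C s) :=
      ((differentiableOn_branchAtInfinity A B C).differentiableAt
        ((isOpen_cutPlane A B C).mem_nhds hmem)).continuousAt
    have hd : ContinuousAt (fun t : ℝ => (t : ℂ) / seg B C s) 1 := by fun_prop
    have := (ContinuousAt.comp (f := fun t : ℝ => (t : ℂ) / seg B C s) hc hd).mul
      (continuousAt_const (y := (C - B) / seg B C s))
    exact this.tendsto.mono_left nhdsWithin_le_nhds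

theorem re_integral_seg_log {B C : ℂ} (hBC : 0 < wedge B C) :
    (∫ s in (0 : ℝ)..1, (C - B) / seg B C s).re = Real.log ‖C‖ - Real.log ‖B‖ := by
  have hB : B ≠ 0 := by
    rintro rfl
    simp [wedge] at hBC
  have hC : C ≠ 0 := by
    rintro rfl
    simp [wedge] at hBC
  have hζ := seg_ne_zero hBC.ne'
  have hd : ∀ s ∈ Set.uIcc (0 : ℝ) 1, HasDerivAt (fun s : ℝ => Complex.log (seg B C s / B))
      ((C - B) / seg B C s) s := by
    intro s hs
    rw [Set.uIcc_of_le zero_le_one] at hs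
    have hmem : seg B C s / B ∈ Complex.slitPlane := by
      rw [Complex.mem_slitPlane_iff]
      rcases hs.1.eq_or_lt with h | h
      · left
        rw [← h, seg_zero, div_self hB]
        simp
      · right
        apply ne_of_gt
        apply im_div_pos
        have e : wedge B (seg B C s) = s * wedge B C := by
          simp [wedge, seg]
          ring
        rw [e]
        positivity
    have h := ((hasDerivAt_seg B C s).div_const B).clog_real hmem
    convert! h using 1
    have := hζ s
    field_simp
  have hint : IntervalIntegrable (fun s : ℝ => (C - B) / seg B C s) volume 0 1 :=
    (continuous_const.div (continuous_seg B C) hζ).intervalIntegrable 0 1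
  rw [intervalIntegral.integral_eq_sub_of_hasDerivAt hd hint, seg_zero, seg_one, div_self hB]
  simp only [Complex.log_one, sub_zero]
  rw [Complex.log_re, norm_div, Real.log_div (norm_ne_zero_iff.2 hC) (norm_ne_zero_iff.2 hB)]

/-- The radial integral `∫ (G (t / X) - G 0) / t dt` over `[0, t₁]`. -/
noncomputable def radialIntegral (G : ℂ → ℂ) (t₁ : ℝ) (X : ℂ) : ℂ :=
  ∫ t in (0 : ℝ)..t₁, dslope (fun t : ℝ => G ((t : ℂ) / X)) 0 t

theorem hasDerivAt_radial {G : ℂ → ℂ} {X : ℂ} {t : ℝ}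
    (hG : DifferentiableAt ℂ G ((t : ℂ) / X)) :
    HasDerivAt (fun t : ℝ => G ((t : ℂ) / X)) (deriv G ((t : ℂ) / X) * (1 / X)) t := by
  have h : HasDerivAt (fun t : ℝ => (t : ℂ)) 1 t := Complex.ofRealCLM.hasDerivAt
  exact hG.hasDerivAt.comp t (h.div_const X)

theorem intervalIntegrable_dslope_radial {G : ℂ → ℂ} {t₁ : ℝ} (ht₁ : 0 ≤ t₁) {X : ℂ}
    (hG : ∀ t ∈ Set.Icc 0 t₁, DifferentiableAt ℂ G ((t : ℂ) / X)) :
    IntervalIntegrable (dslope (fun t : ℝ => G ((t : ℂ) / X)) 0) volume 0 t₁ := by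
  apply ContinuousOn.intervalIntegrable
  rw [Set.uIcc_of_le ht₁]
  intro t ht
  apply ContinuousAt.continuousWithinAt
  have hd := (hasDerivAt_radial (hG t ht)).differentiableAt
  rcases eq_or_ne t 0 with rfl | h0
  · exact continuousAt_dslope_same.2 hd
  · exact (continuousAt_dslope_of_ne h0).2 hd.continuousAt

/-- The edge integral of `G (t₁ / ζ) - G 0` against `dζ / ζ` is a difference of radial
integrals. -/
theorem integral_edge_eq_radialIntegral_sub {G : ℂ → ℂ} {U : Set ℂ} (hU : IsOpen U)
    (hG : DifferentiableOn ℂ G U) {B C : ℂ} (hBC : wedge B C ≠ 0) {t₁ : ℝ} (ht₁ : 0 ≤ t₁)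
    (hmem : ∀ t ∈ Set.Icc 0 t₁, ∀ s ∈ Set.Icc (0 : ℝ) 1, (t : ℂ) / seg B C s ∈ U) :
    ∫ s in (0 : ℝ)..1, (G ((t₁ : ℂ) / seg B C s) - G 0) * ((C - B) / seg B C s) =
      radialIntegral G t₁ B - radialIntegral G t₁ C := by
  have hζ := seg_ne_zero hBC
  have hdiff : ∀ t ∈ Set.Icc 0 t₁, ∀ s ∈ Set.Icc (0 : ℝ) 1,
      DifferentiableAt ℂ G ((t : ℂ) / seg B C s) := fun t ht s hs =>
    hG.differentiableAt (hU.mem_nhds (hmem t ht s hs))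
  have hdc : ContinuousOn (deriv G) U := (hG.deriv hU).continuousOn
  have hseg := continuous_seg B C
  have hcont : ContinuousOn (Function.uncurry fun t s : ℝ =>
      deriv G ((t : ℂ) / seg B C s) * (1 / seg B C s) * ((C - B) / seg B C s))
      (Set.Icc 0 t₁ ×ˢ Set.Icc (0 : ℝ) 1) := by
    have hq : Continuous fun p : ℝ × ℝ => (p.1 : ℂ) / seg B C p.2 :=
      (Complex.continuous_ofReal.comp continuous_fst).div (hseg.comp continuous_snd)
        fun p => hζ p.2
    have h1 : Continuous fun p : ℝ × ℝ => 1 / seg B C p.2 :=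
      continuous_const.div (hseg.comp continuous_snd) fun p => hζ p.2
    have h2 : Continuous fun p : ℝ × ℝ => (C - B) / seg B C p.2 :=
      continuous_const.div (hseg.comp continuous_snd) fun p => hζ p.2
    exact ((hdc.comp hq.continuousOn fun p hp => hmem p.1 hp.1 p.2 hp.2).mul
      h1.continuousOn).mul h2.continuousOn
  have hint := hcont.integrableOn_compact (μ := volume) (isCompact_Icc.prod isCompact_Icc)
  have hswap := intervalIntegral_intervalIntegral_swap (a := 0) (b := t₁) (c := 0) (d := 1)
    (hint.mono_set (by
      rw [Set.uIoc_of_le ht₁, Set.uIoc_of_le zero_le_one]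
      exact Set.prod_mono Set.Ioc_subset_Icc_self Set.Ioc_subset_Icc_self))
  have hleft : ∀ s ∈ Set.uIcc (0 : ℝ) 1,
      (G ((t₁ : ℂ) / seg B C s) - G 0) * ((C - B) / seg B C s) = ∫ t in (0 : ℝ)..t₁,
        deriv G ((t : ℂ) / seg B C s) * (1 / seg B C s) * ((C - B) / seg B C s) := by
    intro s hs
    rw [Set.uIcc_of_le zero_le_one] at hs
    rw [intervalIntegral.integral_mul_const, intervalIntegral.integral_eq_sub_of_hasDerivAt
      (f := fun t : ℝ => G ((t : ℂ) / seg B C s))]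
    · simp
    · intro t ht
      rw [Set.uIcc_of_le ht₁] at ht
      exact hasDerivAt_radial (hdiff t ht s hs)
    · apply ContinuousOn.intervalIntegrable
      rw [Set.uIcc_of_le ht₁]
      refine (hdc.comp (f := fun t : ℝ => (t : ℂ) / seg B C s)
        (Complex.continuous_ofReal.div_const _).continuousOn
        fun t ht => hmem t ht s hs).mul continuousOn_const
  have hright : ∀ t ∈ Set.uIoc 0 t₁,
      ∫ s in (0 : ℝ)..1,
        deriv G ((t : ℂ) / seg B C s) * (1 / seg B C s) * ((C - B) / seg B C s) =
      dslope (fun t : ℝ => G ((t : ℂ) / B)) 0 t - dslope (fun t : ℝ => G ((t : ℂ) / C)) 0 t := by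
    intro t ht
    rw [Set.uIoc_of_le ht₁] at ht
    have ht0 : t ≠ 0 := ht.1.ne'
    have ht0' : (t : ℂ) ≠ 0 := by exact_mod_cast ht0
    have ht' : t ∈ Set.Icc 0 t₁ := ⟨ht.1.le, ht.2⟩
    rw [dslope_of_ne _ ht0, dslope_of_ne _ ht0, slope_def_module, slope_def_module,
      intervalIntegral.integral_eq_sub_of_hasDerivAt
        (f := fun s : ℝ => -(G ((t : ℂ) / seg B C s) / t))]
    · rw [seg_zero, seg_one]
      simp only [Complex.real_smul]
      push_cast
      simp only [zero_div, sub_zero]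
      field_simp
      ring
    · intro s hs
      rw [Set.uIcc_of_le zero_le_one] at hs
      have h1 : HasDerivAt (fun s : ℝ => (t : ℂ) / seg B C s)
          ((0 * seg B C s - t * (C - B)) / seg B C s ^ 2) s :=
        (hasDerivAt_const s (t : ℂ)).div (hasDerivAt_seg B C s) (hζ s)
      have h2 := (((hdiff t ht' s hs).hasDerivAt.comp s h1).div_const (t : ℂ)).neg
      convert! h2 using 1
      have := hζ s
      field_simp
      ring
    · apply ContinuousOn.intervalIntegrable
      rw [Set.uIcc_of_le zero_le_one]
      exact hcont.comp (f := fun s : ℝ => (t, s)) (by fun_prop) fun s hs => ⟨ht', hs⟩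
  rw [intervalIntegral.integral_congr hleft, ← hswap,
    intervalIntegral.integral_congr_ae (Filter.Eventually.of_forall hright),
    intervalIntegral.integral_sub, radialIntegral, radialIntegral]
  · refine intervalIntegrable_dslope_radial ht₁ fun t ht => ?_
    simpa [seg_zero] using hdiff t ht 0 ⟨le_rfl, zero_le_one⟩
  · refine intervalIntegrable_dslope_radial ht₁ fun t ht => ?_
    simpa [seg_one] using hdiff t ht 1 ⟨zero_le_one, le_rfl⟩

theorem re_dilatedPeriod {A B C : ℂ} (hBC : 0 < wedge B C) (hCA : 0 < wedge C A)
    (hAB : 0 < wedge A B) {t : ℝ} (ht : t ∈ Set.Ioo (0 : ℝ) 1) :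
    (dilatedPeriod A B C t).re = (Real.log ‖C‖ - Real.log ‖B‖) +
      ((radialIntegral (branchAtInfinity A B C) t B).re -
        (radialIntegral (branchAtInfinity A B C) t C).re) := by
  have hζ := seg_ne_zero hBC.ne'
  have hseg := continuous_seg B C
  have hmem : ∀ x ∈ Set.Icc 0 t, ∀ s ∈ Set.Icc (0 : ℝ) 1,
      (x : ℂ) / seg B C s ∈ cutPlane A B C := fun x hx s _ =>
    div_seg_mem_cutPlane hBC hCA hAB ⟨hx.1, hx.2.trans ht.2.le⟩
      (Or.inl (lt_of_le_of_lt hx.2 ht.2))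
  have key := integral_edge_eq_radialIntegral_sub (isOpen_cutPlane A B C)
    (differentiableOn_branchAtInfinity A B C) hBC.ne' ht.1.le hmem
  have h2 : Continuous fun s : ℝ => (C - B) / seg B C s := continuous_const.div hseg hζ
  have h1 : IntervalIntegrable (fun s : ℝ =>
      branchAtInfinity A B C ((t : ℂ) / seg B C s) * ((C - B) / seg B C s)) volume 0 1 := by
    apply ContinuousOn.intervalIntegrable
    rw [Set.uIcc_of_le zero_le_one]
    exact ((differentiableOn_branchAtInfinity A B C).continuousOn.comp
      (f := fun s : ℝ => (t : ℂ) / seg B C s) (continuous_const.div hseg hζ).continuousOn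
      fun s hs => hmem t ⟨ht.1.le, le_rfl⟩ s hs).mul h2.continuousOn
  simp only [branchAtInfinity_zero, sub_mul, one_mul] at key
  rw [intervalIntegral.integral_sub h1 (h2.intervalIntegrable 0 1)] at key
  have := congrArg Complex.re key
  rw [Complex.sub_re, Complex.sub_re, re_integral_seg_log hBC] at this
  rw [dilatedPeriod]
  linarith

/-- The imaginary parts of the three periods at an interior point of a triangle add up to zero,
here for the origin. -/
theorem period_im_sum_zero {A B C : ℂ} (hBC : 0 < wedge B C) (hCA : 0 < wedge C A)
    (hAB : 0 < wedge A B) :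
    (period A B C 0).im + (period B C A 0).im + (period C A B 0).im = 0 := by
  have hlim := ((tendsto_dilatedPeriod hBC hCA hAB).add
    (tendsto_dilatedPeriod hCA hAB hBC)).add (tendsto_dilatedPeriod hAB hBC hCA)
  have hlim' := (Complex.continuous_re.tendsto _).comp hlim
  have hconst : (fun _ : ℝ => (0 : ℝ)) =ᶠ[nhdsWithin 1 (Set.Ioo 0 1)] (Complex.re ∘ fun t =>
      dilatedPeriod A B C t + dilatedPeriod B C A t + dilatedPeriod C A B t) := by
    filter_upwards [self_mem_nhdsWithin] with t ht
    have e1 : branchAtInfinity B C A = branchAtInfinity A B C :=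
      funext (branchAtInfinity_rotate A B C)
    have e2 : branchAtInfinity C A B = branchAtInfinity A B C :=
      (funext (branchAtInfinity_rotate B C A)).trans e1
    have h1 := re_dilatedPeriod hBC hCA hAB ht
    have h2 := re_dilatedPeriod hCA hAB hBC ht
    have h3 := re_dilatedPeriod hAB hBC hCA ht
    rw [e1] at h2
    rw [e2] at h3
    simp only [Function.comp_apply, Complex.add_re]
    linarith
  have : (nhdsWithin (1 : ℝ) (Set.Ioo 0 1)).NeBot := by
    rw [← mem_closure_iff_nhdsWithin_neBot, closure_Ioo zero_ne_one]
    exact ⟨zero_le_one, le_rfl⟩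
  have := tendsto_nhds_unique (tendsto_const_nhds.congr' hconst) hlim'
  simp at this
  linarith

theorem period_translate (A B C b : ℂ) :
    period (A - b) (B - b) (C - b) 0 = period A B C b := by
  have e : ∀ s, seg (B - b) (C - b) s = seg B C s - b := fun s => by
    simp [seg]
    ring
  simp only [period, e, sub_zero, sub_sub_sub_cancel_right]

theorem period_im_sum {A B C b : ℂ} (hBC : 0 < wedge (B - b) (C - b))
    (hCA : 0 < wedge (C - b) (A - b)) (hAB : 0 < wedge (A - b) (B - b)) :
    (period A B C b).im + (period B C A b).im + (period C A B b).im = 0 := by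
  have := period_im_sum_zero hBC hCA hAB
  simpa only [period_translate] using this

/-! ### Points inside a positively oriented triangle -/

/-- The point `b` lies strictly to the left of each of the edges `BC`, `CA`, `AB`. -/
structure Inside (A B C b : ℂ) : Prop where
  edgeBC : 0 < wedge (B - b) (C - b)
  edgeCA : 0 < wedge (C - b) (A - b)
  edgeAB : 0 < wedge (A - b) (B - b)

theorem Inside.rotate {A B C b : ℂ} (h : Inside A B C b) : Inside B C A b :=
  ⟨h.edgeCA, h.edgeAB, h.edgeBC⟩

theorem wedge_edge (B C b : ℂ) : wedge (C - B) (b - B) = wedge (B - b) (C - b) := by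
  simp [wedge]
  ring

theorem wedge_sum (A B C b : ℂ) :
    wedge (B - b) (C - b) + wedge (C - b) (A - b) + wedge (A - b) (B - b) =
      wedge (B - A) (C - A) := by
  simp [wedge]
  ring

theorem Inside.wedge_pos {A B C b : ℂ} (h : Inside A B C b) : 0 < wedge (B - A) (C - A) := by
  rw [← wedge_sum A B C b]
  linarith [h.edgeBC, h.edgeCA, h.edgeAB]

theorem Inside.mem_realPeriodSet_iff {A B C b : ℂ} (h : Inside A B C b) :
    b ∈ realPeriodSet A B C ↔ (period A B C b).im = 0 :=
  PeriodTriangle.mem_realPeriodSet_iff h.wedge_pos (by rw [wedge_edge]; exact h.edgeBC)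

theorem wedge_of_mem_realPeriodSet {A B C b : ℂ} (hW : 0 < wedge (B - A) (C - A))
    (hb : b ∈ realPeriodSet A B C) :
    0 ≤ wedge (B - b) (C - b) ∧ ∃ s ∈ Set.Ioo (0 : ℝ) 1,
      s * wedge (C - b) (A - b) = (1 - s) * wedge (A - b) (B - b) := by
  obtain ⟨s, hs, r, hr, h⟩ := exists_ray_of_mem_realPeriodSet hW.ne' hb
  have hb' : b = seg B C s - r * (seg B C s - A) := by rw [← h]; ring
  have h1 : wedge (B - b) (C - b) = r * wedge (B - A) (C - A) := by
    simp [hb', wedge, seg]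
    ring
  refine ⟨h1 ▸ mul_nonneg hr hW.le, s, hs, ?_⟩
  simp [hb', wedge, seg]
  ring

theorem inside_of_mem_inter {A B C b : ℂ} (hW : 0 < wedge (B - A) (C - A))
    (hA : b ∈ realPeriodSet A B C) (hB : b ∈ realPeriodSet B C A) : Inside A B C b := by
  obtain ⟨hu, s, ⟨hs0, hs1⟩, h⟩ := wedge_of_mem_realPeriodSet hW hA
  obtain ⟨hv, s', ⟨hs0', hs1'⟩, h'⟩ :=
    wedge_of_mem_realPeriodSet (by rwa [wedge_rotate]) hB
  have hsum := wedge_sum A B C b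
  set u := wedge (B - b) (C - b)
  set v := wedge (C - b) (A - b)
  set w := wedge (A - b) (B - b)
  have hw : 0 < w := by
    by_contra! hw
    have h1 : s * v ≤ 0 := by
      rw [h]
      exact mul_nonpos_of_nonneg_of_nonpos (by linarith) hw
    have h2 : (1 - s') * u ≤ 0 := by
      rw [← h']
      exact mul_nonpos_of_nonneg_of_nonpos hs0'.le hw
    have h3 := nonpos_of_mul_nonpos_right h1 hs0
    have h4 := nonpos_of_mul_nonpos_right h2 (by linarith : 0 < 1 - s')
    linarith
  refine ⟨?_, ?_, hw⟩
  · refine pos_of_mul_pos_right (a := 1 - s') ?_ (by linarith)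
    rw [← h']
    positivity
  · refine pos_of_mul_pos_right (a := s) ?_ hs0.le
    rw [h]
    exact mul_pos (by linarith) hw

/-! ### Uniqueness -/

theorem wedge_seg_right (δ B C x : ℂ) (s : ℝ) :
    wedge δ (seg B C s - x) = (1 - s) * wedge δ (B - x) + s * wedge δ (C - x) := by
  simp [wedge, seg]
  ring

theorem Inside.period_im_lt {A B C b δ : ℂ} (h : Inside A B C b) (hδ : δ ≠ 0)
    (hB : wedge δ (B - b) ≤ 0) (hC : wedge δ (C - b) ≤ 0) :
    (period A B C (b + δ)).im < (period A B C b).im := by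
  have hrel : wedge (B - b) (C - b) * wedge δ (A - b) =
      -(wedge (C - b) (A - b) * wedge δ (B - b) + wedge (A - b) (B - b) * wedge δ (C - b)) := by
    simp [wedge]
    ring
  have hne : ¬(wedge δ (B - b) = 0 ∧ wedge δ (C - b) = 0) := by
    rintro ⟨h1, h2⟩
    have hu := h.edgeBC.ne'
    apply hδ
    apply Complex.ext
    · refine (mul_eq_zero.1 ?_).resolve_right hu
      have : δ.re * wedge (B - b) (C - b) =
          wedge δ (C - b) * (B - b).re - wedge δ (B - b) * (C - b).re := by
        simp [wedge]
        ring
      rw [this, h1, h2]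
      simp
    · refine (mul_eq_zero.1 ?_).resolve_right hu
      have : δ.im * wedge (B - b) (C - b) =
          wedge δ (C - b) * (B - b).im - wedge δ (B - b) * (C - b).im := by
        simp [wedge]
        ring
      rw [this, h1, h2]
      simp
  have hA : 0 < wedge δ (A - b) := by
    refine pos_of_mul_pos_right (a := wedge (B - b) (C - b)) ?_ h.edgeBC.le
    rw [hrel]
    rcases hB.lt_or_eq with hB' | hB'
    · nlinarith [mul_neg_of_pos_of_neg h.edgeCA hB',
        mul_nonpos_of_nonneg_of_nonpos h.edgeAB.le hC]
    · have hC' := hC.lt_of_ne fun hC' => hne ⟨hB', hC'⟩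
      nlinarith [mul_neg_of_pos_of_neg h.edgeAB hC',
        mul_nonpos_of_nonneg_of_nonpos h.edgeCA.le hB]
  have hb : ∀ s ∈ Set.Ioo (0 : ℝ) 1, wedge δ (seg B C s - b) ≤ 0 := fun s hs => by
    rw [wedge_seg_right]
    have h1 := mul_nonpos_of_nonneg_of_nonpos (sub_nonneg.2 hs.2.le) hB
    have h2 := mul_nonpos_of_nonneg_of_nonpos hs.1.le hC
    linarith
  refine PeriodTriangle.period_im_lt h.wedge_pos.ne' hb fun s hs => ?_
  have e : wedge δ (seg B C s - A) = wedge δ (seg B C s - b) - wedge δ (A - b) := by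
    simp [wedge]
    ring
  linarith [hb s hs]

/-- Two inner points at which all three periods are real coincide. -/
theorem eq_of_period_im_eq_zero {A B C b b' : ℂ} (h : Inside A B C b) (h' : Inside A B C b')
    (hA : (period A B C b).im = 0) (hB : (period B C A b).im = 0) (hC : (period C A B b).im = 0)
    (hA' : (period A B C b').im = 0) (hB' : (period B C A b').im = 0)
    (hC' : (period C A B b').im = 0) : b = b' := by
  by_contra hne
  have hδ : b' - b ≠ 0 := sub_ne_zero.2 (Ne.symm hne)
  have hδ' : b - b' ≠ 0 := sub_ne_zero.2 hne
  have key : ∀ {X Y Z c c' : ℂ}, Inside X Y Z c → c' - c ≠ 0 → (period X Y Z c).im = 0 →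
      (period X Y Z c').im = 0 → wedge (c' - c) (Y - c) ≤ 0 → wedge (c' - c) (Z - c) ≤ 0 →
      False := fun hI hd h1 h2 h3 h4 => by
    have := hI.period_im_lt hd h3 h4
    rw [add_sub_cancel, h1, h2] at this
    exact lt_irrefl _ this
  have hneg : ∀ X : ℂ, wedge (b - b') (X - b') = -wedge (b' - b) (X - b) := fun X => by
    simp [wedge]
    ring
  rcases le_total (wedge (b' - b) (A - b)) 0 with a1 | a1 <;>
  rcases le_total (wedge (b' - b) (B - b)) 0 with a2 | a2 <;>
  rcases le_total (wedge (b' - b) (C - b)) 0 with a3 | a3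
  · exact key h hδ hA hA' a2 a3
  · exact key h.rotate.rotate hδ hC hC' a1 a2
  · exact key h.rotate hδ hB hB' a3 a1
  · exact key h' hδ' hA' hA (by rw [hneg]; linarith) (by rw [hneg]; linarith)
  · exact key h hδ hA hA' a2 a3
  · exact key h'.rotate hδ' hB' hB (by rw [hneg]; linarith) (by rw [hneg]; linarith)
  · exact key h'.rotate.rotate hδ' hC' hC (by rw [hneg]; linarith) (by rw [hneg]; linarith)
  · exact key h' hδ' hA' hA (by rw [hneg]; linarith) (by rw [hneg]; linarith)

/-! ### Existence -/

theorem continuousOn_root_of_strictAntiOn {F : ℝ → ℝ → ℝ} {τ : ℝ → ℝ} {S : Set ℝ}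
    (hF : ∀ t ∈ Set.Icc (0 : ℝ) 1, ContinuousOn (fun h => F h t) S)
    (hanti : ∀ h ∈ S, StrictAntiOn (F h) (Set.Icc 0 1))
    (hτ : ∀ h ∈ S, τ h ∈ Set.Ioo (0 : ℝ) 1) (hroot : ∀ h ∈ S, F h (τ h) = 0) :
    ContinuousOn τ S := by
  intro h hh
  have hmem := fun x hx => Set.Ioo_subset_Icc_self (hτ x hx)
  refine tendsto_order.2 ⟨fun c hc => ?_, fun c hc => ?_⟩
  · have hx : max c 0 ∈ Set.Icc (0 : ℝ) 1 :=
      ⟨le_max_right _ _, max_le (hc.le.trans (hτ h hh).2.le) zero_le_one⟩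
    have hpos : 0 < F h (max c 0) := by
      have := hanti h hh hx (hmem h hh) (max_lt hc (hτ h hh).1)
      rwa [hroot h hh] at this
    filter_upwards [(hF _ hx h hh).eventually (lt_mem_nhds hpos), self_mem_nhdsWithin]
      with y hy hyS
    by_contra! hle
    have := (hanti y hyS).antitoneOn (hmem y hyS) hx (hle.trans (le_max_left _ _))
    rw [hroot y hyS] at this
    exact absurd hy this.not_gt
  · have hx : min c 1 ∈ Set.Icc (0 : ℝ) 1 :=
      ⟨le_min ((hτ h hh).1.le.trans hc.le) zero_le_one, min_le_right _ _⟩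
    have hneg : F h (min c 1) < 0 := by
      have := hanti h hh (hmem h hh) hx (lt_min hc (hτ h hh).2)
      rwa [hroot h hh] at this
    filter_upwards [(hF _ hx h hh).eventually (gt_mem_nhds hneg), self_mem_nhdsWithin]
      with y hy hyS
    by_contra! hle
    have := (hanti y hyS).antitoneOn hx (hmem y hyS) ((min_le_left _ _).trans hle)
    rw [hroot y hyS] at this
    exact absurd hy this.not_gt

theorem wedge_cevian_BC (A B C : ℂ) (h t : ℝ) :
    wedge (B - seg A (seg B C t) h) (C - seg A (seg B C t) h) =
      (1 - h) * wedge (B - A) (C - A) := by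
  simp [wedge, seg]
  ring

theorem wedge_cevian_CA (A B C : ℂ) (h t : ℝ) :
    wedge (C - seg A (seg B C t) h) (A - seg A (seg B C t) h) =
      h * (1 - t) * wedge (B - A) (C - A) := by
  simp [wedge, seg]
  ring

theorem wedge_cevian_AB (A B C : ℂ) (h t : ℝ) :
    wedge (A - seg A (seg B C t) h) (B - seg A (seg B C t) h) =
      h * t * wedge (B - A) (C - A) := by
  simp [wedge, seg]
  ring

theorem period_im_pos_of_mem_left {A B C : ℂ} (hW : 0 < wedge (B - A) (C - A)) {h : ℝ}
    (hh : 0 < h) : 0 < (period A B C (seg A B h)).im := by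
  refine period_im_pos hW.ne' fun s hs => ?_
  have : wedge (seg B C s - A) (seg B C s - seg A B h) = h * s * wedge (B - A) (C - A) := by
    simp [wedge, seg]
    ring
  rw [this]
  exact mul_pos (mul_pos hh hs.1) hW

theorem period_im_neg_of_mem_right {A B C : ℂ} (hW : 0 < wedge (B - A) (C - A)) {h : ℝ}
    (hh : 0 < h) : (period A B C (seg A C h)).im < 0 := by
  refine period_im_neg hW.ne' fun s hs => ?_
  have : wedge (seg B C s - A) (seg B C s - seg A C h) =
      -(h * (1 - s) * wedge (B - A) (C - A)) := by
    simp [wedge, seg]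
    ring
  rw [this, neg_lt_zero]
  exact mul_pos (mul_pos hh (by linarith [hs.2])) hW

theorem strictAntiOn_period_im {A B C : ℂ} (hW : 0 < wedge (B - A) (C - A)) {h : ℝ}
    (hh : h ∈ Set.Ioc (0 : ℝ) 1) :
    StrictAntiOn (fun t => (period A B C (seg A (seg B C t) h)).im) (Set.Icc 0 1) := by
  intro t _ t' _ htt
  have hd : 0 < h * (t' - t) := mul_pos hh.1 (by linarith)
  have e : seg A (seg B C t') h = seg A (seg B C t) h + ((h * (t' - t) : ℝ) : ℂ) * (C - B) := by
    simp only [seg]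
    push_cast
    ring
  have hmul : ∀ x : ℂ, wedge (((h * (t' - t) : ℝ) : ℂ) * (C - B)) x =
      h * (t' - t) * wedge (C - B) x := fun x => by
    rw [← neg_inj, ← wedge_comm, wedge_ofReal_mul_right, wedge_comm]
    ring
  simp only [e]
  refine period_im_lt hW.ne' (fun s hs => ?_) fun s hs => ?_
  · rw [hmul, wedge_seg_sub, wedge_edge, wedge_cevian_BC]
    nlinarith [mul_nonneg hd.le (mul_nonneg (sub_nonneg.2 hh.2) hW.le)]
  · rw [hmul, wedge_seg_sub_apex]
    nlinarith [mul_pos hd hW]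

theorem exists_inside_period_im_eq_zero {A B C : ℂ} (hW : 0 < wedge (B - A) (C - A)) :
    ∃ b, Inside A B C b ∧ (period A B C b).im = 0 ∧ (period B C A b).im = 0 := by
  have hW' : 0 < wedge (C - B) (A - B) := by rwa [wedge_rotate]
  set F : ℝ → ℝ → ℝ := fun h t => (period A B C (seg A (seg B C t) h)).im with hF
  have hFh : ∀ t, ContinuousOn (fun h => F h t) (Set.Ioc 0 1) := fun t => by
    refine Complex.continuous_im.comp_continuousOn ((continuousOn_period hW).comp
      (continuous_seg _ _).continuousOn fun h hh => ?_)
    rw [Set.mem_ofPred_eq, wedge_edge, wedge_cevian_BC]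
    exact mul_nonneg (sub_nonneg.2 hh.2) hW.le
  have hFt : ∀ h ∈ Set.Ioc (0 : ℝ) 1, ContinuousOn (F h) (Set.Icc 0 1) := fun h hh => by
    refine Complex.continuous_im.comp_continuousOn ((continuousOn_period hW).comp ?_ fun t _ => ?_)
    · unfold seg
      fun_prop
    · rw [Set.mem_ofPred_eq, wedge_edge, wedge_cevian_BC]
      exact mul_nonneg (sub_nonneg.2 hh.2) hW.le
  have hex : ∀ h : ℝ, ∃ t ∈ Set.Ioo (0 : ℝ) 1, h ∈ Set.Ioc (0 : ℝ) 1 → F h t = 0 := by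
    intro h
    by_cases hh : h ∈ Set.Ioc (0 : ℝ) 1
    · have h0 : 0 < F h 0 := by
        simpa only [hF, seg_zero] using period_im_pos_of_mem_left hW hh.1
      have h1 : F h 1 < 0 := by
        simpa only [hF, seg_one] using period_im_neg_of_mem_right hW hh.1
      obtain ⟨t, ht, hroot⟩ := intermediate_value_Ioo' zero_le_one (hFt h hh) ⟨h1, h0⟩
      exact ⟨t, ht, fun _ => hroot⟩
    · exact ⟨1 / 2, by norm_num, fun h => absurd h hh⟩
  choose τ hτ hroot using hex
  have hτc : ContinuousOn τ (Set.Ioc 0 1) :=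
    continuousOn_root_of_strictAntiOn (F := F) (fun t _ => hFh t)
      (fun h hh => strictAntiOn_period_im hW hh) (fun h _ => hτ h) hroot
  have hpath : ContinuousOn (fun h : ℝ => seg A (seg B C (τ h)) h) (Set.Icc 0 1) := by
    intro h hh
    rcases hh.1.eq_or_lt with rfl | hpos
    · have hz : Filter.Tendsto (fun h : ℝ => h * ((‖B - A‖ + ‖C - B‖ : ℝ)))
          (nhdsWithin 0 (Set.Icc 0 1)) (nhds 0) := by
        have : Continuous fun h : ℝ => h * ((‖B - A‖ + ‖C - B‖ : ℝ)) := by fun_prop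
        simpa using (this.tendsto 0).mono_left nhdsWithin_le_nhds
      refine tendsto_iff_norm_sub_tendsto_zero.2 (squeeze_zero' (by simp) ?_ hz)
      filter_upwards [self_mem_nhdsWithin] with y hy
      have e : seg A (seg B C (τ y)) y - seg A (seg B C (τ 0)) 0 =
          (y : ℂ) * ((B - A) + (τ y : ℂ) * (C - B)) := by
        simp only [seg, Complex.ofReal_zero]
        ring
      rw [e, norm_mul, Complex.norm_real, Real.norm_of_nonneg hy.1]
      refine mul_le_mul_of_nonneg_left ((norm_add_le _ _).trans ?_) hy.1
      rw [norm_mul, Complex.norm_real, Real.norm_of_nonneg (hτ y).1.le]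
      gcongr
      exact mul_le_of_le_one_left (norm_nonneg _) (hτ y).2.le
    · have hτh : ContinuousWithinAt τ (Set.Icc 0 1) h := by
        refine (hτc h ⟨hpos, hh.2⟩).mono_of_mem_nhdsWithin ?_
        filter_upwards [self_mem_nhdsWithin, mem_nhdsWithin_of_mem_nhds (lt_mem_nhds hpos)]
          with y hy hy' using ⟨hy', hy.2⟩
      unfold seg
      fun_prop
  have hG : ContinuousOn (fun h : ℝ => (period B C A (seg A (seg B C (τ h)) h)).im)
      (Set.Icc 0 1) := by
    refine Complex.continuous_im.comp_continuousOn ((continuousOn_period hW').comp hpath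
      fun h hh => ?_)
    rw [Set.mem_ofPred_eq, wedge_edge, wedge_cevian_CA]
    exact mul_nonneg (mul_nonneg hh.1 (sub_nonneg.2 (hτ h).2.le)) hW.le
  have hG0 : (period B C A (seg A (seg B C (τ 0)) 0)).im < 0 := by
    simpa only [seg_zero, seg_one] using period_im_neg_of_mem_right hW' one_pos
  have hG1 : 0 < (period B C A (seg A (seg B C (τ 1)) 1)).im := by
    simpa only [seg_one] using period_im_pos_of_mem_left hW' (hτ 1).1
  obtain ⟨h, hh, hz⟩ := intermediate_value_Ioo zero_le_one hG ⟨hG0, hG1⟩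
  refine ⟨seg A (seg B C (τ h)) h, ⟨?_, ?_, ?_⟩, hroot h ⟨hh.1, hh.2.le⟩, hz⟩
  · rw [wedge_cevian_BC]
    exact mul_pos (sub_pos.2 hh.2) hW
  · rw [wedge_cevian_CA]
    exact mul_pos (mul_pos hh.1 (sub_pos.2 (hτ h).2)) hW
  · rw [wedge_cevian_AB]
    exact mul_pos (mul_pos hh.1 (hτ h).1) hW

theorem exists_unique_common_point {A B C : ℂ} (hW : 0 < wedge (B - A) (C - A)) :
    ∃ b₀, Inside A B C b₀ ∧ b₀ ∈ realPeriodSet A B C ∧ b₀ ∈ realPeriodSet B C A ∧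
      b₀ ∈ realPeriodSet C A B ∧
      realPeriodSet A B C ∩ realPeriodSet B C A ⊆ {b₀} ∧
      realPeriodSet B C A ∩ realPeriodSet C A B ⊆ {b₀} ∧
      realPeriodSet C A B ∩ realPeriodSet A B C ⊆ {b₀} := by
  have hW' : 0 < wedge (C - B) (A - B) := by rwa [wedge_rotate]
  have hW'' : 0 < wedge (A - C) (B - C) := by rwa [wedge_rotate]
  obtain ⟨b₀, hI, hA, hB⟩ := exists_inside_period_im_eq_zero hW
  have hsum := fun {b : ℂ} (h : Inside A B C b) => period_im_sum h.edgeBC h.edgeCA h.edgeAB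
  have hC : (period C A B b₀).im = 0 := by linarith [hsum hI]
  refine ⟨b₀, hI, hI.mem_realPeriodSet_iff.2 hA, hI.rotate.mem_realPeriodSet_iff.2 hB,
    hI.rotate.rotate.mem_realPeriodSet_iff.2 hC, ?_, ?_, ?_⟩
  · rintro b ⟨h1, h2⟩
    have h := inside_of_mem_inter hW h1 h2
    rw [h.mem_realPeriodSet_iff] at h1
    rw [h.rotate.mem_realPeriodSet_iff] at h2
    exact eq_of_period_im_eq_zero h hI h1 h2 (by linarith [hsum h]) hA hB hC
  · rintro b ⟨h1, h2⟩
    have h := (inside_of_mem_inter hW' h1 h2).rotate.rotate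
    rw [h.rotate.mem_realPeriodSet_iff] at h1
    rw [h.rotate.rotate.mem_realPeriodSet_iff] at h2
    exact eq_of_period_im_eq_zero h hI (by linarith [hsum h]) h1 h2 hA hB hC
  · rintro b ⟨h1, h2⟩
    have h := (inside_of_mem_inter hW'' h1 h2).rotate
    rw [h.rotate.rotate.mem_realPeriodSet_iff] at h1
    rw [h.mem_realPeriodSet_iff] at h2
    exact eq_of_period_im_eq_zero h hI h2 (by linarith [hsum h]) h1 hA hB hC

/-! ### Convex hull and collinearity -/

theorem isOpen_inside (A B C : ℂ) : IsOpen {b | Inside A B C b} := by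
  have hc : ∀ X Y : ℂ, IsOpen {b | 0 < wedge (X - b) (Y - b)} := fun X Y => by
    refine isOpen_lt continuous_const ?_
    unfold wedge
    fun_prop
  convert ((hc B C).inter (hc C A)).inter (hc A B) using 1
  ext b
  exact ⟨fun h => ⟨⟨h.edgeBC, h.edgeCA⟩, h.edgeAB⟩, fun h => ⟨h.1.1, h.1.2, h.2⟩⟩

theorem Inside.mem_convexHull {A B C b : ℂ} (h : Inside A B C b) {S : Set ℂ} (hA : A ∈ S)
    (hB : B ∈ S) (hC : C ∈ S) : b ∈ convexHull ℝ S := by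
  have hW := h.wedge_pos
  have hsum := wedge_sum A B C b
  have hcomb : b = ∑ i, (![wedge (B - b) (C - b), wedge (C - b) (A - b), wedge (A - b) (B - b)] i /
      wedge (B - A) (C - A)) • ![A, B, C] i := by
    simp only [Fin.sum_univ_three, Matrix.cons_val]
    apply Complex.ext
    · simp only [Complex.add_re, Complex.smul_re, smul_eq_mul]
      field_simp
      simp [wedge]
      ring
    · simp only [Complex.add_im, Complex.smul_im, smul_eq_mul]
      field_simp
      simp [wedge]
      ring
  rw [hcomb]
  refine (convex_convexHull ℝ S).sum_mem (fun i _ => ?_) ?_ fun i _ => subset_convexHull ℝ S ?_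
  · refine div_nonneg ?_ hW.le
    fin_cases i
    exacts [h.edgeBC.le, h.edgeCA.le, h.edgeAB.le]
  · simp only [Fin.sum_univ_three, Matrix.cons_val]
    rw [← add_div, ← add_div, hsum, div_self hW.ne']
  · fin_cases i
    exacts [hA, hB, hC]

theorem Inside.mem_interior_convexHull {A B C b : ℂ} (h : Inside A B C b) {S : Set ℂ}
    (hA : A ∈ S) (hB : B ∈ S) (hC : C ∈ S) : b ∈ interior (convexHull ℝ S) :=
  interior_maximal (fun _ hb => hb.mem_convexHull hA hB hC) (isOpen_inside A B C) h

theorem wedge_ne_zero_of_not_collinear {a : Fin 3 → ℂ} (hcol : ¬Collinear ℝ (Set.range a)) :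
    wedge (a 1 - a 0) (a 2 - a 0) ≠ 0 := by
  intro h
  apply hcol
  rw [collinear_iff_of_mem (Set.mem_range_self 0)]
  by_cases h1 : a 1 - a 0 = 0
  · refine ⟨a 2 - a 0, ?_⟩
    rintro _ ⟨i, rfl⟩
    fin_cases i
    · exact ⟨0, by simp⟩
    · exact ⟨0, by simpa using sub_eq_zero.1 h1⟩
    · exact ⟨1, by simp⟩
  · refine ⟨a 1 - a 0, ?_⟩
    rintro _ ⟨i, rfl⟩
    fin_cases i
    · exact ⟨0, by simp⟩
    · exact ⟨1, by simp⟩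
    · refine ⟨((a 2 - a 0) / (a 1 - a 0)).re, ?_⟩
      have him : ((a 2 - a 0) / (a 1 - a 0)).im = 0 := by rw [im_div_eq_wedge, h, zero_div]
      have hre : ((((a 2 - a 0) / (a 1 - a 0)).re : ℝ) : ℂ) = (a 2 - a 0) / (a 1 - a 0) :=
        Complex.ext (by simp) (by simp [him])
      simp only [Complex.real_smul, hre, div_mul_cancel₀ _ h1, vadd_eq_add]
      simp

end PeriodTriangle

/-- Lemma 9: for non-collinear `a₁, a₂, a₃`, the three curves `γ₁, γ₂, γ₃` meet at
exactly one point `b₀`; any two of them meet only at `b₀`, and `b₀` lies in the interior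
of the triangle spanned by `a₁, a₂, a₃`. -/
theorem stmt12 (a : Fin 3 → ℂ) (hcol : ¬ Collinear ℝ (Set.range a)) :
    ∃ b₀ : ℂ, (∀ i : Fin 3, b₀ ∈ gammaSet a i) ∧
      (∀ i i' : Fin 3, i ≠ i' → gammaSet a i ∩ gammaSet a i' = {b₀}) ∧
      b₀ ∈ interior (convexHull ℝ (Set.range a)) := by
  have hmem := fun i => Set.mem_range_self (f := a) i
  obtain ⟨b₀, hint, h0, h1, h2, h01, h12, h20⟩ :
      ∃ b₀ ∈ interior (convexHull ℝ (Set.range a)),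
        b₀ ∈ gammaSet a 0 ∧ b₀ ∈ gammaSet a 1 ∧ b₀ ∈ gammaSet a 2 ∧
        gammaSet a 0 ∩ gammaSet a 1 ⊆ {b₀} ∧ gammaSet a 1 ∩ gammaSet a 2 ⊆ {b₀} ∧
        gammaSet a 2 ∩ gammaSet a 0 ⊆ {b₀} := by
    rw [PeriodTriangle.gammaSet_zero, PeriodTriangle.gammaSet_one, PeriodTriangle.gammaSet_two]
    rcases (PeriodTriangle.wedge_ne_zero_of_not_collinear hcol).lt_or_gt with hW | hW
    · rw [← neg_pos, ← PeriodTriangle.wedge_comm] at hW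
      obtain ⟨b₀, hI, h0, h2, h1, h02, h21, h10⟩ :=
        PeriodTriangle.exists_unique_common_point hW
      rw [PeriodTriangle.realPeriodSet_swap] at h0 h1 h2
      rw [PeriodTriangle.realPeriodSet_swap (a 0) (a 1) (a 2),
        PeriodTriangle.realPeriodSet_swap (a 2) (a 0) (a 1)] at h02
      rw [PeriodTriangle.realPeriodSet_swap (a 2) (a 0) (a 1),
        PeriodTriangle.realPeriodSet_swap (a 1) (a 2) (a 0)] at h21
      rw [PeriodTriangle.realPeriodSet_swap (a 1) (a 2) (a 0),
        PeriodTriangle.realPeriodSet_swap (a 0) (a 1) (a 2)] at h10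
      rw [Set.inter_comm] at h02 h21 h10
      exact ⟨b₀, hI.mem_interior_convexHull (hmem 0) (hmem 2) (hmem 1), h0, h1, h2, h10, h21, h02⟩
    · obtain ⟨b₀, hI, h⟩ := PeriodTriangle.exists_unique_common_point hW
      exact ⟨b₀, hI.mem_interior_convexHull (hmem 0) (hmem 1) (hmem 2), h⟩
  have hall : ∀ i, b₀ ∈ gammaSet a i := fun i => by
    fin_cases i
    exacts [h0, h1, h2]
  refine ⟨b₀, hall, fun i i' hii => Set.Subset.antisymm ?_ ?_, hint⟩
  · fin_cases i <;> fin_cases i' <;> first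
      | exact absurd rfl hii
      | assumption
      | (rw [Set.inter_comm]; assumption)
  · rintro _ rfl
    exact ⟨hall i, hall i'⟩
end

section
/- Let α < β < γ be real numbers, Q(z) = (z−α)(z−β)(z−γ), and P = Q'/2 (the Lamé case). If V is a complex polynomial with deg V ≤ 1 and S is a complex polynomial of degree n ≥ 1 such that Q·S'' + P·S' + V·S = 0 identically, then every root of S and every root of V is real and lies in the open interval (α, γ). -/
open Polynomial

/-- The logarithmic derivative of `(z - a)(z - b)(z - c)`. -/
theorem eval_derivative_cubic_div {a b c w : ℂ} (ha : w ≠ a) (hb : w ≠ b) (hc : w ≠ c) :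
    (derivative ((X - C a) * (X - C b) * (X - C c))).eval w =
      ((X - C a) * (X - C b) * (X - C c)).eval w * (1 / (w - a) + 1 / (w - b) + 1 / (w - c)) := by
  have ha := sub_ne_zero.2 ha
  have hb := sub_ne_zero.2 hb
  have hc := sub_ne_zero.2 hc
  simp
  field_simp

theorem X_sub_C_mul_derivative_pow_mul (w : ℂ) (k : ℕ) (A : ℂ[X]) :
    (X - C w) * derivative ((X - C w) ^ k * A) =
      (X - C w) ^ k * ((k : ℂ[X]) * A + (X - C w) * derivative A) := by
  cases k with
  | zero => simp
  | succ k =>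
    simp [derivative_pow]
    ring

/-- If a root `w` of a solution `S` is not a multiple root of `Q`, then `w` is not a root of `Q` and
is a simple root of `S`, and the equation becomes a relation on the cofactor. -/
theorem exists_cofactor_of_root {Q V S : ℂ[X]} (hS0 : S ≠ 0)
    (heq : Q * derivative (derivative S) + C (1 / 2 : ℂ) * derivative Q * derivative S + V * S = 0)
    {w : ℂ} (hw : S.IsRoot w) (hQw : Q.eval w = 0 → (derivative Q).eval w ≠ 0) :
    Q.eval w ≠ 0 ∧ ∃ T : ℂ[X], S = (X - C w) * T ∧ T.eval w ≠ 0 ∧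
      2 * Q.eval w * (derivative T).eval w + 1 / 2 * (derivative Q).eval w * T.eval w = 0 := by
  obtain ⟨T, hT, hdvd⟩ := exists_eq_pow_rootMultiplicity_mul_and_not_dvd S hS0 w
  have hpos : 0 < S.rootMultiplicity w := (rootMultiplicity_pos hS0).2 hw
  obtain ⟨k, hk⟩ : ∃ k, S.rootMultiplicity w = k + 1 := ⟨_, (Nat.succ_pred_eq_of_pos hpos).symm⟩
  rw [hk] at hT
  have hTw : T.eval w ≠ 0 := fun h => hdvd (dvd_iff_isRoot.2 h)
  have hX : (X - C w) ≠ 0 := X_sub_C_ne_zero w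
  set A : ℂ[X] := ((k + 1 : ℕ) : ℂ[X]) * T + (X - C w) * derivative T with hA
  have hS1 : derivative S = (X - C w) ^ k * A := by
    apply mul_left_cancel₀ hX
    rw [hT, X_sub_C_mul_derivative_pow_mul]
    ring
  have hS2 := X_sub_C_mul_derivative_pow_mul w k A
  rw [← hS1] at hS2
  have hred : Q * ((k : ℂ[X]) * A + (X - C w) * derivative A) +
      C (1 / 2 : ℂ) * derivative Q * (X - C w) * A + V * (X - C w) ^ 2 * T = 0 := by
    apply mul_left_cancel₀ (pow_ne_zero k hX)
    rw [hT] at heq hS1 hS2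
    rw [hS1] at heq hS2
    linear_combination (X - C w) * heq - Q * hS2
  have hAw : A.eval w = (k + 1) * T.eval w := by simp [hA]
  have hAw0 : A.eval w ≠ 0 := by
    rw [hAw]; exact mul_ne_zero (by exact_mod_cast k.succ_ne_zero) hTw
  have hQ0 : Q.eval w ≠ 0 := by
    intro h0
    obtain ⟨R, rfl⟩ := dvd_iff_isRoot.2 h0
    have hR : (derivative ((X - C w) * R)).eval w = R.eval w := by simp
    have hc : R * ((k : ℂ[X]) * A + (X - C w) * derivative A) +
        C (1 / 2 : ℂ) * derivative ((X - C w) * R) * A + V * (X - C w) * T = 0 := by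
      apply mul_left_cancel₀ hX
      linear_combination hred
    have he := congrArg (eval w) hc
    simp only [eval_add, eval_mul, hR] at he
    simp at he
    have hne : ((k : ℂ) + 1 / 2) ≠ 0 := by
      intro h
      have := congrArg Complex.re h
      simp at this
      have hk0 : (0 : ℝ) ≤ k := k.cast_nonneg
      linarith
    have : R.eval w * A.eval w * ((k : ℂ) + 1 / 2) = 0 := by linear_combination he
    have hRw := hQw h0
    rw [hR] at hRw
    exact mul_ne_zero (mul_ne_zero hRw hAw0) hne this
  have hk0 : k = 0 := by
    have he := congrArg (eval w) hred
    simpa [hQ0, hAw0] using he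
  subst hk0
  refine ⟨hQ0, T, by simpa using hT, hTw, ?_⟩
  have hc : Q * derivative A + C (1 / 2 : ℂ) * derivative Q * A + V * (X - C w) * T = 0 := by
    apply mul_left_cancel₀ hX
    linear_combination hred
  have he := congrArg (eval w) hc
  simp [hA] at he
  linear_combination he

theorem re_mul_one_div_sub (u w t : ℂ) : (u * (1 / (w - t))).re =
    ((starRingEnd ℂ u * w).re - (starRingEnd ℂ u * t).re) / Complex.normSq (w - t) := by
  simp [Complex.inv_re, Complex.inv_im]
  ring

theorem re_mul_one_div_sub_nonneg {u w t : ℂ}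
    (h : (starRingEnd ℂ u * t).re ≤ (starRingEnd ℂ u * w).re) : 0 ≤ (u * (1 / (w - t))).re := by
  rw [re_mul_one_div_sub]
  exact div_nonneg (sub_nonneg.2 h) (Complex.normSq_nonneg _)

theorem re_mul_one_div_sub_pos {u w t : ℂ}
    (h : (starRingEnd ℂ u * t).re < (starRingEnd ℂ u * w).re) : 0 < (u * (1 / (w - t))).re := by
  rw [re_mul_one_div_sub]
  refine div_pos (sub_pos.2 h) (Complex.normSq_pos.2 (sub_ne_zero.2 ?_))
  rintro rfl
  exact h.false

/-- A point on the far side of all roots of `T` in direction `u` cannot balance the logarithmic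
derivative of `T` against positive multiples of `1 / (w - a)`, `1 / (w - b)`, `1 / (w - c)`. -/
theorem log_derivative_add_ne_zero {T : ℂ[X]} {u w a b c : ℂ} {r : ℝ} (hr : 0 < r)
    (hTw : T.eval w ≠ 0)
    (hT : ∀ t ∈ T.roots, (starRingEnd ℂ u * t).re ≤ (starRingEnd ℂ u * w).re)
    (ha : (starRingEnd ℂ u * a).re ≤ (starRingEnd ℂ u * w).re)
    (hb : (starRingEnd ℂ u * b).re < (starRingEnd ℂ u * w).re)
    (hc : (starRingEnd ℂ u * c).re ≤ (starRingEnd ℂ u * w).re) :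
    (derivative T).eval w / T.eval w + r * (1 / (w - a) + 1 / (w - b) + 1 / (w - c)) ≠ 0 := by
  intro h
  rw [(IsAlgClosed.splits T).eval_derivative_div_eval_of_ne_zero hTw] at h
  have hsum : 0 ≤ (u * (T.roots.map fun t => 1 / (w - t)).sum).re := by
    rw [← Multiset.sum_map_mul_left, ← Complex.reLm_coe, map_multiset_sum,
      Multiset.map_map]
    apply Multiset.sum_nonneg
    intro x hx
    obtain ⟨t, ht, rfl⟩ := Multiset.mem_map.1 hx
    exact re_mul_one_div_sub_nonneg (hT t ht)
  have h' := congrArg (fun z => (u * z).re) h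
  have hexp : (u * ((T.roots.map fun t => 1 / (w - t)).sum +
      r * (1 / (w - a) + 1 / (w - b) + 1 / (w - c)))).re =
      (u * (T.roots.map fun t => 1 / (w - t)).sum).re +
      r * ((u * (1 / (w - a))).re + (u * (1 / (w - b))).re + (u * (1 / (w - c))).re) := by
    rw [← Complex.add_re, ← Complex.add_re, ← Complex.re_ofReal_mul, ← Complex.add_re]
    congr 1
    ring
  simp only [hexp] at h'
  simp only [mul_zero, Complex.zero_re] at h'
  have h3 := re_mul_one_div_sub_nonneg ha
  have h4 := re_mul_one_div_sub_pos hb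
  have h5 := re_mul_one_div_sub_nonneg hc
  have := mul_pos hr (by linarith : 0 < (u * (1 / (w - a))).re + (u * (1 / (w - b))).re +
    (u * (1 / (w - c))).re)
  linarith

/-- A complex number that is not on the far side of `α < β < γ` in any direction lies in
`(α, γ)`. -/
theorem mem_Ioo_of_not_extreme {α β γ : ℝ} (hαβ : α < β) (hβγ : β < γ) {w : ℂ}
    (h : ∀ u : ℂ, (starRingEnd ℂ u * α).re ≤ (starRingEnd ℂ u * w).re →
      (starRingEnd ℂ u * β).re < (starRingEnd ℂ u * w).re →
      (starRingEnd ℂ u * γ).re ≤ (starRingEnd ℂ u * w).re → False) :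
    w.im = 0 ∧ α < w.re ∧ w.re < γ := by
  have h1 := h 1
  have h2 := h (-1)
  have h3 := h Complex.I
  have h4 := h (-Complex.I)
  simp at h1 h2 h3 h4
  refine ⟨?_, ?_, ?_⟩
  · apply le_antisymm
    · by_contra! hlt
      linarith [h3 hlt.le hlt]
    · by_contra! hlt
      linarith [h4 hlt.le hlt]
  · by_contra! hle
    linarith [h2 hle (by linarith)]
  · by_contra! hle
    linarith [h1 (by linarith) (by linarith)]

theorem convex_real_Ioo (α γ : ℝ) : Convex ℝ {z : ℂ | z.im = 0 ∧ α < z.re ∧ z.re < γ} := by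
  have h : {z : ℂ | z.im = 0 ∧ α < z.re ∧ z.re < γ} =
      Complex.imLm ⁻¹' {0} ∩ Complex.reLm ⁻¹' Set.Ioo α γ := by
    ext z; simp
  rw [h]
  exact ((convex_singleton _).linear_preimage _).inter ((convex_Ioo _ _).linear_preimage _)

/-- Stieltjes's theorem (Lamé case): for `Q(z) = (z-α)(z-β)(z-γ)` with real `α < β < γ`
and `P = Q'/2`, every root of every Van Vleck polynomial `V` (deg ≤ 1) and every root of
every Stieltjes polynomial `S` of degree `n ≥ 1` solving `Q S'' + P S' + V S = 0` is real
and lies in the open interval `(α, γ)`. -/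
theorem stmt16 (α β γ : ℝ) (hαβ : α < β) (hβγ : β < γ)
    (Q : Polynomial ℂ)
    (hQ : Q = (X - C (α : ℂ)) * (X - C (β : ℂ)) * (X - C (γ : ℂ)))
    (P : Polynomial ℂ) (hP : P = C (1 / 2 : ℂ) * derivative Q)
    (V S : Polynomial ℂ) (hV : V.degree ≤ 1)
    (n : ℕ) (hn : 1 ≤ n) (hS : S.natDegree = n)
    (heq : Q * (derivative (derivative S)) + P * (derivative S) + V * S = 0) :
    (∀ z ∈ S.roots, z.im = 0 ∧ α < z.re ∧ z.re < γ) ∧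
    (∀ z ∈ V.roots, z.im = 0 ∧ α < z.re ∧ z.re < γ) := by
  subst hP
  have hS0 : S ≠ 0 := by rintro rfl; simp at hS; omega
  have hroot : ∀ w, Q.eval w = 0 ↔ w = α ∨ w = β ∨ w = γ := by
    intro w
    simp [hQ, sub_eq_zero, or_assoc]
  have hsimple : ∀ w, Q.eval w = 0 → (derivative Q).eval w ≠ 0 := by
    have h1 : (α : ℂ) - β ≠ 0 := sub_ne_zero.2 (by exact_mod_cast hαβ.ne)
    have h2 : (β : ℂ) - γ ≠ 0 := sub_ne_zero.2 (by exact_mod_cast hβγ.ne)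
    have h3 : (α : ℂ) - γ ≠ 0 := sub_ne_zero.2 (by exact_mod_cast (hαβ.trans hβγ).ne)
    have h1' := neg_ne_zero.2 h1
    have h2' := neg_ne_zero.2 h2
    have h3' := neg_ne_zero.2 h3
    rw [neg_sub] at h1' h2' h3'
    intro w hw
    rcases (hroot w).1 hw with rfl | rfl | rfl <;> simp [*]
  have hlog : ∀ w, Q.eval w ≠ 0 → (derivative Q).eval w =
      Q.eval w * (1 / (w - α) + 1 / (w - β) + 1 / (w - γ)) := by
    intro w hw
    rw [Ne, hroot] at hw
    push Not at hw
    rw [hQ]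
    exact eval_derivative_cubic_div hw.1 hw.2.1 hw.2.2
  have hSroots : ∀ z ∈ S.roots, z.im = 0 ∧ α < z.re ∧ z.re < γ := by
    intro z hz
    apply mem_Ioo_of_not_extreme hαβ hβγ
    intro u ha hb hc
    obtain ⟨w, hw, hmax⟩ := S.roots.toFinset.exists_max_image
      (fun t => (starRingEnd ℂ u * t).re) ⟨z, by simpa using hz⟩
    have hzw := hmax z (Multiset.mem_toFinset.2 hz)
    have hwS : S.IsRoot w := (mem_roots hS0).1 (Multiset.mem_toFinset.1 hw)
    obtain ⟨hQw, T, hT, hTw, hrel⟩ := exists_cofactor_of_root hS0 heq hwS (hsimple w)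
    refine log_derivative_add_ne_zero (r := 1 / 4) (by norm_num) hTw (fun t ht => ?_)
      (ha.trans hzw) (hb.trans_le hzw) (hc.trans hzw) ?_
    · apply hmax
      rw [Multiset.mem_toFinset, hT]
      exact Multiset.mem_of_le (roots.le_of_dvd (hT ▸ hS0) (dvd_mul_left T _)) ht
    · rw [hlog w hQw] at hrel
      rw [div_add' _ _ _ hTw, div_eq_zero_iff]
      left
      apply mul_left_cancel₀ hQw
      push_cast
      linear_combination (1 / 2 : ℂ) * hrel
  refine ⟨hSroots, fun v hv => ?_⟩
  have hS'0 : derivative S ≠ 0 := by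
    intro h
    have := derivative_eq_zero.1 h
    omega
  have hS'roots : ∀ z, (derivative S).eval z = 0 → z.im = 0 ∧ α < z.re ∧ z.re < γ := by
    intro z hz
    have hsub : S.rootSet ℂ ⊆ {z : ℂ | z.im = 0 ∧ α < z.re ∧ z.re < γ} := fun t ht =>
      hSroots t ((mem_roots hS0).2 (by simpa using (mem_rootSet.1 ht).2))
    exact convexHull_min hsub (convex_real_Ioo α γ)
      (rootSet_derivative_subset_convexHull_rootSet (natDegree_pos_iff_degree_pos.1 (by omega))
        (mem_rootSet.2 ⟨hS'0, by simpa using hz⟩))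
  have hv0 : V.eval v = 0 := isRoot_of_mem_roots hv
  have hrel : Q.eval v * (derivative (derivative S)).eval v +
      1 / 2 * (derivative Q).eval v * (derivative S).eval v = 0 := by
    have he := congrArg (eval v) heq
    simpa [hv0] using he
  by_cases hS'v : (derivative S).eval v = 0
  · exact hS'roots v hS'v
  have hQv : Q.eval v ≠ 0 := by
    intro h
    rw [h] at hrel
    have := hsimple v h
    simp_all
  apply mem_Ioo_of_not_extreme hαβ hβγ
  intro u ha hb hc
  refine log_derivative_add_ne_zero (r := 1 / 2) (by norm_num) hS'v (fun t ht => ?_) ha hb hc ?_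
  · have ht' := hS'roots t (isRoot_of_mem_roots ht)
    obtain ⟨him, h1, h2⟩ := ht'
    simp [him] at ha hc ⊢
    rcases le_total 0 u.re with h | h <;> nlinarith
  · rw [hlog v hQv] at hrel
    rw [div_add' _ _ _ hS'v, div_eq_zero_iff]
    left
    apply mul_left_cancel₀ hQv
    push_cast
    linear_combination hrel
end
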